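/- For every d ∈ ℕ there exist δ > 0 and c > 0 such that the following holds: for every n ∈ ℕ and every multilinear homogeneous polynomial of degree d, P(x) = Σ_{S ⊆ {1,…,n}, |S| = d} a_S ∏_{i∈S} x_i, if the Lévy–Prokhorov distance between the law of P(G_1, …, G_n) (where G_1, …, G_n are independent standard Gaussians) and N(0,1) is at most δ, then for every ε > 0 one has P( |P(G_1, …, G_n)| ≤ ε ) ≤ c · ε. -/

import Mathlib

open MeasureTheory ProbabilityTheory MvPolynomial Filter Topology
open scoped ENNReal NNReal

noncomputable def gaussPi (ι : Type) [Fintype ι] : Measure (ι → ℝ) :=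
  Measure.pi fun _ => gaussianReal 0 1

noncomputable def hermiteProd {K : ℕ} (k : Fin K → ℕ) : MvPolynomial (Fin K) ℝ :=
  ∏ i, Polynomial.aeval (MvPolynomial.X i) (Polynomial.hermite (k i))

noncomputable def chaos (K m : ℕ) : Submodule ℝ (MvPolynomial (Fin K) ℝ) :=
  Submodule.span ℝ {P | ∃ k : Fin K → ℕ, ∑ i, k i = m ∧ P = hermiteProd k}

noncomputable def sqField {ι : Type} [Fintype ι] (P : MvPolynomial ι ℝ) (x : ι → ℝ) : ℝ :=
  ∑ i, (eval x (pderiv i P)) ^ 2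

def TendstoInLaw {E : Type} [MeasurableSpace E] [TopologicalSpace E]
    (μs : ℕ → Measure E) (μ : Measure E) : Prop :=
  ∀ f : BoundedContinuousFunction E ℝ,
    Tendsto (fun n => ∫ x, f x ∂μs n) atTop (𝓝 (∫ x, f x ∂μ))

/-! If the law of `P` is close to `N(0,1)` then, by hypercontractivity, `E P ^ 2` is bounded below
and `E P ^ (2 m) ≤ 24 ^ m E G ^ (2 m)` for one large `m`. Taking differences in the manner of van
der Corput, with independent copies of the Gaussian vector, bounds a power of the characteristic
function of `P` at `t` by `E exp (-s ^ 2 ‖W‖ ^ 2 / 2)`, where `s` is a multiple of `t` and `W` is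
the gradient of the polar form of `P` in one of its arguments. The moment of the Gaussian
direction factors out, so that `E ‖W‖ ^ (2 m) ≤ L ^ m` with `L` much smaller than
`(E G ^ (2 m)) ^ (1 / m)`: `W` cannot be carried by few directions. Given all but one argument, `W`
is a linear image of a Gaussian vector, whose Laplace transform is a determinant, and a comparison
of determinants restricts that argument to the span of `2 A` Gaussian vectors. For most spans the
moment bounds survive in every direction, and induction on the degree gives the decay `t ^ (-A)`
for any prescribed `A`. Integrating the characteristic function then yields the linear small-ball
bound. -/

instance isProbabilityMeasure_gaussPi (ι : Type) [Fintype ι] :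
    IsProbabilityMeasure (gaussPi ι) := by
  unfold gaussPi
  infer_instance

/-- The law of a family, indexed by `κ`, of independent standard Gaussian vectors in `ι → ℝ`. -/
noncomputable def gaussTuple (κ ι : Type) [Fintype κ] [Fintype ι] : Measure (κ → ι → ℝ) :=
  Measure.pi fun _ => gaussPi ι

instance isProbabilityMeasure_gaussTuple (κ ι : Type) [Fintype κ] [Fintype ι] :
    IsProbabilityMeasure (gaussTuple κ ι) := by
  unfold gaussTuple
  infer_instance

section CharacteristicFunction

variable {κ ι : Type} [Fintype κ] [Fintype ι]

lemma charFunDual_gaussPi [DecidableEq ι] (L : StrongDual ℝ (ι → ℝ)) :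
    charFunDual (gaussPi ι) L = Complex.exp (-(∑ a, L (Pi.single a 1) ^ 2 : ℝ) / 2) := by
  have h : ∀ M : StrongDual ℝ ℝ,
      charFunDual (gaussianReal 0 1) M = Complex.exp (-(M 1 ^ 2 : ℝ) / 2) := by
    intro M
    have hM : ⇑M = fun x => M 1 * x := by
      ext x
      simpa [mul_comm] using M.map_smul x 1
    rw [charFunDual_eq_charFun_map_one, hM, gaussianReal_map_const_mul, charFun_gaussianReal]
    simp [neg_div]
  simp_rw [gaussPi, charFunDual_pi, h, ← Complex.exp_sum]
  congr 1
  simp [Finset.sum_div, neg_div]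

lemma charFunDual_gaussTuple [DecidableEq κ] [DecidableEq ι] (L : StrongDual ℝ (κ → ι → ℝ)) :
    charFunDual (gaussTuple κ ι) L =
      Complex.exp (-(∑ i, ∑ a, L (Pi.single i (Pi.single a 1)) ^ 2 : ℝ) / 2) := by
  simp_rw [gaussTuple, charFunDual_pi, charFunDual_gaussPi, ← Complex.exp_sum]
  congr 1
  simp [Finset.sum_div, neg_div]

end CharacteristicFunction

section Rotation

variable {κ ι : Type} [Fintype κ] [Fintype ι]

lemma measurePreserving_mulVec_gaussPi [DecidableEq ι] {O : Matrix ι ι ℝ}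
    (hO : O * O.transpose = 1) :
    MeasurePreserving (fun x => O.mulVec x) (gaussPi ι) (gaussPi ι) := by
  let A : (ι → ℝ) →L[ℝ] (ι → ℝ) := O.mulVecLin.toContinuousLinearMap
  have hA : Measurable A := A.continuous.measurable
  refine ⟨hA, Measure.ext_of_charFunDual (funext fun L => ?_)⟩
  change charFunDual ((gaussPi ι).map A) L = _
  rw [charFunDual_map, charFunDual_gaussPi, charFunDual_gaussPi]
  have hL : ∀ v, L v = (fun b => L (Pi.single b 1)) ⬝ᵥ v := fun v => by
    conv_lhs => rw [pi_eq_sum_univ' v, map_sum]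
    simp [dotProduct, mul_comm]
  set l : ι → ℝ := fun b => L (Pi.single b 1)
  have hLA : ∀ a, L.comp A (Pi.single a 1) = (O.transpose.mulVec l) a := fun a => by
    change L (O.mulVec (Pi.single a 1)) = _
    rw [hL, Matrix.dotProduct_mulVec, Matrix.mulVec_transpose, dotProduct_single_one]
  have hnorm : O.transpose.mulVec l ⬝ᵥ O.transpose.mulVec l = l ⬝ᵥ l := by
    rw [Matrix.dotProduct_mulVec, ← Matrix.mulVec_transpose, Matrix.mulVec_mulVec,
      Matrix.transpose_transpose, hO, Matrix.one_mulVec]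
  simp_rw [hLA, sq]
  exact congrArg (fun r : ℝ => Complex.exp (-r / 2)) hnorm

lemma measurePreserving_sum_smul_gaussTuple {u : κ → ℝ} (hu : ∑ i, u i ^ 2 = 1) :
    MeasurePreserving (fun Y : κ → ι → ℝ => ∑ i, u i • Y i) (gaussTuple κ ι) (gaussPi ι) := by
  classical
  let A : (κ → ι → ℝ) →L[ℝ] (ι → ℝ) := ∑ i, u i • ContinuousLinearMap.proj i
  have hA : ⇑A = fun Y => ∑ i, u i • Y i := by
    ext Y a
    simp [A]
  rw [← hA]
  refine ⟨A.continuous.measurable, Measure.ext_of_charFunDual (funext fun L => ?_)⟩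
  have hLA : ∀ i a, L.comp A (Pi.single i (Pi.single a 1)) = u i * L (Pi.single a 1) := by
    intro i a
    rw [← smul_eq_mul, ← map_smul]
    simp [hA, Pi.single_apply, ← Pi.single_smul']
  simp_rw [charFunDual_map, charFunDual_gaussTuple, charFunDual_gaussPi, hLA, mul_pow,
    ← Finset.mul_sum, ← Finset.sum_mul, hu, one_mul]

lemma measurePreserving_smul_sub_gaussPi :
    MeasurePreserving (fun p : (ι → ℝ) × (ι → ℝ) => (√2)⁻¹ • (p.1 - p.2))
      ((gaussPi ι).prod (gaussPi ι)) (gaussPi ι) := by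
  classical
  let A : (ι → ℝ) × (ι → ℝ) →L[ℝ] (ι → ℝ) :=
    (√2)⁻¹ • (ContinuousLinearMap.fst ℝ _ _ - ContinuousLinearMap.snd ℝ _ _)
  refine ⟨A.continuous.measurable, Measure.ext_of_charFunDual (funext fun L => ?_)⟩
  change charFunDual (((gaussPi ι).prod (gaussPi ι)).map A) L = _
  have hsq : ∀ r : ℝ, ((√2)⁻¹ * r) ^ 2 = 2⁻¹ * r ^ 2 := fun r => by
    rw [mul_pow, inv_pow, Real.sq_sqrt zero_le_two]
  simp_rw [charFunDual_map, charFunDual_prod, charFunDual_gaussPi, ← Complex.exp_add]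
  congr 1
  simp only [A, ContinuousLinearMap.comp_apply, ContinuousLinearMap.inl_apply,
    ContinuousLinearMap.inr_apply, smul_apply, sub_apply, ContinuousLinearMap.coe_fst',
    ContinuousLinearMap.coe_snd', sub_zero, zero_sub, map_smul, map_neg, smul_eq_mul, mul_neg,
    neg_sq, hsq, ← Finset.mul_sum]
  push_cast
  ring

lemma measurePreserving_flip_gaussTuple :
    MeasurePreserving (fun (Y : κ → ι → ℝ) a i => Y i a) (gaussTuple κ ι) (gaussTuple ι κ) := by
  classical
  let A : (κ → ι → ℝ) →L[ℝ] (ι → κ → ℝ) :=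
    .pi fun a => .pi fun i =>
      (ContinuousLinearMap.proj (φ := fun _ : ι => ℝ) a).comp (ContinuousLinearMap.proj i)
  refine ⟨A.continuous.measurable, Measure.ext_of_charFunDual (funext fun L => ?_)⟩
  change charFunDual ((gaussTuple κ ι).map A) L = _
  have hA : ∀ i a, A (Pi.single i (Pi.single a 1)) = Pi.single a (Pi.single i 1) := by
    intro i a
    ext b j
    by_cases hb : b = a <;> by_cases hj : j = i <;> simp [A, hb, hj]
  simp_rw [charFunDual_map, charFunDual_gaussTuple, ContinuousLinearMap.comp_apply, hA]
  rw [Finset.sum_comm]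

lemma map_gaussPi_eq_gaussianReal [DecidableEq ι] (L : (ι → ℝ) →ₗ[ℝ] ℝ) :
    (gaussPi ι).map L = (gaussianReal 0 1).map (√(∑ a, L (Pi.single a 1) ^ 2) * ·) := by
  let A : StrongDual ℝ (ι → ℝ) := L.toContinuousLinearMap
  change (gaussPi ι).map A = _
  have : IsProbabilityMeasure ((gaussPi ι).map A) :=
    Measure.isProbabilityMeasure_map A.continuous.aemeasurable
  rw [gaussianReal_map_const_mul]
  refine Measure.ext_of_charFun (funext fun t => ?_)
  rw [charFun_map_eq_charFunDual_smul, charFunDual_gaussPi, charFun_gaussianReal]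
  congr 1
  have hsq : √(∑ a, L (Pi.single a 1) ^ 2) ^ 2 = ∑ a, L (Pi.single a 1) ^ 2 :=
    Real.sq_sqrt (Finset.sum_nonneg fun a _ => sq_nonneg _)
  simp only [A, hsq, smul_apply, smul_eq_mul, mul_pow, LinearMap.coe_toContinuousLinearMap',
    ← Finset.mul_sum, NNReal.coe_mk, mul_one, mul_zero]
  push_cast
  ring

end Rotation

lemma lintegral_pi_prod_eq_prod {κ E : Type*} [Fintype κ] [MeasurableSpace E] (μ : Measure E)
    [IsProbabilityMeasure μ] {f : κ → E → ℝ≥0∞} (hf : ∀ i, Measurable (f i)) :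
    ∫⁻ x : κ → E, ∏ i, f i (x i) ∂(Measure.pi fun _ => μ) = ∏ i, ∫⁻ x, f i x ∂μ := by
  rw [lintegral_prod_eq_prod_lintegral_of_indepFun Finset.univ (fun i (x : κ → E) => f i (x i))
    (iIndepFun_pi fun i => (hf i).aemeasurable) (fun i => (hf i).comp (measurable_pi_apply i))]
  exact Finset.prod_congr rfl fun i _ =>
    (measurePreserving_eval (fun _ : κ => μ) i).lintegral_comp (hf i)

lemma linearMap_eq_sum_smul_single {ι E : Type*} [Fintype ι] [DecidableEq ι] [AddCommGroup E]
    [Module ℝ E] (B : (ι → ℝ) →ₗ[ℝ] E) (x : ι → ℝ) : B x = ∑ a, x a • B (Pi.single a 1) := by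
  conv_lhs => rw [pi_eq_sum_univ' x, map_sum]
  simp

lemma exists_orthogonal_diagonal_of_posSemidef {ι : Type*} [Fintype ι] [DecidableEq ι]
    {Q : Matrix ι ι ℝ} (hQ : Q.PosSemidef) :
    ∃ (O : Matrix ι ι ℝ) (lam : ι → ℝ), O * O.transpose = 1 ∧ O.transpose * O = 1 ∧
      (∀ a, 0 ≤ lam a) ∧ O.transpose * Q * O = Matrix.diagonal lam := by
  let U : Matrix ι ι ℝ := hQ.1.eigenvectorUnitary
  have hstar : star U = U.transpose := by
    rw [Matrix.star_eq_conjTranspose, Matrix.conjTranspose_eq_transpose_of_trivial]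
  have hU : U * U.transpose = 1 := hstar ▸ Unitary.coe_mul_star_self hQ.1.eigenvectorUnitary
  refine ⟨U, hQ.1.eigenvalues, hU, mul_eq_one_comm.mp hU, hQ.eigenvalues_nonneg, ?_⟩
  have hdiag := hQ.1.conjStarAlgAut_star_eigenvectorUnitary
  rw [Unitary.conjStarAlgAut_apply] at hdiag
  simpa [← hstar, U] using hdiag

/-- The Laplace weight `exp (-r / 2)`, valued in `ℝ≥0∞` so that it can be integrated without
integrability side conditions. -/
noncomputable def expNegHalf (r : ℝ) : ℝ≥0∞ := ENNReal.ofReal (Real.exp (-(r / 2)))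

lemma continuous_expNegHalf : Continuous expNegHalf :=
  ENNReal.continuous_ofReal.comp (by fun_prop)

@[fun_prop]
lemma measurable_expNegHalf : Measurable expNegHalf := continuous_expNegHalf.measurable

lemma expNegHalf_sum {ι : Type*} (s : Finset ι) (f : ι → ℝ) :
    expNegHalf (∑ a ∈ s, f a) = ∏ a ∈ s, expNegHalf (f a) := by
  simp_rw [expNegHalf, ← ENNReal.ofReal_prod_of_nonneg fun _ _ => (Real.exp_pos _).le,
    ← Real.exp_sum, Finset.sum_neg_distrib, Finset.sum_div]

section GaussianLaplace

lemma gaussianReal_le_volume : gaussianReal 0 1 ≤ (volume : Measure ℝ) := by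
  rw [gaussianReal_of_var_ne_zero _ one_ne_zero]
  conv_rhs => rw [← withDensity_one (μ := (volume : Measure ℝ))]
  refine withDensity_mono (ae_of_all _ fun x => ENNReal.ofReal_le_one.2 ?_)
  simp only [gaussianPDFReal_def, NNReal.coe_one, mul_one, sub_zero]
  have hexp : Real.exp (-x ^ 2 / 2) ≤ 1 := Real.exp_le_one_iff.2 (by nlinarith [sq_nonneg x])
  have hsqrt : (√(2 * Real.pi))⁻¹ ≤ 1 :=
    inv_le_one_of_one_le₀ (Real.one_le_sqrt.2 (by nlinarith [Real.pi_gt_three]))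
  exact mul_le_one₀ hsqrt (Real.exp_pos _).le hexp

lemma lintegral_expNegHalf_gaussianReal {s : ℝ} (hs : 0 ≤ s) :
    ∫⁻ x, expNegHalf (s * x ^ 2) ∂(gaussianReal 0 1) = ENNReal.ofReal (√(1 + s))⁻¹ := by
  have hdensity : ∀ x : ℝ, gaussianPDFReal 0 1 x • Real.exp (-((s * x ^ 2) / 2))
      = (√(2 * Real.pi))⁻¹ * Real.exp (-((1 + s) / 2) * x ^ 2) := by
    intro x
    simp only [gaussianPDFReal_def, smul_eq_mul, NNReal.coe_one, mul_one, sub_zero]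
    rw [mul_assoc, ← Real.exp_add]
    ring_nf
  have hint : ∫ x, Real.exp (-((s * x ^ 2) / 2)) ∂(gaussianReal 0 1) = (√(1 + s))⁻¹ := by
    simp_rw [integral_gaussianReal_eq_integral_smul one_ne_zero, hdensity]
    rw [integral_const_mul, integral_gaussian, ← Real.sqrt_inv, ← Real.sqrt_inv,
      ← Real.sqrt_mul (by positivity)]
    have : 1 + s ≠ 0 := by positivity
    congr 1
    field_simp
  unfold expNegHalf
  rw [← ofReal_integral_eq_lintegral_ofReal, hint]
  · refine Integrable.of_bound (C := 1) (Continuous.aestronglyMeasurable (by fun_prop))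
      (ae_of_all _ fun x => ?_)
    rw [Real.norm_of_nonneg (Real.exp_pos _).le, Real.exp_le_one_iff]
    nlinarith [mul_nonneg hs (sq_nonneg x)]
  · exact ae_of_all _ fun x => (Real.exp_pos _).le

lemma lintegral_expNegHalf_gaussPi {ι : Type} [Fintype ι] {s : ι → ℝ} (hs : ∀ a, 0 ≤ s a) :
    ∫⁻ x, expNegHalf (∑ a, s a * x a ^ 2) ∂(gaussPi ι)
      = ENNReal.ofReal (√(∏ a, (1 + s a)))⁻¹ := by
  simp_rw [expNegHalf_sum, gaussPi]
  rw [lintegral_pi_prod_eq_prod _ (f := fun a (y : ℝ) => expNegHalf (s a * y ^ 2))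
      (fun a => by fun_prop),
    Finset.prod_congr rfl fun a _ => lintegral_expNegHalf_gaussianReal (hs a),
    ← ENNReal.ofReal_prod_of_nonneg (fun a _ => by positivity), Finset.prod_inv_distrib,
    Real.sqrt_prod _ (fun a _ => by linarith [hs a])]

end GaussianLaplace

section GaussianMoments

/-- The moment `E |G| ^ (2 * m)` of a standard Gaussian variable `G`. -/
noncomputable def gaussMoment (m : ℕ) : ℝ≥0∞ := ∫⁻ x : ℝ, ‖x‖ₑ ^ (2 * m) ∂(gaussianReal 0 1)

lemma gaussMoment_lt_top (m : ℕ) : gaussMoment m < ∞ := by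
  rcases eq_or_ne m 0 with rfl | hm
  · simp [gaussMoment]
  have h := (memLp_id_gaussianReal' (μ := 0) (v := 1) ((2 * m : ℕ) : ℝ≥0∞)
    (ENNReal.natCast_ne_top _)).2
  rw [eLpNorm_lt_top_iff_lintegral_rpow_enorm_lt_top (by simp [hm]) (ENNReal.natCast_ne_top _)] at h
  simpa only [gaussMoment, ENNReal.toReal_natCast, ENNReal.rpow_natCast, id] using h

lemma pow_mul_gaussianReal_Ici_le_gaussMoment (R : ℝ≥0) (m : ℕ) :
    (R : ℝ≥0∞) ^ (2 * m) * gaussianReal 0 1 (Set.Ici (R : ℝ)) ≤ gaussMoment m := by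
  calc (R : ℝ≥0∞) ^ (2 * m) * gaussianReal 0 1 (Set.Ici (R : ℝ))
      = ∫⁻ _ in Set.Ici (R : ℝ), (R : ℝ≥0∞) ^ (2 * m) ∂(gaussianReal 0 1) := by simp
    _ ≤ ∫⁻ x in Set.Ici (R : ℝ), ‖x‖ₑ ^ (2 * m) ∂(gaussianReal 0 1) := by
      refine setLIntegral_mono' measurableSet_Ici fun x (hx : (R : ℝ) ≤ x) => ?_
      gcongr
      rw [Real.enorm_eq_ofReal (R.coe_nonneg.trans hx), ← ENNReal.ofReal_coe_nnreal]
      exact ENNReal.ofReal_le_ofReal hx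
    _ ≤ gaussMoment m := setLIntegral_le_lintegral _ _

lemma eventually_pow_le_gaussMoment (K : ℝ≥0) :
    ∀ᶠ m in atTop, (K : ℝ≥0∞) ^ m ≤ gaussMoment m := by
  have htail : gaussianReal 0 1 (Set.Ici ((K + 1 : ℝ≥0) : ℝ)) ≠ 0 := fun h => by
    simpa using gaussianReal_absolutelyContinuous' 0 one_ne_zero h
  obtain ⟨p, hp⟩ : ∃ p : ℝ≥0, (p : ℝ≥0∞) = gaussianReal 0 1 (Set.Ici ((K + 1 : ℝ≥0) : ℝ)) :=
    ⟨_, ENNReal.coe_toNNReal (measure_ne_top _ _)⟩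
  rw [← hp, ENNReal.coe_ne_zero, ← pos_iff_ne_zero] at htail
  have hratio : K / (K + 1) ^ 2 < 1 := by
    rw [div_lt_one (by positivity)]
    have : (K : ℝ) < (K + 1) ^ 2 := by nlinarith [K.coe_nonneg]
    exact_mod_cast this
  filter_upwards [(NNReal.tendsto_pow_atTop_nhds_zero_of_lt_one hratio).eventually_le_const htail]
    with m hm
  refine le_trans ?_ (pow_mul_gaussianReal_Ici_le_gaussMoment (K + 1) m)
  rw [div_pow, div_le_iff₀ (by positivity), ← pow_mul, mul_comm] at hm
  rw [← hp]
  exact_mod_cast hm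

lemma lintegral_enorm_pow_linearMap_gaussPi {ι : Type} [Fintype ι] [DecidableEq ι]
    (L : (ι → ℝ) →ₗ[ℝ] ℝ) (m : ℕ) :
    ∫⁻ x, ‖L x‖ₑ ^ (2 * m) ∂(gaussPi ι)
      = ENNReal.ofReal (∑ a, L (Pi.single a 1) ^ 2) ^ m * gaussMoment m := by
  have hL : Measurable L := L.continuous_of_finiteDimensional.measurable
  rw [← lintegral_map (f := fun y : ℝ => ‖y‖ₑ ^ (2 * m)) (by fun_prop) hL,
    map_gaussPi_eq_gaussianReal, lintegral_map (by fun_prop) (by fun_prop)]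
  simp_rw [enorm_mul, mul_pow]
  rw [lintegral_const_mul _ (by fun_prop), pow_mul, Real.enorm_eq_ofReal (Real.sqrt_nonneg _),
    ← ENNReal.ofReal_pow (Real.sqrt_nonneg _),
    Real.sq_sqrt (Finset.sum_nonneg fun a _ => sq_nonneg _), gaussMoment]

lemma memLp_sq_gaussianReal : MemLp (fun x : ℝ => x ^ 2) 2 (gaussianReal 0 1) := by
  have h := (memLp_id_gaussianReal' (μ := 0) (v := 1) 4 (by simp)).norm_rpow_div (2 : ℝ≥0∞)
  have hdiv : (4 : ℝ≥0∞) / 2 = 2 := by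
    rw [show (4 : ℝ≥0∞) = 2 * 2 by norm_num, ENNReal.mul_div_cancel_right (by simp) (by simp)]
  simpa [hdiv] using h

lemma integral_sq_gaussianReal : ∫ x : ℝ, x ^ 2 ∂(gaussianReal 0 1) = 1 := by
  have h := variance_id_gaussianReal (μ := 0) (v := 1)
  rw [variance_eq_sub (memLp_id_gaussianReal' 2 (by simp))] at h
  simpa using h

/-- The variance of `G ^ 2` for a standard Gaussian variable `G`. -/
noncomputable def gaussSqVariance : ℝ := variance (fun x : ℝ => x ^ 2) (gaussianReal 0 1)

lemma gaussSqVariance_nonneg : 0 ≤ gaussSqVariance := variance_nonneg _ _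

lemma memLp_mul_sq_gaussPi {ι : Type} [Fintype ι] (c : ℝ) (a : ι) :
    MemLp (fun x : ι → ℝ => c * x a ^ 2) 2 (gaussPi ι) :=
  (memLp_sq_gaussianReal.const_mul c).comp_measurePreserving
    (measurePreserving_eval (fun _ : ι => gaussianReal 0 1) a)

lemma integral_sum_mul_sq_gaussPi {ι : Type} [Fintype ι] (lam : ι → ℝ) :
    ∫ x, ∑ a, lam a * x a ^ 2 ∂(gaussPi ι) = ∑ a, lam a := by
  rw [integral_finsetSum _ fun a _ => (memLp_mul_sq_gaussPi _ a).integrable one_le_two, gaussPi]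
  refine Finset.sum_congr rfl fun a _ => ?_
  rw [integral_comp_eval (μ := fun _ : ι => gaussianReal 0 1) (i := a)
    (f := fun x : ℝ => lam a * x ^ 2) (Continuous.aestronglyMeasurable (by fun_prop)),
    integral_const_mul, integral_sq_gaussianReal, mul_one]

lemma gaussPi_abs_sum_mul_sq_sub_ge_le {ι : Type} [Fintype ι] (lam : ι → ℝ) {θ : ℝ} (hθ : 0 < θ) :
    gaussPi ι {x | θ ≤ |∑ a, lam a * x a ^ 2 - ∑ a, lam a|}
      ≤ ENNReal.ofReal (gaussSqVariance * (∑ a, lam a ^ 2) / θ ^ 2) := by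
  have hvar : variance (fun x : ι → ℝ => ∑ a, lam a * x a ^ 2) (gaussPi ι)
      = gaussSqVariance * ∑ a, lam a ^ 2 := by
    rw [← Finset.sum_fn, gaussPi, variance_sum_pi (μ := fun _ : ι => gaussianReal 0 1)
      (fun a => memLp_sq_gaussianReal.const_mul (lam a)), Finset.mul_sum]
    exact Finset.sum_congr rfl fun a _ => by rw [variance_const_mul, mul_comm, gaussSqVariance]
  have h := meas_ge_le_variance_div_sq
    (memLp_finsetSum Finset.univ fun a _ => memLp_mul_sq_gaussPi (lam a) a) hθ
  rwa [integral_sum_mul_sq_gaussPi, hvar] at h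

lemma integrableOn_Ioo_abs_rpow_neg_half :
    IntegrableOn (fun x : ℝ => |x| ^ (-(1 / 2 : ℝ))) (Set.Ioo (-1) 1) := by
  have hpos : IntegrableOn (fun x : ℝ => |x| ^ (-(1 / 2 : ℝ))) (Set.Ioo 0 1) :=
    ((intervalIntegral.integrableOn_Ioo_rpow_iff (s := -(1 / 2 : ℝ)) one_pos).2
      (by norm_num)).congr_fun (fun x hx => by simp only [abs_of_pos hx.1]) measurableSet_Ioo
  have hneg : IntegrableOn (fun x : ℝ => |x| ^ (-(1 / 2 : ℝ))) (Set.Ioo (-1) 0) := by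
    simpa using hpos.comp_neg
  refine ((hneg.union (integrableOn_singleton (x := 0) (hx := by simp))).union hpos).mono_set ?_
  rintro x ⟨hx, hx'⟩
  rcases lt_trichotomy x 0 with h | h | h
  exacts [.inl (.inl ⟨hx, h⟩), .inl (.inr h), .inr ⟨h, hx'⟩]

lemma lintegral_abs_rpow_neg_half_gaussianReal_lt_top :
    ∫⁻ x : ℝ, ENNReal.ofReal (|x| ^ (-(1 / 2 : ℝ))) ∂(gaussianReal 0 1) < ∞ := by
  have hle : ∀ x : ℝ, ENNReal.ofReal (|x| ^ (-(1 / 2 : ℝ))) ≤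
      (Set.Ioo (-1 : ℝ) 1).indicator (fun x => ENNReal.ofReal (|x| ^ (-(1 / 2 : ℝ)))) x + 1 := by
    intro x
    by_cases hx : x ∈ Set.Ioo (-1 : ℝ) 1
    · rw [Set.indicator_of_mem hx]
      exact le_self_add
    · rw [Set.indicator_of_notMem hx, zero_add]
      exact ENNReal.ofReal_le_one.2 (Real.rpow_le_one_of_one_le_of_nonpos
        (not_lt.1 fun h => hx (abs_lt.1 h)) (by norm_num))
  have hfin := integrableOn_Ioo_abs_rpow_neg_half.2
  rw [hasFiniteIntegral_iff_ofReal (ae_of_all _ fun x => by positivity)] at hfin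
  refine (lintegral_mono hle).trans_lt ?_
  rw [lintegral_add_right _ measurable_const, lintegral_indicator measurableSet_Ioo]
  refine ENNReal.add_lt_top.2 ⟨lt_of_le_of_lt ?_ hfin, by simp⟩
  exact lintegral_mono' (Measure.restrict_mono subset_rfl gaussianReal_le_volume) le_rfl

end GaussianMoments

section Determinant

variable {κ : Type} [Fintype κ]

lemma det_one_add_add_vecMulVec_le [DecidableEq κ] {K : Matrix κ κ ℝ} (hK : K.PosSemidef)
    (y : κ → ℝ) :
    (1 + K + Matrix.vecMulVec y y).det ≤ (1 + K).det * (1 + y ⬝ᵥ y) := by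
  have hpos : (1 + K).PosDef := Matrix.PosDef.one.add_posSemidef hK
  obtain ⟨z, hz⟩ : ∃ z, (1 + K).mulVec z = y :=
    ⟨(1 + K)⁻¹.mulVec y, by
      rw [Matrix.mulVec_mulVec, Matrix.mul_nonsing_inv _ hpos.det_pos.ne'.isUnit,
        Matrix.one_mulVec]⟩
  have hfactor : 1 + K + Matrix.vecMulVec y y = (1 + K) * (1 + Matrix.vecMulVec z y) := by
    rw [mul_add, mul_one, Matrix.mul_vecMulVec, hz]
  have hdet : (1 + Matrix.vecMulVec z y).det = 1 + y ⬝ᵥ z := by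
    rw [Matrix.vecMulVec_eq Unit, Matrix.det_one_add_replicateCol_mul_replicateRow]
  have hzz : z ⬝ᵥ z ≤ y ⬝ᵥ z := by
    have h : 0 ≤ z ⬝ᵥ K.mulVec z := hK.dotProduct_mulVec_nonneg z
    rw [← hz, Matrix.add_mulVec, Matrix.one_mulVec, add_dotProduct, dotProduct_comm (K.mulVec z)]
    linarith
  have hsub : 0 ≤ (y - z) ⬝ᵥ (y - z) := Finset.sum_nonneg fun i _ => mul_self_nonneg _
  rw [sub_dotProduct, dotProduct_sub, dotProduct_sub, dotProduct_comm z y] at hsub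
  rw [hfactor, Matrix.det_mul, hdet]
  gcongr
  · exact hpos.det_pos.le
  · linarith

lemma det_one_add_sum_vecMulVec_le [DecidableEq κ] {ι : Type*} (s : Finset ι) (y : ι → κ → ℝ) :
    (1 + ∑ a ∈ s, Matrix.vecMulVec (y a) (y a)).det ≤ ∏ a ∈ s, (1 + y a ⬝ᵥ y a) := by
  classical
  induction s using Finset.induction_on with
  | empty => simp
  | insert a s ha ih =>
    have hpsd : (∑ b ∈ s, Matrix.vecMulVec (y b) (y b)).PosSemidef :=
      Matrix.posSemidef_sum _ fun b _ => Matrix.posSemidef_vecMulVec_self_star (y b)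
    rw [Finset.sum_insert ha, Finset.prod_insert ha, mul_comm, add_comm (Matrix.vecMulVec _ _),
      ← add_assoc]
    refine (det_one_add_add_vecMulVec_le hpsd (y a)).trans ?_
    gcongr
    exact add_nonneg zero_le_one (Finset.sum_nonneg fun i _ => mul_self_nonneg _)

lemma dotProduct_mulVec_of_orthogonal_diagonal [DecidableEq κ] {O Q : Matrix κ κ ℝ}
    {lam : κ → ℝ}
    (h : O.transpose * Q * O = Matrix.diagonal lam) (x y : κ → ℝ) :
    O.mulVec x ⬝ᵥ Q.mulVec (O.mulVec y) = ∑ a, lam a * x a * y a := by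
  have hcomp : O.mulVec x ⬝ᵥ Q.mulVec (O.mulVec y) = x ⬝ᵥ (O.transpose * Q * O).mulVec y := by
    rw [← Matrix.mulVec_mulVec, ← Matrix.mulVec_mulVec, Matrix.dotProduct_mulVec x,
      Matrix.vecMul_transpose]
  rw [hcomp, h]
  simp only [dotProduct, Matrix.mulVec_diagonal]
  exact Finset.sum_congr rfl fun a _ => by ring

lemma lintegral_expNegHalf_dotProduct_mulVec [DecidableEq κ] {K : Matrix κ κ ℝ}
    (hK : K.PosSemidef) :
    ∫⁻ u, expNegHalf (u ⬝ᵥ K.mulVec u) ∂(gaussPi κ) = ENNReal.ofReal (√(1 + K).det)⁻¹ := by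
  obtain ⟨O, lam, hO, hO', hlam, hdiag⟩ := exists_orthogonal_diagonal_of_posSemidef hK
  have hmeas : Measurable fun u : κ → ℝ => expNegHalf (u ⬝ᵥ K.mulVec u) :=
    measurable_expNegHalf.comp (Continuous.measurable (by fun_prop))
  have hdet : (1 + K).det = ∏ a, (1 + lam a) := by
    have hconj : O.transpose * (1 + K) * O = Matrix.diagonal fun a => 1 + lam a := by
      rw [mul_add, add_mul, mul_one, hO', hdiag, ← Matrix.diagonal_one, Matrix.diagonal_add]
    rw [← Matrix.det_diagonal, ← hconj, Matrix.det_mul, Matrix.det_mul, mul_comm, ← mul_assoc,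
      ← Matrix.det_mul, hO, Matrix.det_one, one_mul]
  rw [← (measurePreserving_mulVec_gaussPi hO).lintegral_comp hmeas, hdet,
    ← lintegral_expNegHalf_gaussPi hlam]
  simp_rw [dotProduct_mulVec_of_orthogonal_diagonal hdiag, mul_assoc, ← sq]

lemma prod_inv_sqrt_le_lintegral_expNegHalf {ι : Type*} [Fintype ι] (y : ι → κ → ℝ) :
    ENNReal.ofReal (√(∏ a, (1 + y a ⬝ᵥ y a)))⁻¹
      ≤ ∫⁻ u, expNegHalf (∑ a, (u ⬝ᵥ y a) ^ 2) ∂(gaussPi κ) := by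
  classical
  have hpsd : (∑ a, Matrix.vecMulVec (y a) (y a)).PosSemidef :=
    Matrix.posSemidef_sum _ fun a _ => Matrix.posSemidef_vecMulVec_self_star (y a)
  have hform : ∀ u : κ → ℝ,
      ∑ a, (u ⬝ᵥ y a) ^ 2 = u ⬝ᵥ (∑ a, Matrix.vecMulVec (y a) (y a)).mulVec u := by
    intro u
    rw [Matrix.sum_mulVec, dotProduct_sum]
    refine Finset.sum_congr rfl fun a _ => ?_
    simp [Matrix.vecMulVec_mulVec, sq, dotProduct_comm]
  simp_rw [hform, lintegral_expNegHalf_dotProduct_mulVec hpsd]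
  have hdet : 0 < (1 + ∑ a, Matrix.vecMulVec (y a) (y a)).det :=
    (Matrix.PosDef.one.add_posSemidef hpsd).det_pos
  gcongr
  exact det_one_add_sum_vecMulVec_le _ y

end Determinant

section GaussianSubspace

variable {κ ι : Type} [Fintype κ] [Fintype ι]

lemma lintegral_prod_one_add_mul_sum_sq_gaussTuple {s : ι → ℝ} (hs : ∀ a, 0 ≤ s a) :
    ∫⁻ Y, ∏ a, ENNReal.ofReal (1 + s a * ∑ i, Y i a ^ 2) ∂(gaussTuple κ ι)
      = ∏ a, ENNReal.ofReal (1 + s a * Fintype.card κ) := by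
  have hfactor : ∀ a, ∫⁻ x, ENNReal.ofReal (1 + s a * ∑ i, x i ^ 2) ∂(gaussPi κ)
      = ENNReal.ofReal (1 + s a * Fintype.card κ) := by
    intro a
    have hint : Integrable (fun x : κ → ℝ => ∑ i, s a * x i ^ 2) (gaussPi κ) :=
      integrable_finsetSum _ fun i _ => (memLp_mul_sq_gaussPi (s a) i).integrable one_le_two
    simp_rw [Finset.mul_sum]
    rw [← ofReal_integral_eq_lintegral_ofReal (.fun_add (integrable_const 1) hint), integral_add
      (integrable_const _) hint, integral_sum_mul_sq_gaussPi fun _ => s a]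
    · simp [mul_comm]
    · exact ae_of_all _ fun x => add_nonneg zero_le_one
        (Finset.sum_nonneg fun i _ => mul_nonneg (hs a) (sq_nonneg _))
  have hmeas : ∀ a, Measurable fun x : κ → ℝ => ENNReal.ofReal (1 + s a * ∑ i, x i ^ 2) :=
    fun a => by fun_prop
  rw [measurePreserving_flip_gaussTuple.lintegral_comp
    (f := fun X : ι → κ → ℝ => ∏ a, ENNReal.ofReal (1 + s a * ∑ i, X a i ^ 2)) (by fun_prop),
    gaussTuple, lintegral_pi_prod_eq_prod _ hmeas]
  exact Finset.prod_congr rfl fun a _ => hfactor a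

lemma prod_one_add_inv_sqrt_le_lintegral_expNegHalf {s : ι → ℝ} (hs : ∀ a, 0 ≤ s a)
    (Y : κ → ι → ℝ) :
    ENNReal.ofReal (√(∏ a, (1 + s a * ∑ i, Y i a ^ 2)))⁻¹
      ≤ ∫⁻ u, expNegHalf (∑ a, s a * (∑ i, u i * Y i a) ^ 2) ∂(gaussPi κ) := by
  have h := prod_inv_sqrt_le_lintegral_expNegHalf fun a => √(s a) • fun i => Y i a
  simp only [dotProduct_smul, smul_dotProduct, smul_eq_mul, mul_pow, ← mul_assoc,
    Real.mul_self_sqrt (hs _), Real.sq_sqrt (hs _)] at h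
  simpa only [dotProduct, ← sq] using h

lemma one_quarter_le_measure_inter_lt {Ω : Type*} [MeasurableSpace Ω] {μ : Measure Ω}
    [IsProbabilityMeasure μ] {f : Ω → ℝ≥0∞} (hf : Measurable f) {M : ℝ≥0∞} (hM₀ : M ≠ 0)
    (hM : M ≠ ∞) (hfM : ∫⁻ x, f x ∂μ ≤ M) {G : Set Ω} (hGc : μ Gᶜ ≤ 1 / 2) :
    1 / 4 ≤ μ (G ∩ {x | f x < 4 * M}) := by
  have hmarkov : μ {x | 4 * M ≤ f x} ≤ 1 / 4 := by
    refine (meas_ge_le_lintegral_div hf.aemeasurable (by simp [hM₀]) (by finiteness)).trans ?_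
    rw [one_div, ENNReal.div_le_iff_le_mul (by simp [hM₀]) (by simp [hM, ENNReal.mul_eq_top]),
      ← mul_assoc, ENNReal.inv_mul_cancel (by simp) (by simp), one_mul]
    exact hfM
  have hcover : Set.univ ⊆ (G ∩ {x | f x < 4 * M}) ∪ (Gᶜ ∪ {x | 4 * M ≤ f x}) := by
    intro x _
    by_cases hx : x ∈ G <;> simp [hx, lt_or_ge]
  have hrest : μ (Gᶜ ∪ {x | 4 * M ≤ f x}) ≤ 1 / 2 + 1 / 4 :=
    (measure_union_le _ _).trans (add_le_add hGc hmarkov)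
  refine (ENNReal.add_le_add_iff_right (a := 1 / 2 + 1 / 4) (by finiteness)).1 ?_
  calc (1 / 4 + (1 / 2 + 1 / 4) : ℝ≥0∞) = 1 := by
        rw [← ENNReal.toReal_eq_toReal_iff' (by finiteness) (by simp),
          ENNReal.toReal_add (by finiteness) (by finiteness),
          ENNReal.toReal_add (by finiteness) (by finiteness)]
        norm_num
    _ = μ Set.univ := measure_univ.symm
    _ ≤ μ (G ∩ {x | f x < 4 * M}) + μ (Gᶜ ∪ {x | 4 * M ≤ f x}) :=
        (measure_mono hcover).trans (measure_union_le _ _)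
    _ ≤ μ (G ∩ {x | f x < 4 * M}) + (1 / 2 + 1 / 4) := by gcongr

lemma one_quarter_le_gaussTuple_inter_prod_le {s : ι → ℝ} (hs : ∀ a, 0 ≤ s a)
    {G : Set (κ → ι → ℝ)} (hGc : gaussTuple κ ι Gᶜ ≤ 1 / 2) :
    1 / 4 ≤ gaussTuple κ ι (G ∩ {Y | ∏ a, (1 + s a * ∑ i, Y i a ^ 2)
      ≤ 4 * ∏ a, (1 + s a * Fintype.card κ)}) := by
  have hfactor : ∀ r : ℝ, 0 ≤ r → ∀ a, 0 < 1 + s a * r := fun r hr a =>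
    add_pos_of_pos_of_nonneg one_pos (mul_nonneg (hs a) hr)
  have hM : 0 < ∏ a, (1 + s a * Fintype.card κ) :=
    Finset.prod_pos fun a _ => hfactor _ (by positivity) a
  have hmean : ∫⁻ Y, ENNReal.ofReal (∏ a, (1 + s a * ∑ i, Y i a ^ 2)) ∂(gaussTuple κ ι)
      ≤ ENNReal.ofReal (∏ a, (1 + s a * Fintype.card κ)) := by
    rw [ENNReal.ofReal_prod_of_nonneg fun a _ => (hfactor _ (by positivity) a).le,
      ← lintegral_prod_one_add_mul_sum_sq_gaussTuple hs]
    refine lintegral_mono fun Y => (ENNReal.ofReal_prod_of_nonneg fun a _ => ?_).le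
    exact (hfactor _ (by positivity) a).le
  refine (one_quarter_le_measure_inter_lt (by fun_prop) (ENNReal.ofReal_pos.2 hM).ne'
    ENNReal.ofReal_ne_top hmean hGc).trans (measure_mono fun Y hY => ⟨hY.1, ?_⟩)
  have hlt := hY.2
  rw [Set.mem_ofPred_eq, ← ENNReal.ofReal_ofNat, ← ENNReal.ofReal_mul (by norm_num)] at hlt
  exact (ENNReal.ofReal_lt_ofReal_iff_of_nonneg (Finset.prod_nonneg fun a _ =>
    (hfactor _ (by positivity) a).le)).1 hlt |>.le

lemma inv_sqrt_prod_le_setLIntegral_gaussTuple {s : ι → ℝ} (hs : ∀ a, 0 ≤ s a)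
    {G : Set (κ → ι → ℝ)} (hG : MeasurableSet G) (hGc : gaussTuple κ ι Gᶜ ≤ 1 / 2) :
    ENNReal.ofReal (√(∏ a, (1 + s a * Fintype.card κ)))⁻¹
      ≤ 8 * ∫⁻ Y in G, ∫⁻ u, expNegHalf (∑ a, s a * (∑ i, u i * Y i a) ^ 2)
          ∂(gaussPi κ) ∂(gaussTuple κ ι) := by
  set M : ℝ := ∏ a, (1 + s a * Fintype.card κ)
  let D : Set (κ → ι → ℝ) := {Y | ∏ a, (1 + s a * ∑ i, Y i a ^ 2) ≤ 4 * M}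
  have hlow : ∀ Y ∈ G ∩ D, ENNReal.ofReal (√(4 * M))⁻¹
      ≤ ∫⁻ u, expNegHalf (∑ a, s a * (∑ i, u i * Y i a) ^ 2) ∂(gaussPi κ) := fun Y hY => by
    refine le_trans ?_ (prod_one_add_inv_sqrt_le_lintegral_expNegHalf hs Y)
    gcongr
    · exact Real.sqrt_pos.2 (Finset.prod_pos fun a _ =>
        add_pos_of_pos_of_nonneg one_pos (mul_nonneg (hs a) (by positivity)))
    · exact hY.2
  have hsqrt : √(4 * M) = 2 * √M := by
    rw [Real.sqrt_mul (by norm_num), show (4 : ℝ) = 2 ^ 2 by norm_num, Real.sqrt_sq (by norm_num)]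
  calc ENNReal.ofReal (√M)⁻¹ = 8 * (ENNReal.ofReal (√(4 * M))⁻¹ * (1 / 4)) := by
        rw [hsqrt, ← ENNReal.ofReal_ofNat, ← ENNReal.ofReal_ofNat, ← ENNReal.ofReal_one,
          ← ENNReal.ofReal_div_of_pos (by norm_num), ← ENNReal.ofReal_mul (by positivity),
          ← ENNReal.ofReal_mul (by norm_num)]
        congr 1
        field_simp
        norm_num
    _ ≤ 8 * ∫⁻ Y in G ∩ D, ENNReal.ofReal (√(4 * M))⁻¹ ∂(gaussTuple κ ι) := by
        grw [setLIntegral_const, one_quarter_le_gaussTuple_inter_prod_le hs hGc]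
    _ ≤ 8 * ∫⁻ Y in G ∩ D, ∫⁻ u, expNegHalf (∑ a, s a * (∑ i, u i * Y i a) ^ 2)
          ∂(gaussPi κ) ∂(gaussTuple κ ι) := by
        gcongr 8 * ?_
        exact setLIntegral_mono' (hG.inter (measurableSet_le (by fun_prop) measurable_const)) hlow
    _ ≤ 8 * ∫⁻ Y in G, ∫⁻ u, expNegHalf (∑ a, s a * (∑ i, u i * Y i a) ^ 2)
          ∂(gaussPi κ) ∂(gaussTuple κ ι) := by
        gcongr 8 * ?_
        exact lintegral_mono_set Set.inter_subset_left

section LinearMap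

variable {E : Type*} [NormedAddCommGroup E] [InnerProductSpace ℝ E]

lemma exists_orthogonal_norm_sq_linearMap_eq [DecidableEq ι] (B : (ι → ℝ) →ₗ[ℝ] E) :
    ∃ (O : Matrix ι ι ℝ) (lam : ι → ℝ), O * O.transpose = 1 ∧ (∀ a, 0 ≤ lam a) ∧
      ∀ x, ‖B (O.mulVec x)‖ ^ 2 = ∑ a, lam a * x a ^ 2 := by
  obtain ⟨O, lam, hO, -, hlam, hdiag⟩ := exists_orthogonal_diagonal_of_posSemidef
    (Matrix.posSemidef_gram ℝ fun a => B (Pi.single a 1))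
  refine ⟨O, lam, hO, hlam, fun x => ?_⟩
  have hgram := Matrix.star_dotProduct_gram_mulVec (𝕜 := ℝ) (fun a => B (Pi.single a 1))
    (O.mulVec x) (O.mulVec x)
  rw [star_trivial, ← linearMap_eq_sum_smul_single, real_inner_self_eq_norm_sq,
    dotProduct_mulVec_of_orthogonal_diagonal hdiag] at hgram
  rw [← hgram]
  exact Finset.sum_congr rfl fun a _ => by ring

lemma lintegral_expNegHalf_card_mul_norm_sq_le (B : (ι → ℝ) →ₗ[ℝ] E)
    {G : Set (κ → ι → ℝ)} (hG : MeasurableSet G) (hGc : gaussTuple κ ι Gᶜ ≤ 1 / 2) :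
    ∫⁻ x, expNegHalf (Fintype.card κ * ‖B x‖ ^ 2) ∂(gaussPi ι)
      ≤ 8 * ∫⁻ Y in G, ∫⁻ u, expNegHalf (‖B (∑ i, u i • Y i)‖ ^ 2)
          ∂(gaussPi κ) ∂(gaussTuple κ ι) := by
  classical
  obtain ⟨O, lam, hO, hlam, hdiag⟩ := exists_orthogonal_norm_sq_linearMap_eq B
  have hB : Continuous B := B.continuous_of_finiteDimensional
  have hrot := measurePreserving_mulVec_gaussPi hO
  have hrots : MeasurePreserving (fun (Y : κ → ι → ℝ) i => O.mulVec (Y i))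
      (gaussTuple κ ι) (gaussTuple κ ι) := measurePreserving_pi _ _ fun _ => hrot
  have hcomb : ∀ (u : κ → ℝ) (Y : κ → ι → ℝ), ‖B (∑ i, u i • O.mulVec (Y i))‖ ^ 2
      = ∑ a, lam a * (∑ i, u i * Y i a) ^ 2 := by
    intro u Y
    simp_rw [← Matrix.mulVec_smul, ← Matrix.mulVec_sum, hdiag]
    simp
  have hmeas : Measurable fun Y : κ → ι → ℝ =>
      ∫⁻ u, expNegHalf (‖B (∑ i, u i • Y i)‖ ^ 2) ∂(gaussPi κ) :=
    Measurable.lintegral_prod_right' (f := fun p : (κ → ι → ℝ) × (κ → ℝ) =>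
      expNegHalf (‖B (∑ i, p.2 i • p.1 i)‖ ^ 2))
      (measurable_expNegHalf.comp (Continuous.measurable (by fun_prop)))
  have hmeas' : Measurable fun x => expNegHalf (Fintype.card κ * ‖B x‖ ^ 2) :=
    measurable_expNegHalf.comp (Continuous.measurable (by fun_prop))
  rw [← hrot.lintegral_comp hmeas',
    ← hrots.setLIntegral_comp_preimage hG hmeas]
  simp_rw [hdiag, hcomb, Finset.mul_sum, ← mul_assoc]
  rw [lintegral_expNegHalf_gaussPi fun a => mul_nonneg (Nat.cast_nonneg _) (hlam a)]
  simp_rw [mul_comm (Fintype.card κ : ℝ)]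
  refine inv_sqrt_prod_le_setLIntegral_gaussTuple hlam (hrots.measurable hG) ?_
  rwa [← Set.preimage_compl, hrots.measure_preimage hG.compl.nullMeasurableSet]

end LinearMap

end GaussianSubspace

section PowerMeans

lemma pow_lintegral_le_lintegral_pow {Ω : Type*} [MeasurableSpace Ω] {ν : Measure Ω}
    [IsProbabilityMeasure ν] {f : Ω → ℝ≥0∞} (hf : AEMeasurable f ν) {m : ℕ} (hm : m ≠ 0) :
    (∫⁻ z, f z ∂ν) ^ m ≤ ∫⁻ z, f z ^ m ∂ν := by
  have hm' : (m : ℝ) ≠ 0 := by exact_mod_cast hm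
  have h := eLpNorm'_le_eLpNorm'_of_exponent_le (p := 1) (q := m) one_pos
    (by exact_mod_cast Nat.one_le_iff_ne_zero.2 hm) ν hf.aestronglyMeasurable
  simp only [eLpNorm'_eq_lintegral_enorm, enorm_eq_self, ENNReal.rpow_one, ENNReal.rpow_natCast,
    div_one] at h
  calc (∫⁻ z, f z ∂ν) ^ m ≤ ((∫⁻ z, f z ^ m ∂ν) ^ (1 / (m : ℝ))) ^ m := by gcongr
    _ = ∫⁻ z, f z ^ m ∂ν := by
      rw [← ENNReal.rpow_natCast, ← ENNReal.rpow_mul, one_div_mul_cancel hm', ENNReal.rpow_one]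

lemma pow_sum_le_card_pow_mul_sum_pow {κ : Type*} [Fintype κ] [Nonempty κ] (f : κ → ℝ≥0∞)
    (m : ℕ) : (∑ i, f i) ^ m ≤ (Fintype.card κ : ℝ≥0∞) ^ m * ∑ i, f i ^ m := by
  obtain ⟨j, hj⟩ := Finite.exists_max f
  calc (∑ i, f i) ^ m ≤ (∑ _i : κ, f j) ^ m := by gcongr with i; exact hj i
    _ = (Fintype.card κ : ℝ≥0∞) ^ m * f j ^ m := by simp [mul_pow]
    _ ≤ _ := by
      gcongr
      exact Finset.single_le_sum (f := fun i => f i ^ m) (fun i _ => zero_le) (Finset.mem_univ j)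

end PowerMeans

section QuadraticForm

variable {ι : Type} [Fintype ι] {Q : Matrix ι ι ℝ}

lemma exists_orthogonal_quadForm_eq [DecidableEq ι] (hQ : Q.PosSemidef) :
    ∃ (O : Matrix ι ι ℝ) (lam : ι → ℝ), O * O.transpose = 1 ∧ (∀ a, 0 ≤ lam a) ∧
      (∀ a, O.mulVec (Pi.single a 1) ⬝ᵥ O.mulVec (Pi.single a 1) = 1) ∧
      (∀ x, O.mulVec x ⬝ᵥ Q.mulVec (O.mulVec x) = ∑ a, lam a * x a ^ 2) ∧
      Q.trace = ∑ a, lam a := by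
  obtain ⟨O, lam, hO, hO', hlam, hdiag⟩ := exists_orthogonal_diagonal_of_posSemidef hQ
  refine ⟨O, lam, hO, hlam, fun a => ?_, fun x => ?_, ?_⟩
  · rw [Matrix.dotProduct_mulVec, Matrix.vecMul_mulVec, hO']
    simp
  · rw [dotProduct_mulVec_of_orthogonal_diagonal hdiag]
    exact Finset.sum_congr rfl fun a _ => by ring
  · rw [← Matrix.trace_diagonal, ← hdiag, Matrix.trace_mul_comm, ← mul_assoc, hO, one_mul]

lemma lintegral_ofReal_dotProduct_mulVec (hQ : Q.PosSemidef) :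
    ∫⁻ x, ENNReal.ofReal (x ⬝ᵥ Q.mulVec x) ∂(gaussPi ι) = ENNReal.ofReal Q.trace := by
  classical
  obtain ⟨O, lam, hO, hlam, -, hquad, htrace⟩ := exists_orthogonal_quadForm_eq hQ
  rw [← (measurePreserving_mulVec_gaussPi hO).lintegral_comp
    (f := fun x => ENNReal.ofReal (x ⬝ᵥ Q.mulVec x))
    (Measurable.ennreal_ofReal (Continuous.measurable (by fun_prop)))]
  simp_rw [hquad]
  rw [← ofReal_integral_eq_lintegral_ofReal
      (integrable_finsetSum _ fun a _ => (memLp_mul_sq_gaussPi (lam a) a).integrable one_le_two)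
      (ae_of_all _ fun x => Finset.sum_nonneg fun a _ => mul_nonneg (hlam a) (sq_nonneg _)),
    integral_sum_mul_sq_gaussPi, htrace]

lemma gaussPi_abs_dotProduct_mulVec_sub_trace_ge_le (hQ : Q.PosSemidef) {b : ℝ}
    (hb : ∀ v : ι → ℝ, v ⬝ᵥ v = 1 → v ⬝ᵥ Q.mulVec v ≤ b) {θ : ℝ} (hθ : 0 < θ) :
    gaussPi ι {x | θ ≤ |x ⬝ᵥ Q.mulVec x - Q.trace|}
      ≤ ENNReal.ofReal (gaussSqVariance * (b * Q.trace) / θ ^ 2) := by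
  classical
  obtain ⟨O, lam, hO, hlam, hunit, hquad, htrace⟩ := exists_orthogonal_quadForm_eq hQ
  have hlamb : ∀ a, lam a ≤ b := fun a => by
    have h := hb _ (hunit a)
    rw [hquad] at h
    simpa [Pi.single_apply] using h
  have hmeas : Measurable fun x : ι → ℝ => x ⬝ᵥ Q.mulVec x :=
    Continuous.measurable (by fun_prop)
  rw [← (measurePreserving_mulVec_gaussPi hO).measure_preimage
    (measurableSet_le measurable_const (by fun_prop)).nullMeasurableSet]
  simp only [Set.preimage_ofPred_eq, hquad, htrace]
  refine (gaussPi_abs_sum_mul_sq_sub_ge_le lam hθ).trans (ENNReal.ofReal_le_ofReal ?_)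
  have := gaussSqVariance_nonneg
  gcongr
  rw [Finset.mul_sum]
  exact Finset.sum_le_sum fun a _ => by nlinarith [hlamb a, hlam a]

lemma dotProduct_mulVec_eq_polarization (hQ : Q.IsSymm) (x y : ι → ℝ) :
    x ⬝ᵥ Q.mulVec y = (x ⬝ᵥ Q.mulVec x) / 2 + (y ⬝ᵥ Q.mulVec y) / 2
      - ((√2)⁻¹ • (x - y)) ⬝ᵥ Q.mulVec ((√2)⁻¹ • (x - y)) := by
  have hsymm : y ⬝ᵥ Q.mulVec x = x ⬝ᵥ Q.mulVec y := by
    rw [Matrix.dotProduct_mulVec, ← Matrix.mulVec_transpose, hQ, dotProduct_comm]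
  have hsqrt : (√2)⁻¹ * (√2)⁻¹ = (1 / 2 : ℝ) := by
    rw [← mul_inv, Real.mul_self_sqrt (by norm_num), one_div]
  simp only [Matrix.mulVec_smul, Matrix.mulVec_sub, dotProduct_smul, smul_dotProduct,
    sub_dotProduct, dotProduct_sub, smul_eq_mul, hsymm]
  linear_combination (x ⬝ᵥ Q.mulVec x - 2 * (x ⬝ᵥ Q.mulVec y) + y ⬝ᵥ Q.mulVec y) * hsqrt

variable {κ : Type*} {Y : κ → ι → ℝ} {T : ℝ}

lemma abs_dotProduct_mulVec_sub_ite_le [DecidableEq κ] (hQ : Q.IsSymm) {r : ℝ}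
    (hdiag : ∀ i, |Y i ⬝ᵥ Q.mulVec (Y i) - T| ≤ r)
    (hoff : ∀ i j, i ≠ j →
      |((√2)⁻¹ • (Y i - Y j)) ⬝ᵥ Q.mulVec ((√2)⁻¹ • (Y i - Y j)) - T| ≤ r) (i j : κ) :
    |Y i ⬝ᵥ Q.mulVec (Y j) - if i = j then T else 0| ≤ 2 * r := by
  obtain rfl | hij := eq_or_ne i j
  · rw [if_pos rfl]
    linarith [hdiag i, (abs_nonneg _).trans (hdiag i)]
  · have hi := abs_le.1 (hdiag i)
    have hj := abs_le.1 (hdiag j)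
    have hd := abs_le.1 (hoff i j hij)
    rw [if_neg hij, dotProduct_mulVec_eq_polarization hQ, abs_le]
    constructor <;> linarith

lemma le_dotProduct_mulVec_sum_smul [Fintype κ] [DecidableEq κ] {r : ℝ} (hr : 0 ≤ r)
    (hY : ∀ i j, |Y i ⬝ᵥ Q.mulVec (Y j) - if i = j then T else 0| ≤ r)
    {u : κ → ℝ} (hu : ∑ i, u i ^ 2 = 1) :
    T - Fintype.card κ * r ≤ (∑ i, u i • Y i) ⬝ᵥ Q.mulVec (∑ i, u i • Y i) := by
  have hexpand : (∑ i, u i • Y i) ⬝ᵥ Q.mulVec (∑ i, u i • Y i) - T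
      = ∑ i, ∑ j, u i * u j * (Y i ⬝ᵥ Q.mulVec (Y j) - if i = j then T else 0) := by
    simp only [mul_sub, Finset.sum_sub_distrib, mul_ite, mul_zero, Finset.sum_ite_eq,
      Finset.mem_univ, if_true]
    rw [← Finset.sum_mul]
    simp_rw [← sq, hu, one_mul, Matrix.mulVec_sum, sum_dotProduct, dotProduct_sum,
      Matrix.mulVec_smul, dotProduct_smul, smul_dotProduct, smul_eq_mul]
    congr 1
    exact Finset.sum_congr rfl fun i _ => Finset.sum_congr rfl fun j _ => by ring
  have habs : |(∑ i, u i • Y i) ⬝ᵥ Q.mulVec (∑ i, u i • Y i) - T| ≤ Fintype.card κ * r := by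
    rw [hexpand]
    calc _ ≤ ∑ i, ∑ j, |u i| * |u j| * r := by
          refine (Finset.abs_sum_le_sum_abs _ _).trans (Finset.sum_le_sum fun i _ => ?_)
          refine (Finset.abs_sum_le_sum_abs _ _).trans (Finset.sum_le_sum fun j _ => ?_)
          rw [abs_mul, abs_mul]
          gcongr
          exact hY i j
      _ = (∑ i, |u i|) ^ 2 * r := by
          simp_rw [sq, Finset.sum_mul_sum, Finset.sum_mul]
      _ ≤ Fintype.card κ * r := by
          gcongr
          simpa [sq_abs, hu] using
            sq_sum_le_card_mul_sum_sq (s := (Finset.univ : Finset κ)) (f := fun i => |u i|)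
  linarith [(abs_le.1 habs).1]

end QuadraticForm

/-- The bounds `c ≤ E ‖F‖ ^ 2` and `E ‖F‖ ^ (2 m) ≤ L ^ m` on a random vector `F` of law
determined by `ν`. In the small-ball estimates `m` is large, so the second bound says that the
tail of `F` is lighter than that of a Gaussian. -/
def MomentBounds {Ω E : Type*} [MeasurableSpace Ω] [NormedAddCommGroup E] (c L : ℝ) (m : ℕ)
    (F : Ω → E) (ν : Measure Ω) : Prop :=
  ENNReal.ofReal c ≤ ∫⁻ z, ‖F z‖ₑ ^ 2 ∂ν ∧ ∫⁻ z, ‖F z‖ₑ ^ (2 * m) ∂ν ≤ ENNReal.ofReal L ^ m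

section RandomLinearMap

variable {E : Type*} [NormedAddCommGroup E] [InnerProductSpace ℝ E] {ι : Type} [Fintype ι]

lemma gaussMoment_mul_enorm_pow_le (B : (ι → ℝ) →ₗ[ℝ] E) {v : ι → ℝ} (hv : v ⬝ᵥ v = 1) (m : ℕ) :
    gaussMoment m * ‖B v‖ₑ ^ (2 * m) ≤ ∫⁻ x, ‖B x‖ₑ ^ (2 * m) ∂(gaussPi ι) := by
  classical
  let f : E := ‖B v‖⁻¹ • B v
  have hf : ‖f‖ ≤ 1 := by
    rw [norm_smul, norm_inv, norm_norm]
    exact inv_mul_le_one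
  let L : (ι → ℝ) →ₗ[ℝ] ℝ := (innerₛₗ ℝ f).comp B
  have hLv : L v = ‖B v‖ := by
    simp only [L, f, LinearMap.comp_apply, innerₛₗ_apply_apply, real_inner_smul_left,
      real_inner_self_eq_norm_sq]
    rcases eq_or_ne ‖B v‖ 0 with h | h
    · simp [h]
    · field_simp
  have hnorm : ‖B v‖ₑ ^ 2 ≤ ENNReal.ofReal (∑ a, L (Pi.single a 1) ^ 2) := by
    rw [← ofReal_norm, ← ENNReal.ofReal_pow (norm_nonneg _), ← hLv]
    refine ENNReal.ofReal_le_ofReal ?_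
    have hv' : ∑ a, v a ^ 2 = 1 := by simpa only [dotProduct, ← sq] using hv
    simpa only [← smul_eq_mul, ← linearMap_eq_sum_smul_single, hv', one_smul] using
      Finset.sum_mul_sq_le_sq_mul_sq Finset.univ v fun a => L (Pi.single a 1)
  calc gaussMoment m * ‖B v‖ₑ ^ (2 * m)
      ≤ ENNReal.ofReal (∑ a, L (Pi.single a 1) ^ 2) ^ m * gaussMoment m := by
        rw [mul_comm, pow_mul]
        gcongr
    _ = ∫⁻ x, ‖L x‖ₑ ^ (2 * m) ∂(gaussPi ι) := (lintegral_enorm_pow_linearMap_gaussPi L m).symm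
    _ ≤ ∫⁻ x, ‖B x‖ₑ ^ (2 * m) ∂(gaussPi ι) := by
        refine lintegral_mono fun x => ?_
        gcongr
        rw [enorm_le_iff_norm_le]
        exact (norm_inner_le_norm f (B x)).trans (mul_le_of_le_one_left (norm_nonneg _) hf)

variable {Ω : Type*} [MeasurableSpace Ω] {ν : Measure Ω} {w : Ω → (ι → ℝ) →ₗ[ℝ] E}

lemma exists_posSemidef_lintegral_enorm_sq [DecidableEq ι]
    (hw : ∀ a, MemLp (fun z => w z (Pi.single a 1)) 2 ν) :
    ∃ Q : Matrix ι ι ℝ, Q.PosSemidef ∧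
      ∀ v, ENNReal.ofReal (v ⬝ᵥ Q.mulVec v) = ∫⁻ z, ‖w z v‖ₑ ^ 2 ∂ν := by
  let e : ι → ι → ℝ := fun a => Pi.single a 1
  let Q : Matrix ι ι ℝ := .of fun a b => ∫ z, inner ℝ (w z (e a)) (w z (e b)) ∂ν
  have hinner : ∀ a b, Integrable (fun z => inner ℝ (w z (e a)) (w z (e b))) ν := fun a b =>
    ((hw a).norm.integrable_mul (hw b).norm).mono' ((hw a).1.inner (hw b).1)
      (ae_of_all _ fun z => norm_inner_le_norm _ _)
  have hquad : ∀ v, v ⬝ᵥ Q.mulVec v = ∫ z, ‖w z v‖ ^ 2 ∂ν := by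
    intro v
    have hexpand : ∀ z, ‖w z v‖ ^ 2
        = ∑ a, ∑ b, v a * (v b * inner ℝ (w z (e a)) (w z (e b))) := by
      intro z
      rw [← real_inner_self_eq_norm_sq, linearMap_eq_sum_smul_single (w z) v, sum_inner]
      simp_rw [inner_sum, real_inner_smul_left, real_inner_smul_right, e]
    simp_rw [hexpand, dotProduct, Matrix.mulVec, dotProduct, Finset.mul_sum]
    rw [integral_finsetSum _ fun a _ => integrable_finsetSum _ fun b _ =>
      ((hinner a b).const_mul _).const_mul _]
    refine Finset.sum_congr rfl fun a _ => ?_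
    rw [integral_finsetSum _ fun b _ => ((hinner a b).const_mul _).const_mul _]
    refine Finset.sum_congr rfl fun b _ => ?_
    rw [integral_const_mul, integral_const_mul, mul_comm (Q a b)]
    rfl
  refine ⟨Q, .of_dotProduct_mulVec_nonneg ?_ fun v => ?_, fun v => ?_⟩
  · ext a b
    simp [Q, real_inner_comm]
  · rw [star_trivial, hquad]
    exact integral_nonneg fun z => by positivity
  · have hmemLp : MemLp (fun z => w z v) 2 ν := by
      have hsum : MemLp (fun z => ∑ a, v a • w z (Pi.single a 1)) 2 ν :=
        memLp_finsetSum _ fun a _ => (hw a).const_smul (v a)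
      simpa only [← linearMap_eq_sum_smul_single] using hsum
    rw [hquad, ofReal_integral_eq_lintegral_ofReal hmemLp.norm.integrable_sq
      (ae_of_all _ fun z => by positivity)]
    simp_rw [ENNReal.ofReal_pow (norm_nonneg _), ofReal_norm]

variable [MeasurableSpace E] [BorelSpace E] [SecondCountableTopology E]

omit [Fintype ι] in
lemma measurable_uncurry_linearMap [Finite ι] (hw : ∀ v, Measurable fun z => w z v) :
    Measurable fun p : (ι → ℝ) × Ω => w p.2 p.1 := by
  classical
  cases nonempty_fintype ι
  have hsum : Measurable fun p : (ι → ℝ) × Ω => ∑ a, p.1 a • w p.2 (Pi.single a 1) :=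
    Finset.measurable_fun_sum _ fun a _ =>
      ((measurable_pi_apply a).comp measurable_fst).smul ((hw _).comp measurable_snd)
  simpa only [← linearMap_eq_sum_smul_single] using hsum

lemma MomentBounds.lintegral_enorm_sq_le [IsProbabilityMeasure ν]
    (hw : ∀ v, Measurable fun z => w z v) {c L K : ℝ} {m : ℕ} (hm : m ≠ 0)
    (hK : ENNReal.ofReal K ^ m ≤ gaussMoment m)
    (h : MomentBounds c L m (fun p : (ι → ℝ) × Ω => w p.2 p.1) ((gaussPi ι).prod ν))
    {v : ι → ℝ} (hv : v ⬝ᵥ v = 1) :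
    ENNReal.ofReal K * ∫⁻ z, ‖w z v‖ₑ ^ 2 ∂ν ≤ ENNReal.ofReal L := by
  refine (ENNReal.pow_le_pow_left_iff hm).1 ?_
  have hmeas := (measurable_uncurry_linearMap hw).enorm.pow_const (2 * m)
  calc (ENNReal.ofReal K * ∫⁻ z, ‖w z v‖ₑ ^ 2 ∂ν) ^ m
      ≤ gaussMoment m * ∫⁻ z, ‖w z v‖ₑ ^ (2 * m) ∂ν := by
        rw [mul_pow]
        simp_rw [pow_mul]
        gcongr
        exact pow_lintegral_le_lintegral_pow ((hw v).enorm.pow_const _).aemeasurable hm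
    _ = ∫⁻ z, gaussMoment m * ‖w z v‖ₑ ^ (2 * m) ∂ν :=
        (lintegral_const_mul _ ((hw v).enorm.pow_const _)).symm
    _ ≤ ∫⁻ z, ∫⁻ x, ‖w z x‖ₑ ^ (2 * m) ∂(gaussPi ι) ∂ν :=
        lintegral_mono fun z => gaussMoment_mul_enorm_pow_le (w z) hv m
    _ ≤ ENNReal.ofReal L ^ m := by
        rw [← lintegral_prod_symm _ hmeas.aemeasurable]
        exact h.2

lemma MomentBounds.exists_posSemidef [IsProbabilityMeasure ν]
    (hw : ∀ v, Measurable fun z => w z v) {c L K : ℝ} {m : ℕ} (hm : m ≠ 0) (hL : 0 ≤ L)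
    (hK₀ : 0 < K) (hK : ENNReal.ofReal K ^ m ≤ gaussMoment m)
    (h : MomentBounds c L m (fun p : (ι → ℝ) × Ω => w p.2 p.1) ((gaussPi ι).prod ν)) :
    ∃ Q : Matrix ι ι ℝ, Q.PosSemidef ∧
      (∀ v, ENNReal.ofReal (v ⬝ᵥ Q.mulVec v) = ∫⁻ z, ‖w z v‖ₑ ^ 2 ∂ν) ∧
      c ≤ Q.trace ∧ ∀ v, v ⬝ᵥ v = 1 → v ⬝ᵥ Q.mulVec v ≤ L / K := by
  classical
  have hunit : ∀ v : ι → ℝ, v ⬝ᵥ v = 1 → ∫⁻ z, ‖w z v‖ₑ ^ 2 ∂ν ≤ ENNReal.ofReal (L / K) := by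
    intro v hv
    rw [ENNReal.ofReal_div_of_pos hK₀, ENNReal.le_div_iff_mul_le
      (.inl (ENNReal.ofReal_pos.2 hK₀).ne') (.inl ENNReal.ofReal_ne_top), mul_comm]
    exact h.lintegral_enorm_sq_le hw hm hK hv
  have hmemLp : ∀ a, MemLp (fun z => w z (Pi.single a 1)) 2 ν := by
    intro a
    refine ⟨(hw _).aestronglyMeasurable, ?_⟩
    rw [eLpNorm_lt_top_iff_lintegral_rpow_enorm_lt_top two_ne_zero ENNReal.ofNat_ne_top]
    simpa using (hunit (Pi.single a 1) (by simp)).trans_lt ENNReal.ofReal_lt_top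
  obtain ⟨Q, hQ, hQw⟩ := exists_posSemidef_lintegral_enorm_sq hmemLp
  refine ⟨Q, hQ, hQw, ?_, fun v hv => ?_⟩
  · have htrace := h.1
    rw [lintegral_prod _ ((measurable_uncurry_linearMap hw).enorm.pow_const 2).aemeasurable]
      at htrace
    simp_rw [← hQw, lintegral_ofReal_dotProduct_mulVec hQ] at htrace
    exact (ENNReal.ofReal_le_ofReal_iff hQ.trace_nonneg).1 htrace
  · have hle := hunit v hv
    rw [← hQw] at hle
    exact (ENNReal.ofReal_le_ofReal_iff (by positivity)).1 hle

end RandomLinearMap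

section GoodTuples

variable {κ ι : Type} [Fintype κ] [Fintype ι]

lemma measurePreserving_apply_gaussTuple (i : κ) :
    MeasurePreserving (fun Y : κ → ι → ℝ => Y i) (gaussTuple κ ι) (gaussPi ι) :=
  measurePreserving_eval (fun _ : κ => gaussPi ι) i

lemma measurePreserving_smul_apply_sub_apply_gaussTuple {i j : κ} (hij : i ≠ j) :
    MeasurePreserving (fun Y : κ → ι → ℝ => (√2)⁻¹ • (Y i - Y j)) (gaussTuple κ ι)
      (gaussPi ι) := by
  classical
  let u : κ → ℝ := (√2)⁻¹ • (Pi.single i 1 - Pi.single j 1)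
  have hu : ∑ k, u k ^ 2 = 1 := by
    have hsq : ∀ k, u k ^ 2 = (if k = i then 2⁻¹ else 0) + (if k = j then 2⁻¹ else 0) := by
      intro k
      simp only [u, Pi.smul_apply, smul_eq_mul, Pi.sub_apply]
      rw [mul_pow, inv_pow, Real.sq_sqrt zero_le_two]
      rcases eq_or_ne k i with rfl | hki
      · simp [hij]
      · rcases eq_or_ne k j with rfl | hkj <;> simp [*]
    simp_rw [hsq, Finset.sum_add_distrib, Finset.sum_ite_eq', Finset.mem_univ, if_true]
    norm_num
  convert measurePreserving_sum_smul_gaussTuple (ι := ι) hu using 2 with Y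
  simp [u, mul_smul, sub_smul, ← Finset.smul_sum, Finset.sum_sub_distrib, Pi.single_apply]

lemma exists_measurableSet_gaussTuple_compl_le {B F : Set (ι → ℝ)} (hB : MeasurableSet B)
    (hF : MeasurableSet F) :
    ∃ G : Set (κ → ι → ℝ), MeasurableSet G ∧
      gaussTuple κ ι Gᶜ
        ≤ Fintype.card κ * (gaussPi ι B + gaussPi ι F + Fintype.card κ * gaussPi ι B) ∧
      ∀ Y ∈ G, (∀ i, Y i ∉ B) ∧ (∀ i, Y i ∉ F) ∧
        ∀ i j, i ≠ j → (√2)⁻¹ • (Y i - Y j) ∉ B := by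
  let D : κ → κ → Set (κ → ι → ℝ) := fun i j => {Y | i ≠ j ∧ (√2)⁻¹ • (Y i - Y j) ∈ B}
  let N : κ → Set (κ → ι → ℝ) := fun i => {Y | Y i ∈ B} ∪ {Y | Y i ∈ F} ∪ ⋃ j, D i j
  have hDm : ∀ i j, MeasurableSet (D i j) := fun i j =>
    (MeasurableSet.const _).inter ((by fun_prop : Measurable fun Y : κ → ι → ℝ =>
      (√2)⁻¹ • (Y i - Y j)) hB)
  have hNm : ∀ i, MeasurableSet (N i) := fun i =>
    ((measurable_pi_apply i hB).union (measurable_pi_apply i hF)).union (.iUnion (hDm i))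
  have hD : ∀ i j, gaussTuple κ ι (D i j) ≤ gaussPi ι B := by
    intro i j
    rcases eq_or_ne i j with rfl | hij
    · simp [D]
    · rw [← (measurePreserving_smul_apply_sub_apply_gaussTuple hij).measure_preimage
        hB.nullMeasurableSet]
      exact measure_mono fun Y hY => hY.2
  have hN : ∀ i, gaussTuple κ ι (N i)
      ≤ gaussPi ι B + gaussPi ι F + Fintype.card κ * gaussPi ι B := by
    intro i
    refine (measure_union_le _ _).trans (add_le_add ((measure_union_le _ _).trans
      (add_le_add ?_ ?_)) ((measure_iUnion_fintype_le _ _).trans ?_))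
    · exact ((measurePreserving_apply_gaussTuple i).measure_preimage hB.nullMeasurableSet).le
    · exact ((measurePreserving_apply_gaussTuple i).measure_preimage hF.nullMeasurableSet).le
    · simpa only [Finset.card_univ, nsmul_eq_mul] using
        Finset.sum_le_card_nsmul Finset.univ _ _ fun j _ => hD i j
  refine ⟨(⋃ i, N i)ᶜ, (MeasurableSet.iUnion hNm).compl, ?_, fun Y hY => ?_⟩
  · rw [compl_compl]
    refine (measure_iUnion_fintype_le _ _).trans ?_
    simpa only [Finset.card_univ, nsmul_eq_mul] using
      Finset.sum_le_card_nsmul Finset.univ _ _ fun i _ => hN i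
  · simp only [N, D, Set.mem_compl_iff, Set.mem_iUnion, Set.mem_union, Set.mem_ofPred_eq,
      not_exists, not_or, not_and] at hY
    exact ⟨fun i => (hY i).1.1, fun i => (hY i).1.2, fun i j => (hY i).2 j⟩

variable {Q : Matrix ι ι ℝ}

lemma gaussPi_trace_div_le_abs_sub_trace_le (hQ : Q.PosSemidef) {c q : ℝ} (hc : 0 < c)
    (hq : 0 < q) (htr : c ≤ Q.trace)
    (hb : ∀ v, v ⬝ᵥ v = 1 → v ⬝ᵥ Q.mulVec v ≤ c / (128 * q ^ 4 * (gaussSqVariance + 1))) :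
    gaussPi ι {x | Q.trace / (4 * q) ≤ |x ⬝ᵥ Q.mulVec x - Q.trace|}
      ≤ ENNReal.ofReal (1 / (8 * q ^ 2)) := by
  have hV := gaussSqVariance_nonneg
  have htr₀ : 0 < Q.trace := hc.trans_le htr
  refine (gaussPi_abs_dotProduct_mulVec_sub_trace_ge_le hQ hb (by positivity)).trans
    (ENNReal.ofReal_le_ofReal ?_)
  have hsplit : gaussSqVariance * (c / (128 * q ^ 4 * (gaussSqVariance + 1)) * Q.trace)
        / (Q.trace / (4 * q)) ^ 2
      = gaussSqVariance / (gaussSqVariance + 1) * (c / Q.trace) * (1 / (8 * q ^ 2)) := by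
    field_simp
    ring
  rw [hsplit]
  refine mul_le_of_le_one_left (by positivity) (mul_le_one₀ ?_ (by positivity) ?_)
  · exact (div_le_one (by positivity)).2 (by linarith)
  · exact (div_le_one htr₀).2 htr

variable {E : Type*} [NormedAddCommGroup E] [InnerProductSpace ℝ E]

lemma enorm_sum_smul_pow_le [Nonempty κ] (f : κ → E) {u : κ → ℝ} (hu : ∑ i, u i ^ 2 = 1)
    (m : ℕ) :
    ‖∑ i, u i • f i‖ₑ ^ (2 * m) ≤ (Fintype.card κ : ℝ≥0∞) ^ m * ∑ i, ‖f i‖ₑ ^ (2 * m) := by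
  have htri : ‖∑ i, u i • f i‖ ≤ ∑ i, |u i| * ‖f i‖ :=
    (norm_sum_le _ _).trans_eq (by simp_rw [norm_smul, Real.norm_eq_abs])
  have hsq : ‖∑ i, u i • f i‖ ^ 2 ≤ ∑ i, ‖f i‖ ^ 2 := by
    refine (pow_le_pow_left₀ (norm_nonneg _) htri 2).trans ?_
    simpa only [sq_abs, hu, one_mul] using
      Finset.sum_mul_sq_le_sq_mul_sq Finset.univ (fun i => |u i|) fun i => ‖f i‖
  have hsq' : ‖∑ i, u i • f i‖ₑ ^ 2 ≤ ∑ i, ‖f i‖ₑ ^ 2 := by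
    simp_rw [← ofReal_norm, ← ENNReal.ofReal_pow (norm_nonneg _)]
    rw [← ENNReal.ofReal_sum_of_nonneg fun i _ => by positivity]
    exact ENNReal.ofReal_le_ofReal hsq
  simp_rw [pow_mul]
  exact (ENNReal.pow_le_pow_left hsq').trans (pow_sum_le_card_pow_mul_sum_pow _ m)

variable [MeasurableSpace E] [BorelSpace E]
  {Ω : Type*} [MeasurableSpace Ω] {ν : Measure Ω} {w : Ω → (ι → ℝ) →ₗ[ℝ] E}

omit [Fintype ι] in
lemma lintegral_enorm_sum_smul_pow_le [Nonempty κ] (hw : ∀ v, Measurable fun z => w z v) {m : ℕ}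
    {Y : κ → ι → ℝ} {R : ℝ≥0∞} (hY : ∀ i, ∫⁻ z, ‖w z (Y i)‖ₑ ^ (2 * m) ∂ν ≤ R)
    {u : κ → ℝ} (hu : ∑ i, u i ^ 2 = 1) :
    ∫⁻ z, ‖w z (∑ i, u i • Y i)‖ₑ ^ (2 * m) ∂ν
      ≤ (Fintype.card κ : ℝ≥0∞) ^ m * (Fintype.card κ * R) := by
  have hmeas : ∀ i, Measurable fun z => ‖w z (Y i)‖ₑ ^ (2 * m) := fun i =>
    (hw (Y i)).enorm.pow_const _
  calc ∫⁻ z, ‖w z (∑ i, u i • Y i)‖ₑ ^ (2 * m) ∂ν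
      ≤ ∫⁻ z, (Fintype.card κ : ℝ≥0∞) ^ m * ∑ i, ‖w z (Y i)‖ₑ ^ (2 * m) ∂ν := by
        refine lintegral_mono fun z => ?_
        rw [map_sum]
        simp_rw [map_smul]
        exact enorm_sum_smul_pow_le _ hu m
    _ = (Fintype.card κ : ℝ≥0∞) ^ m * ∑ i, ∫⁻ z, ‖w z (Y i)‖ₑ ^ (2 * m) ∂ν := by
        rw [lintegral_const_mul _ (Finset.measurable_fun_sum _ fun i _ => hmeas i),
          lintegral_finsetSum _ fun i _ => hmeas i]
    _ ≤ (Fintype.card κ : ℝ≥0∞) ^ m * (Fintype.card κ * R) := by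
        gcongr
        simpa only [Finset.card_univ, nsmul_eq_mul] using
          Finset.sum_le_card_nsmul Finset.univ _ _ fun i _ => hY i

end GoodTuples

section Conditioning

/-- How large `(E |g| ^ (2 m)) ^ (1 / m)` has to be for a random linear map with moment bounds
`c` and `L` to keep such bounds on most subspaces spanned by `q` Gaussian vectors. -/
noncomputable def momentThreshold (q c L : ℝ) : ℝ :=
  128 * q ^ 4 * (gaussSqVariance + 1) * L / c

/-- The constant lost in `MomentBounds.lintegral_expNegHalf_le`. -/
noncomputable def conditioningConst (A : ℕ) : ℝ≥0∞ :=
  8 * ENNReal.ofReal (√(2 * A : ℕ) ^ A) *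
    (∫⁻ x : ℝ, ENNReal.ofReal (|x| ^ (-(1 / 2) : ℝ)) ∂(gaussianReal 0 1)) ^ (2 * A)

lemma conditioningConst_lt_top (A : ℕ) : conditioningConst A < ∞ :=
  ENNReal.mul_lt_top (ENNReal.mul_lt_top (by simp) ENNReal.ofReal_lt_top)
    (ENNReal.pow_lt_top lintegral_abs_rpow_neg_half_gaussianReal_lt_top)

variable {κ ι : Type} [Fintype κ] [Fintype ι] {E : Type*} [NormedAddCommGroup E]
  [InnerProductSpace ℝ E] [MeasurableSpace E] [BorelSpace E] [SecondCountableTopology E]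
  {Ω : Type*} [MeasurableSpace Ω] {ν : Measure Ω} [IsProbabilityMeasure ν]
  {w : Ω → (ι → ℝ) →ₗ[ℝ] E} {c L : ℝ} {m : ℕ}

omit [Fintype ι] [IsProbabilityMeasure ν] in
lemma measurable_lintegral_enorm_pow [Finite ι] [SFinite ν]
    (hw : ∀ v, Measurable fun z => w z v) (k : ℕ) :
    Measurable fun v => ∫⁻ z, ‖w z v‖ₑ ^ k ∂ν :=
  Measurable.lintegral_prod_right' (f := fun p : (ι → ℝ) × Ω => ‖w p.2 p.1‖ₑ ^ k)
    ((measurable_uncurry_linearMap hw).enorm.pow_const k)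

lemma MomentBounds.gaussPi_le_of_moment (hw : ∀ v, Measurable fun z => w z v) (hL : 0 < L)
    (h : MomentBounds c L m (fun p : (ι → ℝ) × Ω => w p.2 p.1) ((gaussPi ι).prod ν))
    {q : ℝ} (hq : 0 < q) :
    gaussPi ι {v | ENNReal.ofReal (8 * q * L ^ m) ≤ ∫⁻ z, ‖w z v‖ₑ ^ (2 * m) ∂ν}
      ≤ ENNReal.ofReal (1 / (8 * q)) := by
  have hpos : (0 : ℝ) < 8 * q * L ^ m := by positivity
  have hmarkov := mul_meas_ge_le_lintegral₀ (μ := gaussPi ι)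
    (measurable_lintegral_enorm_pow (ν := ν) hw (2 * m)).aemeasurable
    (ENNReal.ofReal (8 * q * L ^ m))
  rw [← lintegral_prod _
    ((measurable_uncurry_linearMap hw).enorm.pow_const (2 * m)).aemeasurable] at hmarkov
  refine (ENNReal.mul_le_mul_iff_right (ENNReal.ofReal_pos.2 hpos).ne'
    ENNReal.ofReal_ne_top).1 ((hmarkov.trans h.2).trans_eq ?_)
  rw [← ENNReal.ofReal_mul hpos.le, ← ENNReal.ofReal_pow hL.le]
  congr 1
  field_simp

lemma ofReal_mul_add_add_mul_le_half {q : ℝ} (hq : 1 ≤ q) {b f : ℝ≥0∞}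
    (hb : b ≤ ENNReal.ofReal (1 / (8 * q ^ 2))) (hf : f ≤ ENNReal.ofReal (1 / (8 * q))) :
    ENNReal.ofReal q * (b + f + ENNReal.ofReal q * b) ≤ 1 / 2 :=
  calc ENNReal.ofReal q * (b + f + ENNReal.ofReal q * b)
      ≤ ENNReal.ofReal q * (ENNReal.ofReal (1 / (8 * q ^ 2)) + ENNReal.ofReal (1 / (8 * q))
          + ENNReal.ofReal q * ENNReal.ofReal (1 / (8 * q ^ 2))) := by gcongr
    _ = ENNReal.ofReal (1 / (8 * q) + 1 / 8 + 1 / 8) := by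
        rw [← ENNReal.ofReal_mul (by positivity), ← ENNReal.ofReal_add (by positivity)
          (by positivity), ← ENNReal.ofReal_add (by positivity) (by positivity),
          ← ENNReal.ofReal_mul (by positivity)]
        congr 1
        field_simp
    _ ≤ 1 / 2 := by
        rw [← ENNReal.ofReal_one, ← ENNReal.ofReal_ofNat 2, ← ENNReal.ofReal_div_of_pos two_pos]
        refine ENNReal.ofReal_le_ofReal ?_
        have hdiv : 1 / (8 * q) ≤ 1 / (8 * 1) := by gcongr
        linarith

omit [IsProbabilityMeasure ν] [SecondCountableTopology E] in
lemma momentBounds_sum_smul [Nonempty κ] (hw : ∀ v, Measurable fun z => w z v) (hm : m ≠ 0)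
    (hL : 0 ≤ L) {Q : Matrix ι ι ℝ} (hQ : Q.PosSemidef)
    (hQw : ∀ v, ENNReal.ofReal (v ⬝ᵥ Q.mulVec v) = ∫⁻ z, ‖w z v‖ₑ ^ 2 ∂ν)
    (htr : c ≤ Q.trace) {Y : κ → ι → ℝ}
    (hdiag : ∀ i, |Y i ⬝ᵥ Q.mulVec (Y i) - Q.trace| ≤ Q.trace / (4 * Fintype.card κ))
    (hoff : ∀ i j, i ≠ j →
      |((√2)⁻¹ • (Y i - Y j)) ⬝ᵥ Q.mulVec ((√2)⁻¹ • (Y i - Y j)) - Q.trace|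
        ≤ Q.trace / (4 * Fintype.card κ))
    (hmoment : ∀ i, ∫⁻ z, ‖w z (Y i)‖ₑ ^ (2 * m) ∂ν
      ≤ ENNReal.ofReal (8 * Fintype.card κ * L ^ m))
    {u : κ → ℝ} (hu : ∑ i, u i ^ 2 = 1) :
    MomentBounds (c / 2) (8 * Fintype.card κ ^ 3 * L) m (fun z => w z (∑ i, u i • Y i)) ν := by
  classical
  have hq : (1 : ℝ) ≤ Fintype.card κ := Nat.one_le_cast.2 Fintype.card_pos
  have htr₀ := hQ.trace_nonneg
  constructor
  · rw [← hQw]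
    have hlower := le_dotProduct_mulVec_sum_smul (by positivity)
      (abs_dotProduct_mulVec_sub_ite_le (Matrix.isHermitian_iff_isSymm.1 hQ.isHermitian)
        hdiag hoff) hu
    have hhalf : Q.trace - Fintype.card κ * (2 * (Q.trace / (4 * Fintype.card κ)))
        = Q.trace / 2 := by
      field_simp
      ring
    exact ENNReal.ofReal_le_ofReal (by linarith)
  · refine (lintegral_enorm_sum_smul_pow_le hw hmoment hu).trans ?_
    rw [← ENNReal.ofReal_natCast, ← ENNReal.ofReal_pow (by positivity),
      ← ENNReal.ofReal_pow (by positivity), ← ENNReal.ofReal_mul (by positivity),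
      ← ENNReal.ofReal_mul (by positivity)]
    refine ENNReal.ofReal_le_ofReal ?_
    set q : ℝ := (Fintype.card κ : ℝ)
    calc q ^ m * (q * (8 * q * L ^ m)) = q ^ m * (8 * q ^ 2 * L ^ m) := by ring
      _ ≤ q ^ m * ((8 * q ^ 2) ^ m * L ^ m) := by
        gcongr
        exact le_self_pow₀ (by nlinarith) hm
      _ = (8 * q ^ 3 * L) ^ m := by
        rw [← mul_pow, ← mul_pow]
        ring

lemma MomentBounds.exists_goodTuples [Nonempty κ] (hw : ∀ v, Measurable fun z => w z v)
    (hm : m ≠ 0) (hc : 0 < c) (hL : 0 < L)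
    (hK : ENNReal.ofReal (momentThreshold (Fintype.card κ) c L) ^ m ≤ gaussMoment m)
    (h : MomentBounds c L m (fun p : (ι → ℝ) × Ω => w p.2 p.1) ((gaussPi ι).prod ν)) :
    ∃ G : Set (κ → ι → ℝ), MeasurableSet G ∧ gaussTuple κ ι Gᶜ ≤ 1 / 2 ∧
      ∀ Y ∈ G, ∀ u : κ → ℝ, ∑ i, u i ^ 2 = 1 →
        MomentBounds (c / 2) (8 * Fintype.card κ ^ 3 * L) m
          (fun z => w z (∑ i, u i • Y i)) ν := by
  classical
  have hq : (1 : ℝ) ≤ Fintype.card κ := Nat.one_le_cast.2 Fintype.card_pos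
  set q : ℝ := (Fintype.card κ : ℝ)
  have hqENN : (Fintype.card κ : ℝ≥0∞) = ENNReal.ofReal q := (ENNReal.ofReal_natCast _).symm
  have hV := gaussSqVariance_nonneg
  obtain ⟨Q, hQ, hQw, htr, hbound⟩ := h.exists_posSemidef hw hm hL.le
    (by unfold momentThreshold; positivity) hK
  have hratio : L / momentThreshold q c L = c / (128 * q ^ 4 * (gaussSqVariance + 1)) := by
    unfold momentThreshold
    field_simp
  rw [hratio] at hbound
  have hprobB := gaussPi_trace_div_le_abs_sub_trace_le hQ hc (zero_lt_one.trans_le hq) htr hbound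
  have hprobF := h.gaussPi_le_of_moment hw hL (zero_lt_one.trans_le hq)
  obtain ⟨G, hGm, hG, hGY⟩ := exists_measurableSet_gaussTuple_compl_le (κ := κ)
    (measurableSet_le measurable_const (by simp only [dotProduct, Matrix.mulVec]; fun_prop) :
      MeasurableSet {x | Q.trace / (4 * q) ≤ |x ⬝ᵥ Q.mulVec x - Q.trace|})
    (measurableSet_le measurable_const (measurable_lintegral_enorm_pow hw (2 * m)) :
      MeasurableSet {v | ENNReal.ofReal (8 * q * L ^ m) ≤ ∫⁻ z, ‖w z v‖ₑ ^ (2 * m) ∂ν})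
  refine ⟨G, hGm, hG.trans ?_, fun Y hY u hu => ?_⟩
  · rw [hqENN]
    exact ofReal_mul_add_add_mul_le_half hq hprobB hprobF
  obtain ⟨hdiag, hmoment, hoff⟩ := hGY Y hY
  simp only [Set.mem_ofPred_eq, not_le] at hdiag hmoment hoff
  exact momentBounds_sum_smul hw hm hL.le hQ hQw htr (fun i => (hdiag i).le)
    (fun i j hij => (hoff i j hij).le) (fun i => (hmoment i).le) hu

end Conditioning

section ConditioningStep

variable {κ ι : Type} [Fintype κ] [Fintype ι]

lemma ae_gaussPi_apply_ne_zero (κ : Type) [Fintype κ] : ∀ᵐ u ∂(gaussPi κ), ∀ i, u i ≠ 0 := by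
  have := nullSingletonClass_gaussianReal (μ := 0) one_ne_zero
  have hne : ∀ᵐ x ∂(gaussianReal 0 1), x ≠ 0 := by simp [ae_iff]
  exact ae_all_iff.2 fun i => (measurePreserving_eval (fun _ : κ => gaussianReal 0 1)
    i).quasiMeasurePreserving.ae hne

lemma inv_pow_le_prod_abs_rpow_neg_half {A : ℕ} (hκ : Fintype.card κ = 2 * A)
    {u : κ → ℝ} (hu : ∀ i, u i ≠ 0) {r : ℝ} (hr : 0 < r) (hle : ∀ i, |u i| ≤ r) :
    (r ^ A)⁻¹ ≤ ∏ i, |u i| ^ (-(1 / 2) : ℝ) := by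
  have hprod : (r ^ A)⁻¹ = ∏ _i : κ, r ^ (-(1 / 2) : ℝ) := by
    rw [Finset.prod_const, Finset.card_univ, hκ, ← Real.rpow_natCast (r ^ _), ← Real.rpow_mul hr.le,
      ← Real.rpow_natCast, ← Real.rpow_neg hr.le]
    congr 1
    push_cast
    ring
  rw [hprod]
  exact Finset.prod_le_prod (fun i _ => by positivity) fun i _ =>
    Real.rpow_le_rpow_of_nonpos (abs_pos.2 (hu i)) (hle i) (by norm_num)

lemma lintegral_prod_abs_rpow_neg_half_gaussPi (κ : Type) [Fintype κ] :
    ∫⁻ u, ∏ i, ENNReal.ofReal (|u i| ^ (-(1 / 2) : ℝ)) ∂(gaussPi κ)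
      = (∫⁻ x : ℝ, ENNReal.ofReal (|x| ^ (-(1 / 2) : ℝ)) ∂(gaussianReal 0 1))
          ^ Fintype.card κ := by
  rw [gaussPi, lintegral_pi_prod_eq_prod (gaussianReal 0 1)
    (f := fun _ x => ENNReal.ofReal (|x| ^ (-(1 / 2) : ℝ))) fun _ => by fun_prop]
  simp

variable {E : Type*} [NormedAddCommGroup E]
  [InnerProductSpace ℝ E] [MeasurableSpace E] [BorelSpace E] [SecondCountableTopology E]
  {Ω : Type*} [MeasurableSpace Ω] {ν : Measure Ω}
  {w : Ω → (ι → ℝ) →ₗ[ℝ] E} {A : ℕ} {C : ℝ≥0∞}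

omit [Fintype ι] [MeasurableSpace E] [BorelSpace E] [SecondCountableTopology E] in
lemma lintegral_expNegHalf_sum_smul_le (hA : A ≠ 0)
    (hκ : Fintype.card κ = 2 * A) {Y : κ → ι → ℝ}
    (hY : ∀ u : κ → ℝ, ∑ i, u i ^ 2 = 1 → ∀ s > 0,
      ∫⁻ z, expNegHalf (s ^ 2 * ‖w z (∑ i, u i • Y i)‖ ^ 2) ∂ν
        ≤ C * ENNReal.ofReal ((s ^ A)⁻¹))
    {t : ℝ} (ht : 0 < t) {u : κ → ℝ} (hu : ∀ i, u i ≠ 0) :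
    ∫⁻ z, expNegHalf (t ^ 2 * ‖w z (∑ i, u i • Y i)‖ ^ 2) ∂ν
      ≤ (∏ i, ENNReal.ofReal (|u i| ^ (-(1 / 2) : ℝ)))
          * (C * ENNReal.ofReal ((t ^ A)⁻¹)) := by
  obtain ⟨i₀⟩ : Nonempty κ := Fintype.card_pos_iff.1 (by omega)
  have hpos : 0 < ∑ i, u i ^ 2 :=
    Finset.sum_pos (fun i _ => sq_pos_of_ne_zero (hu i)) ⟨i₀, Finset.mem_univ _⟩
  set r := √(∑ i, u i ^ 2)
  have hr : 0 < r := Real.sqrt_pos.2 hpos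
  have hr2 : r ^ 2 = ∑ i, u i ^ 2 := Real.sq_sqrt hpos.le
  have hunit : ∑ i, (r⁻¹ * u i) ^ 2 = 1 := by
    simp_rw [mul_pow]
    rw [← Finset.mul_sum, ← hr2]
    field_simp
  have hsum : ∑ i, u i • Y i = r • ∑ i, (r⁻¹ * u i) • Y i := by
    simp_rw [Finset.smul_sum, smul_smul, mul_inv_cancel_left₀ hr.ne']
  have hscale : ∀ z, t ^ 2 * ‖w z (∑ i, u i • Y i)‖ ^ 2
      = (t * r) ^ 2 * ‖w z (∑ i, (r⁻¹ * u i) • Y i)‖ ^ 2 := by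
    intro z
    rw [hsum, map_smul, norm_smul, Real.norm_eq_abs, mul_pow, sq_abs, mul_pow, mul_assoc]
  simp_rw [hscale]
  refine (hY _ hunit (t * r) (by positivity)).trans ?_
  rw [← ENNReal.ofReal_prod_of_nonneg fun i _ => by positivity, mul_left_comm,
    ← ENNReal.ofReal_mul (Finset.prod_nonneg fun i _ => by positivity)]
  gcongr
  rw [mul_pow, mul_inv, mul_comm]
  gcongr
  refine inv_pow_le_prod_abs_rpow_neg_half hκ hu hr fun i => ?_
  rw [← Real.sqrt_sq_eq_abs]
  exact Real.sqrt_le_sqrt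
    (Finset.single_le_sum (f := fun i => u i ^ 2) (fun i _ => sq_nonneg _) (Finset.mem_univ i))

omit [MeasurableSpace E] [BorelSpace E] [SecondCountableTopology E] in
lemma lintegral_expNegHalf_sq_mul_norm_sq_le [Nonempty κ] (B : (ι → ℝ) →ₗ[ℝ] E)
    {G : Set (κ → ι → ℝ)} (hG : MeasurableSet G) (hGc : gaussTuple κ ι Gᶜ ≤ 1 / 2) (t : ℝ) :
    ∫⁻ x, expNegHalf (t ^ 2 * ‖B x‖ ^ 2) ∂(gaussPi ι)
      ≤ 8 * ∫⁻ Y in G, ∫⁻ u, expNegHalf ((t / √(Fintype.card κ)) ^ 2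
          * ‖B (∑ i, u i • Y i)‖ ^ 2) ∂(gaussPi κ) ∂(gaussTuple κ ι) := by
  have hcard : (0 : ℝ) < Fintype.card κ := Nat.cast_pos.2 Fintype.card_pos
  have hnorm : ∀ x, ‖((t / √(Fintype.card κ)) • B) x‖ ^ 2
      = (t / √(Fintype.card κ)) ^ 2 * ‖B x‖ ^ 2 := fun x => by
    rw [LinearMap.smul_apply, norm_smul, mul_pow, Real.norm_eq_abs, sq_abs]
  have hscale : (Fintype.card κ : ℝ) * (t / √(Fintype.card κ)) ^ 2 = t ^ 2 := by
    rw [div_pow, Real.sq_sqrt hcard.le, mul_div_cancel₀ _ hcard.ne']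
  have := lintegral_expNegHalf_card_mul_norm_sq_le ((t / √(Fintype.card κ)) • B) hG hGc
  simpa only [hnorm, ← mul_assoc, hscale] using this

omit [Fintype ι] in
lemma measurable_expNegHalf_norm_sq_sum_smul [Finite ι] (hw : ∀ v, Measurable fun z => w z v)
    (s : ℝ) :
    Measurable fun p : (Ω × (κ → ι → ℝ)) × (κ → ℝ) =>
      expNegHalf (s ^ 2 * ‖w p.1.1 (∑ i, p.2 i • p.1.2 i)‖ ^ 2) := by
  have hswap : Measurable fun p : (Ω × (κ → ι → ℝ)) × (κ → ℝ) =>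
      (∑ i, p.2 i • p.1.2 i, p.1.1) := by fun_prop
  exact measurable_expNegHalf.comp
    ((((measurable_uncurry_linearMap hw).comp hswap).norm.pow_const 2).const_mul _)

lemma lintegral_prod_expNegHalf_le_setLIntegral [Nonempty κ] [SFinite ν]
    (hw : ∀ v, Measurable fun z => w z v) {G : Set (κ → ι → ℝ)} (hG : MeasurableSet G)
    (hGc : gaussTuple κ ι Gᶜ ≤ 1 / 2) (t : ℝ) :
    ∫⁻ p, expNegHalf (t ^ 2 * ‖w p.2 p.1‖ ^ 2) ∂((gaussPi ι).prod ν)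
      ≤ 8 * ∫⁻ Y in G, ∫⁻ u, ∫⁻ z, expNegHalf ((t / √(Fintype.card κ)) ^ 2
          * ‖w z (∑ i, u i • Y i)‖ ^ 2) ∂ν ∂(gaussPi κ) ∂(gaussTuple κ ι) := by
  set s : ℝ := t / √(Fintype.card κ)
  have hmeas₃ := measurable_expNegHalf_norm_sq_sum_smul (κ := κ) hw s
  have hmeas₂ := hmeas₃.lintegral_prod_right' (ν := gaussPi κ)
  calc ∫⁻ p, expNegHalf (t ^ 2 * ‖w p.2 p.1‖ ^ 2) ∂((gaussPi ι).prod ν)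
      = ∫⁻ z, ∫⁻ x, expNegHalf (t ^ 2 * ‖w z x‖ ^ 2) ∂(gaussPi ι) ∂ν :=
        lintegral_prod_symm _ (measurable_expNegHalf.comp
          (((measurable_uncurry_linearMap hw).norm.pow_const 2).const_mul _)).aemeasurable
    _ ≤ ∫⁻ z, 8 * ∫⁻ Y in G, ∫⁻ u, expNegHalf (s ^ 2 * ‖w z (∑ i, u i • Y i)‖ ^ 2)
          ∂(gaussPi κ) ∂(gaussTuple κ ι) ∂ν :=
        lintegral_mono fun z => lintegral_expNegHalf_sq_mul_norm_sq_le (w z) hG hGc t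
    _ = 8 * ∫⁻ Y in G, ∫⁻ u, ∫⁻ z, expNegHalf (s ^ 2 * ‖w z (∑ i, u i • Y i)‖ ^ 2) ∂ν
          ∂(gaussPi κ) ∂(gaussTuple κ ι) := by
        rw [lintegral_const_mul _ hmeas₂.lintegral_prod_right',
          lintegral_lintegral_swap hmeas₂.aemeasurable]
        congr 1
        refine lintegral_congr fun Y => lintegral_lintegral_swap (hmeas₃.comp
          (by fun_prop : Measurable fun p : Ω × (κ → ℝ) => ((p.1, Y), p.2))).aemeasurable

lemma MomentBounds.lintegral_expNegHalf_le [IsProbabilityMeasure ν]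
    (hw : ∀ v, Measurable fun z => w z v) (hA : A ≠ 0) {c L : ℝ} (hc : 0 < c) (hL : 0 < L) {m : ℕ}
    (hm : m ≠ 0) (hK : ENNReal.ofReal (momentThreshold (2 * A : ℕ) c L) ^ m ≤ gaussMoment m)
    (h : MomentBounds c L m (fun p : (ι → ℝ) × Ω => w p.2 p.1) ((gaussPi ι).prod ν))
    (hC : ∀ v, MomentBounds (c / 2) (8 * (2 * A : ℕ) ^ 3 * L) m (fun z => w z v) ν →
      ∀ s > 0, ∫⁻ z, expNegHalf (s ^ 2 * ‖w z v‖ ^ 2) ∂ν ≤ C * ENNReal.ofReal ((s ^ A)⁻¹))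
    {t : ℝ} (ht : 0 < t) :
    ∫⁻ p, expNegHalf (t ^ 2 * ‖w p.2 p.1‖ ^ 2) ∂((gaussPi ι).prod ν)
      ≤ conditioningConst A * C * ENNReal.ofReal ((t ^ A)⁻¹) := by
  have hcard := Fintype.card_fin (2 * A)
  have : Nonempty (Fin (2 * A)) := Fintype.card_pos_iff.1 (by omega)
  obtain ⟨G, hGm, hGc, hG⟩ := h.exists_goodTuples (κ := Fin (2 * A)) hw hm hc hL
    (by rwa [hcard])
  rw [hcard] at hG
  set s : ℝ := t / √(2 * A : ℕ)
  have hs : 0 < s := by positivity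
  have hscale : ENNReal.ofReal ((s ^ A)⁻¹)
      = ENNReal.ofReal (√(2 * A : ℕ) ^ A) * ENNReal.ofReal ((t ^ A)⁻¹) := by
    rw [← ENNReal.ofReal_mul (by positivity), ← div_eq_mul_inv, div_pow, inv_div]
  calc ∫⁻ p, expNegHalf (t ^ 2 * ‖w p.2 p.1‖ ^ 2) ∂((gaussPi ι).prod ν)
      ≤ 8 * ∫⁻ Y in G, ∫⁻ u, ∫⁻ z, expNegHalf (s ^ 2 * ‖w z (∑ i, u i • Y i)‖ ^ 2) ∂ν
          ∂(gaussPi (Fin (2 * A))) ∂(gaussTuple (Fin (2 * A)) ι) := by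
        simpa only [hcard] using lintegral_prod_expNegHalf_le_setLIntegral hw hGm hGc t
    _ ≤ 8 * ∫⁻ _Y in G, ∫⁻ u, (∏ i, ENNReal.ofReal (|u i| ^ (-(1 / 2) : ℝ)))
          * (C * ENNReal.ofReal ((s ^ A)⁻¹)) ∂(gaussPi (Fin (2 * A)))
          ∂(gaussTuple (Fin (2 * A)) ι) := by
        gcongr 8 * ?_
        refine setLIntegral_mono' hGm fun Y hY => lintegral_mono_ae ?_
        filter_upwards [ae_gaussPi_apply_ne_zero (Fin (2 * A))] with u hu
        exact lintegral_expNegHalf_sum_smul_le hA hcard (fun u hu => hC _ (hG Y hY u hu)) hs hu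
    _ ≤ conditioningConst A * C * ENNReal.ofReal ((t ^ A)⁻¹) := by
        rw [setLIntegral_const, lintegral_mul_const _ (by fun_prop),
          lintegral_prod_abs_rpow_neg_half_gaussPi, hcard, hscale, conditioningConst]
        refine (mul_le_mul_right (mul_le_of_le_one_right zero_le prob_le_one) 8).trans_eq ?_
        ring

end ConditioningStep

section MultilinearSmallBall

lemma continuous_multilinearMap_pi {κ ι E : Type*} [Finite κ] [Finite ι] [NormedAddCommGroup E]
    [NormedSpace ℝ E] (W : MultilinearMap ℝ (fun _ : κ => ι → ℝ) E) :
    Continuous fun Z : κ → ι → ℝ => W Z := by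
  classical
  cases nonempty_fintype κ
  cases nonempty_fintype ι
  have hW : ∀ Z, W Z = ∑ r : κ → ι, (∏ i, Z i (r i)) • W fun i => Pi.single (r i) 1 := by
    intro Z
    have hZ : Z = fun i => ∑ a, Z i a • (Pi.single a 1 : ι → ℝ) := by
      ext i a
      simp [Pi.single_apply]
    conv_lhs => rw [hZ, W.map_sum]
    simp_rw [W.map_smul_univ]
  exact (continuous_congr hW).2 (by fun_prop)

lemma measurePreserving_finCons {X : Type*} [MeasurableSpace X] (μ : Measure X) [SigmaFinite μ]
    (k : ℕ) :
    MeasurePreserving (fun p : X × (Fin k → X) => (Fin.cons p.1 p.2 : Fin (k + 1) → X))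
      (μ.prod (Measure.pi fun _ => μ)) (Measure.pi fun _ => μ) := by
  convert (measurePreserving_piFinSuccAbove (fun _ : Fin (k + 1) => μ) 0).symm using 1
  ext p
  simp [MeasurableEquiv.piFinSuccAbove]

variable {k : ℕ} {ι : Type} [Fintype ι]

lemma measurePreserving_cons_gaussTuple :
    MeasurePreserving (fun p : (ι → ℝ) × (Fin k → ι → ℝ) =>
        (Fin.cons p.1 p.2 : Fin (k + 1) → ι → ℝ))
      ((gaussPi ι).prod (gaussTuple (Fin k) ι)) (gaussTuple (Fin (k + 1)) ι) :=
  measurePreserving_finCons (gaussPi ι) k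

lemma expNegHalf_sq_mul_le (A : ℕ) {c s t : ℝ} (hc : 0 < c) (hs : c ≤ s) (ht : 0 < t) :
    expNegHalf (t ^ 2 * s)
      ≤ ENNReal.ofReal (1 + A.factorial * (2 / c) ^ A) * ENNReal.ofReal ((t ^ A)⁻¹) := by
  rw [expNegHalf, ← ENNReal.ofReal_mul (by positivity)]
  refine ENNReal.ofReal_le_ofReal ?_
  rw [← div_eq_mul_inv, le_div_iff₀ (by positivity)]
  set y := t ^ 2 * s / 2
  have hy : 0 ≤ y := by have := hc.trans_le hs; positivity
  have hcy : t ^ 2 * c / 2 ≤ y := by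
    simp only [y]
    gcongr
  have hty : t ^ A * t ^ A ≤ (2 / c) ^ A * y ^ A := by
    rw [← mul_pow, ← mul_pow]
    refine pow_le_pow_left₀ (by positivity) ?_ A
    calc t * t = 2 / c * (t ^ 2 * c / 2) := by field_simp
      _ ≤ 2 / c * y := mul_le_mul_of_nonneg_left hcy (by positivity)
  have hexp : y ^ A * Real.exp (-y) ≤ A.factorial := by
    rw [Real.exp_neg, ← div_eq_mul_inv, div_le_iff₀ (Real.exp_pos y),
      ← div_le_iff₀' (by positivity)]
    exact Real.pow_div_factorial_le_exp y hy A
  calc Real.exp (-y) * t ^ A ≤ Real.exp (-y) * (1 + t ^ A * t ^ A) := by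
        gcongr
        nlinarith [sq_nonneg (t ^ A - 1)]
    _ ≤ Real.exp (-y) * (1 + (2 / c) ^ A * y ^ A) := by gcongr
    _ = Real.exp (-y) + (y ^ A * Real.exp (-y)) * (2 / c) ^ A := by ring
    _ ≤ 1 + A.factorial * (2 / c) ^ A := by
        gcongr
        exact Real.exp_le_one_iff.2 (neg_nonpos.2 hy)

lemma MomentBounds.curryLeft {E : Type*} [NormedAddCommGroup E] [NormedSpace ℝ E]
    [MeasurableSpace E] [BorelSpace E] {W : MultilinearMap ℝ (fun _ : Fin (k + 1) => ι → ℝ) E}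
    {c L : ℝ} {m : ℕ} (h : MomentBounds c L m (fun Z => W Z) (gaussTuple (Fin (k + 1)) ι)) :
    MomentBounds c L m (fun p : (ι → ℝ) × (Fin k → ι → ℝ) => W (Fin.cons p.1 p.2))
      ((gaussPi ι).prod (gaussTuple (Fin k) ι)) := by
  have hW := (continuous_multilinearMap_pi W).enorm.measurable
  constructor
  · rw [measurePreserving_cons_gaussTuple.lintegral_comp (hW.pow_const 2)]
    exact h.1
  · rw [measurePreserving_cons_gaussTuple.lintegral_comp (hW.pow_const (2 * m))]
    exact h.2

theorem exists_lintegral_expNegHalf_multilinearMap_le {A : ℕ} (hA : A ≠ 0) (k : ℕ) {c L : ℝ}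
    (hc : 0 < c) (hL : 0 < L) :
    ∃ C < ∞, ∀ᶠ m in atTop, ∀ {E : Type*} [NormedAddCommGroup E] [InnerProductSpace ℝ E]
      [MeasurableSpace E] [BorelSpace E] [SecondCountableTopology E] {ι : Type} [Fintype ι]
      (W : MultilinearMap ℝ (fun _ : Fin k => ι → ℝ) E),
      MomentBounds c L m (fun Z => W Z) (gaussTuple (Fin k) ι) → ∀ t > 0,
        ∫⁻ Z, expNegHalf (t ^ 2 * ‖W Z‖ ^ 2) ∂(gaussTuple (Fin k) ι)
          ≤ C * ENNReal.ofReal ((t ^ A)⁻¹) := by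
  induction k generalizing c L with
  | zero =>
    refine ⟨_, ENNReal.ofReal_lt_top (r := 1 + A.factorial * (2 / c) ^ A), .of_forall ?_⟩
    intro m E _ _ _ _ _ ι _ W h t ht
    have hW : ∀ Z, W Z = W 0 := fun Z => congrArg W (Subsingleton.elim _ _)
    have hc' := h.1
    simp_rw [hW, lintegral_const, measure_univ, mul_one] at hc' ⊢
    rw [← ofReal_norm, ← ENNReal.ofReal_pow (norm_nonneg _)] at hc'
    exact expNegHalf_sq_mul_le A hc ((ENNReal.ofReal_le_ofReal_iff (by positivity)).1 hc') ht
  | succ k ih =>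
    obtain ⟨C, hC, hC'⟩ := ih (c := c / 2) (L := 8 * (2 * A : ℕ) ^ 3 * L) (by positivity)
      (by positivity)
    refine ⟨conditioningConst A * C, ENNReal.mul_lt_top (conditioningConst_lt_top A) hC, ?_⟩
    filter_upwards [hC', eventually_ne_atTop 0,
      eventually_pow_le_gaussMoment (momentThreshold (2 * A : ℕ) c L).toNNReal]
      with m ihm hm hK
    intro E _ _ _ _ _ ι _ W h t ht
    have hmeas : Measurable fun Z => expNegHalf (t ^ 2 * ‖W Z‖ ^ 2) := measurable_expNegHalf.comp
      (((continuous_multilinearMap_pi W).norm.measurable.pow_const 2).const_mul _)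
    rw [← measurePreserving_cons_gaussTuple.lintegral_comp hmeas]
    let w : (Fin k → ι → ℝ) → (ι → ℝ) →ₗ[ℝ] E := fun Z => W.toLinearMap (Fin.cons 0 Z) 0
    have hw : ∀ Z v, w Z v = W (Fin.cons v Z) := fun Z v =>
      congrArg W (Fin.update_cons_zero (α := fun _ => ι → ℝ) 0 Z v)
    simp_rw [← hw]
    refine MomentBounds.lintegral_expNegHalf_le (fun v => ?_) hA hc hL hm hK ?_ ?_ ht
    · simp_rw [hw]
      exact (continuous_multilinearMap_pi (W.curryLeft v)).measurable
    · simp_rw [hw]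
      exact h.curryLeft
    · intro v hv s hs
      simp_rw [hw] at hv ⊢
      exact ihm (W.curryLeft v) hv s hs

end MultilinearSmallBall

section VanDerCorput

variable {X Y : Type*} [MeasurableSpace X] [MeasurableSpace Y] (μ : Measure X) (ν : Measure Y)

lemma integrable_circleExp [IsFiniteMeasure μ] {φ : X → ℝ} (hφ : Measurable φ) :
    Integrable (fun x => (Circle.exp (φ x) : ℂ)) μ :=
  .of_bound (by fun_prop) 1 (.of_forall fun x => (Circle.norm_coe _).le)

lemma integral_circleExp_comp {Y : Type*} [MeasurableSpace Y] {μ : Measure X} {ν : Measure Y}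
    {f : X → Y} (hf : MeasurePreserving f μ ν) {φ : Y → ℝ} (hφ : Measurable φ) :
    ∫ x, (Circle.exp (φ (f x)) : ℂ) ∂μ = ∫ y, (Circle.exp (φ y) : ℂ) ∂ν := by
  have hexp : Measurable fun y => (Circle.exp (φ y) : ℂ) := by fun_prop
  rw [← hf.map_eq, integral_map hf.measurable.aemeasurable hexp.aestronglyMeasurable]

lemma norm_integral_circleExp_le_one [IsProbabilityMeasure μ] (φ : X → ℝ) :
    ‖∫ x, (Circle.exp (φ x) : ℂ) ∂μ‖ ≤ 1 := by
  simpa using norm_integral_le_integral_norm (μ := μ) fun x => (Circle.exp (φ x) : ℂ)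

lemma norm_integral_circleExp_sq [SFinite μ] (φ : X → ℝ) :
    ‖∫ x, (Circle.exp (φ x) : ℂ) ∂μ‖ ^ 2
      = (∫ p, (Circle.exp (φ p.1 - φ p.2) : ℂ) ∂(μ.prod μ)).re := by
  have hexp : ∀ r s : ℝ,
      (Circle.exp (r - s) : ℂ) = Circle.exp r * (starRingEnd ℂ) (Circle.exp s) := fun r s => by
    rw [Circle.exp_sub, div_eq_mul_inv, Circle.coe_mul, Circle.coe_inv_eq_conj]
  simp_rw [hexp]
  rw [integral_prod_mul (fun x => (Circle.exp (φ x) : ℂ))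
      fun x => (starRingEnd ℂ) (Circle.exp (φ x)), integral_conj, Complex.mul_conj,
    Complex.ofReal_re, Complex.normSq_eq_norm_sq]

lemma pow_integral_le_integral_pow [IsProbabilityMeasure μ] {f : X → ℝ}
    (hf : AEStronglyMeasurable f μ) (hf₀ : ∀ x, 0 ≤ f x) (hf₁ : ∀ x, f x ≤ 1) (N : ℕ) :
    (∫ x, f x ∂μ) ^ N ≤ ∫ x, f x ^ N ∂μ := by
  have hbound : ∀ N : ℕ, Integrable (fun x => f x ^ N) μ := fun N =>
    .of_bound (hf.pow N) 1 <| .of_forall fun x => by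
      rw [Real.norm_of_nonneg (pow_nonneg (hf₀ x) N)]
      exact pow_le_one₀ (hf₀ x) (hf₁ x)
  exact (convexOn_pow N).map_integral_le (by fun_prop) isClosed_Ici (.of_forall hf₀)
    (by simpa using hbound 1) (hbound N)

lemma norm_integral_circleExp_prod_pow_le [IsProbabilityMeasure μ] [IsProbabilityMeasure ν]
    {Φ : X × Y → ℝ} (hΦ : Measurable Φ) (N : ℕ) :
    ‖∫ p, (Circle.exp (Φ p) : ℂ) ∂(μ.prod ν)‖ ^ (2 * N)
      ≤ ∫ q, ‖∫ z, (Circle.exp (Φ (q.1, z) - Φ (q.2, z)) : ℂ) ∂ν‖ ^ N ∂(μ.prod μ) := by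
  have hdiff : Measurable fun r : (X × X) × Y => Φ (r.1.1, r.2) - Φ (r.1.2, r.2) := by fun_prop
  have hdiffI := integrable_circleExp ((μ.prod μ).prod ν) hdiff
  have hΦI := integrable_circleExp (μ.prod ν) hΦ
  have hinner : AEStronglyMeasurable (fun z => ‖∫ x, (Circle.exp (Φ (x, z)) : ℂ) ∂μ‖) ν :=
    hΦI.swap.aestronglyMeasurable.integral_prod_right'.norm
  rw [pow_mul]
  refine (pow_le_pow_left₀ (by positivity) ?_ N).trans <|
    pow_integral_le_integral_pow _ hdiffI.aestronglyMeasurable.integral_prod_right'.norm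
      (fun _ => norm_nonneg _) (fun _ => norm_integral_circleExp_le_one ν _) N
  rw [integral_prod_symm _ hΦI]
  calc ‖∫ z, ∫ x, (Circle.exp (Φ (x, z)) : ℂ) ∂μ ∂ν‖ ^ 2
      ≤ (∫ z, ‖∫ x, (Circle.exp (Φ (x, z)) : ℂ) ∂μ‖ ∂ν) ^ 2 := by
        gcongr
        exact norm_integral_le_integral_norm _
    _ ≤ ∫ z, ‖∫ x, (Circle.exp (Φ (x, z)) : ℂ) ∂μ‖ ^ 2 ∂ν :=
        pow_integral_le_integral_pow _ hinner (fun _ => norm_nonneg _)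
          (fun _ => norm_integral_circleExp_le_one μ _) 2
    _ = ∫ z, (∫ q, (Circle.exp (Φ (q.1, z) - Φ (q.2, z)) : ℂ) ∂(μ.prod μ)).re ∂ν := by
        simp_rw [norm_integral_circleExp_sq]
    _ = (∫ z, ∫ q, (Circle.exp (Φ (q.1, z) - Φ (q.2, z)) : ℂ) ∂(μ.prod μ) ∂ν).re :=
        integral_re (𝕜 := ℂ) hdiffI.integral_prod_right
    _ = (∫ q, ∫ z, (Circle.exp (Φ (q.1, z) - Φ (q.2, z)) : ℂ) ∂ν ∂(μ.prod μ)).re := by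
        rw [integral_integral_swap (by exact hdiffI.swap)]
    _ ≤ ‖∫ q, ∫ z, (Circle.exp (Φ (q.1, z) - Φ (q.2, z)) : ℂ) ∂ν ∂(μ.prod μ)‖ :=
        Complex.re_le_norm _
    _ ≤ _ := norm_integral_le_integral_norm _

/-- The mixed difference of `Φ` over the box with edges `Q j`: the alternating sum of `Φ` over the
vertices, where `ε j` selects the first or the second end of the `j`-th edge and each second end
contributes a sign. -/
def boxDiff {κ X : Type*} [Fintype κ] [DecidableEq κ] (Φ : (κ → X) → ℝ) (Q : κ → X × X) : ℝ :=
  ∑ ε : κ → Bool, (∏ j, if ε j then (1 : ℝ) else -1) *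
    Φ fun j => if ε j then (Q j).1 else (Q j).2

lemma measurable_boxVertex {κ : Type*} (ε : κ → Bool) :
    Measurable fun (Q : κ → X × X) j => if ε j then (Q j).1 else (Q j).2 :=
  measurable_pi_lambda _ fun j => by split_ifs <;> fun_prop

lemma measurable_boxDiff {κ : Type*} [Fintype κ] [DecidableEq κ] {Φ : (κ → X) → ℝ}
    (hΦ : Measurable Φ) : Measurable (boxDiff Φ) :=
  Finset.measurable_fun_sum _ fun ε _ => (hΦ.comp (measurable_boxVertex ε)).const_mul _

lemma boxDiff_cons {X : Type*} {d : ℕ} (Φ : (Fin (d + 1) → X) → ℝ) (q : X × X)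
    (Q : Fin d → X × X) :
    boxDiff Φ (Fin.cons q Q)
      = boxDiff (fun Z => Φ (Fin.cons q.1 Z) - Φ (Fin.cons q.2 Z)) Q := by
  have hvertex : ∀ (b : Bool) (ε : Fin d → Bool),
      (fun j => if (Fin.cons b ε : Fin (d + 1) → Bool) j
          then ((Fin.cons q Q : Fin (d + 1) → X × X) j).1
          else ((Fin.cons q Q : Fin (d + 1) → X × X) j).2)
        = (Fin.cons (if b then q.1 else q.2) fun j => if ε j then (Q j).1 else (Q j).2 :
          Fin (d + 1) → X) := by
    intro b ε
    ext j
    cases j using Fin.cases <;> simp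
  simp_rw [boxDiff, ← (Fin.consEquiv fun _ => Bool).sum_comp, Fintype.sum_prod_type_right,
    Fintype.sum_bool, Fin.consEquiv_apply, hvertex, Fin.prod_univ_succ, Fin.cons_zero,
    Fin.cons_succ]
  exact Finset.sum_congr rfl fun ε _ => by
    simp only [if_true, Bool.false_eq_true, if_false]
    ring

theorem norm_integral_circleExp_pi_pow_le [IsProbabilityMeasure μ] (d : ℕ)
    {Φ : (Fin (d + 1) → X) → ℝ} (hΦ : Measurable Φ) :
    ‖∫ Z, (Circle.exp (Φ Z) : ℂ) ∂(Measure.pi fun _ => μ)‖ ^ 2 ^ (d + 1)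
      ≤ (∫ Q, (Circle.exp (boxDiff Φ Q) : ℂ) ∂(Measure.pi fun _ => μ.prod μ)).re := by
  induction d with
  | zero =>
    have hmp := measurePreserving_arrowProdEquivProdArrow X X (Fin 1) (fun _ => μ) fun _ => μ
    simp only [zero_add, pow_one]
    rw [norm_integral_circleExp_sq, ← hmp.integral_comp']
    refine le_of_eq (congrArg Complex.re (integral_congr_ae (.of_forall fun Q => ?_)))
    simp only [boxDiff, ← (Equiv.funUnique (Fin 1) Bool).symm.sum_comp]
    simp [MeasurableEquiv.arrowProdEquivProdArrow, Equiv.arrowProdEquivProdArrow, sub_eq_add_neg]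
  | succ d ih =>
    have hcons := measurePreserving_finCons μ (d + 1)
    have hcons' := measurePreserving_finCons (μ.prod μ) (d + 1)
    have hΦ' : Measurable fun p : X × (Fin (d + 1) → X) => Φ (Fin.cons p.1 p.2) :=
      hΦ.comp hcons.measurable
    have hD := (measurable_boxDiff hΦ)
    have hI := integrable_circleExp ((μ.prod μ).prod (Measure.pi fun _ => μ.prod μ))
      (hD.comp hcons'.measurable)
    rw [← hcons.map_eq, integral_map hcons.aemeasurable (by fun_prop), pow_succ']
    refine (norm_integral_circleExp_prod_pow_le _ _ hΦ' _).trans ?_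
    rw [← hcons'.map_eq, integral_map hcons'.aemeasurable (by fun_prop)]
    calc ∫ q, ‖∫ Z, (Circle.exp (Φ (Fin.cons q.1 Z) - Φ (Fin.cons q.2 Z)) : ℂ)
          ∂(Measure.pi fun _ => μ)‖ ^ 2 ^ (d + 1) ∂(μ.prod μ)
        ≤ ∫ q, (∫ Q, (Circle.exp (boxDiff Φ (Fin.cons q Q)) : ℂ)
            ∂(Measure.pi fun _ => μ.prod μ)).re ∂(μ.prod μ) := by
          refine integral_mono_of_nonneg (.of_forall fun q => by positivity)
            hI.integral_prod_left.re (.of_forall fun q => ?_)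
          simp_rw [boxDiff_cons]
          exact ih ((hΦ'.comp measurable_prodMk_left).sub (hΦ'.comp measurable_prodMk_left))
      _ = (∫ q, ∫ Q, (Circle.exp (boxDiff Φ (Fin.cons q Q)) : ℂ)
            ∂(Measure.pi fun _ => μ.prod μ) ∂(μ.prod μ)).re :=
          integral_re (𝕜 := ℂ) hI.integral_prod_left
      _ = _ := congrArg Complex.re (integral_prod _ hI).symm

end VanDerCorput

section BoxDiff

variable {κ X : Type*} [Fintype κ] [DecidableEq κ]

lemma boxDiff_sum {α : Type*} (s : Finset α) (Φ : α → (κ → X) → ℝ) (Q : κ → X × X) :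
    boxDiff (fun Z => ∑ r ∈ s, Φ r Z) Q = ∑ r ∈ s, boxDiff (Φ r) Q := by
  simp_rw [boxDiff, Finset.mul_sum]
  exact Finset.sum_comm

lemma boxDiff_const_mul (c : ℝ) (Φ : (κ → X) → ℝ) (Q : κ → X × X) :
    boxDiff (fun Z => c * Φ Z) Q = c * boxDiff Φ Q := by
  simp_rw [boxDiff, Finset.mul_sum, mul_left_comm]

lemma boxDiff_eq_zero_of_forall_update {Φ : (κ → X) → ℝ} (j : κ)
    (hΦ : ∀ Z x, Φ (Function.update Z j x) = Φ Z) (Q : κ → X × X) : boxDiff Φ Q = 0 := by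
  refine Finset.sum_involution (fun ε _ => Function.update ε j !ε j) (fun ε _ => ?_)
    (fun ε _ _ h => by simpa using congrFun h j) (fun _ _ => Finset.mem_univ _)
    fun ε _ => by simp
  have hvertex : Φ (fun i => if Function.update ε j (!ε j) i then (Q i).1 else (Q i).2)
      = Φ fun i => if ε i then (Q i).1 else (Q i).2 := by
    rw [← hΦ (fun i => if ε i then (Q i).1 else (Q i).2) (if !ε j then (Q j).1 else (Q j).2)]
    congr 1
    ext i
    rcases eq_or_ne i j with rfl | hij <;> simp [*]
  have hsign : ∏ i, (if Function.update ε j (!ε j) i then (1 : ℝ) else -1)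
      = -∏ i, if ε i then (1 : ℝ) else -1 := by
    rw [Fintype.prod_eq_mul_prod_compl j, Fintype.prod_eq_mul_prod_compl j, ← neg_mul]
    congr 1
    · cases ε j <;> simp
    · refine Finset.prod_congr rfl fun i hi => ?_
      rw [Function.update_of_ne (by simpa using hi)]
  rw [hvertex, hsign]
  ring

lemma boxDiff_multilinearMap {V : Type*} [AddCommGroup V] [Module ℝ V]
    (g : MultilinearMap ℝ (fun _ : κ => V) ℝ) (Q : κ → V × V) :
    boxDiff (fun Z => g Z) Q = g fun j => (Q j).1 - (Q j).2 := by
  have hQ : (fun j => (Q j).1 - (Q j).2)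
      = fun j => ∑ b : Bool, (if b then (1 : ℝ) else -1) • if b then (Q j).1 else (Q j).2 := by
    ext j
    simp [sub_eq_add_neg]
  rw [hQ, g.map_sum]
  simp_rw [g.map_smul_univ, smul_eq_mul, boxDiff]

variable [MeasurableSpace X] (μ : Measure X) [IsProbabilityMeasure μ]

omit [DecidableEq κ] in
lemma measurePreserving_boxVertex (ε : κ → Bool) :
    MeasurePreserving (fun (Q : κ → X × X) j => if ε j then (Q j).1 else (Q j).2)
      (Measure.pi fun _ => μ.prod μ) (Measure.pi fun _ => μ) := by
  refine measurePreserving_pi (f := fun j (q : X × X) => if ε j then q.1 else q.2) _ _ fun j => ?_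
  cases ε j
  · exact measurePreserving_snd
  · exact measurePreserving_fst

lemma lintegral_enorm_boxDiff_pow_le {Φ : (κ → X) → ℝ} (hΦ : Measurable Φ) (M : ℕ) :
    ∫⁻ Q, ‖boxDiff Φ Q‖ₑ ^ M ∂(Measure.pi fun _ => μ.prod μ)
      ≤ (2 ^ (M + 1)) ^ Fintype.card κ * ∫⁻ Z, ‖Φ Z‖ₑ ^ M ∂(Measure.pi fun _ => μ) := by
  let vertex : (κ → Bool) → (κ → X × X) → κ → X := fun ε Q j =>
    if ε j then (Q j).1 else (Q j).2
  have hsum : ∀ Q, ‖boxDiff Φ Q‖ₑ ≤ ∑ ε, ‖Φ (vertex ε Q)‖ₑ := fun Q => by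
    refine (enorm_sum_le _ _).trans (Finset.sum_le_sum fun ε _ => ?_)
    have hsign : ‖∏ j, if ε j then (1 : ℝ) else -1‖ = 1 := by
      rw [norm_prod]
      exact Finset.prod_eq_one fun j _ => by split_ifs <;> simp
    rw [enorm_mul, ← ofReal_norm, hsign, ENNReal.ofReal_one, one_mul]
  calc ∫⁻ Q, ‖boxDiff Φ Q‖ₑ ^ M ∂(Measure.pi fun _ => μ.prod μ)
      ≤ ∫⁻ Q, (Fintype.card (κ → Bool) : ℝ≥0∞) ^ M * ∑ ε, ‖Φ (vertex ε Q)‖ₑ ^ M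
          ∂(Measure.pi fun _ => μ.prod μ) := by
        gcongr with Q
        exact (pow_le_pow_left' (hsum Q) M).trans (pow_sum_le_card_pow_mul_sum_pow _ M)
    _ = (Fintype.card (κ → Bool) : ℝ≥0∞) ^ M *
          ∑ ε, ∫⁻ Q, ‖Φ (vertex ε Q)‖ₑ ^ M ∂(Measure.pi fun _ => μ.prod μ) := by
        rw [lintegral_const_mul' _ _ (by simp), lintegral_finsetSum]
        exact fun ε _ =>
          (hΦ.comp (measurePreserving_boxVertex μ ε).measurable).enorm.pow_const M
    _ = (Fintype.card (κ → Bool) : ℝ≥0∞) ^ M *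
          ∑ _ε : κ → Bool, ∫⁻ Z, ‖Φ Z‖ₑ ^ M ∂(Measure.pi fun _ => μ) := by
        congr! 2 with ε
        exact (measurePreserving_boxVertex μ ε).lintegral_comp (hΦ.enorm.pow_const M)
    _ = _ := by
        simp only [Finset.sum_const, Finset.card_univ, Fintype.card_pi, Fintype.card_bool,
          Finset.prod_const, nsmul_eq_mul]
        push_cast
        ring

end BoxDiff

section Polarization

variable {ι : Type*} [Fintype ι]

/-- The homogeneous multilinear polynomial of degree `d` with coefficients `a S`. -/
def multilinearPoly (d : ℕ) (a : Finset ι → ℝ) (x : ι → ℝ) : ℝ :=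
  ∑ S ∈ Finset.powersetCard d Finset.univ, a S * ∏ i ∈ S, x i

/-- The symmetric `d`-linear form whose value on the diagonal is `d !` times
`multilinearPoly d a`; injective index maps `Fin d ↪ ι` enumerate the orderings of the
`d`-element sets. -/
noncomputable def polarForm (d : ℕ) (a : Finset ι → ℝ) :
    MultilinearMap ℝ (fun _ : Fin d => ι → ℝ) ℝ :=
  ∑ f : Fin d ↪ ι, a (Finset.univ.map f) •
    (MultilinearMap.mkPiAlgebra ℝ (Fin d) ℝ).compLinearMap fun j => LinearMap.proj (f j)

variable (d : ℕ) (a : Finset ι → ℝ)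

@[fun_prop]
lemma continuous_multilinearPoly : Continuous (multilinearPoly d a) := by
  unfold multilinearPoly
  fun_prop

lemma multilinearPoly_smul (s : ℝ) (x : ι → ℝ) :
    multilinearPoly d a (s • x) = s ^ d * multilinearPoly d a x := by
  rw [multilinearPoly, multilinearPoly, Finset.mul_sum]
  refine Finset.sum_congr rfl fun S hS => ?_
  rw [← (Finset.mem_powersetCard.1 hS).2]
  simp only [Pi.smul_apply, smul_eq_mul, Finset.prod_mul_distrib, Finset.prod_const]
  ring

lemma polarForm_apply (Z : Fin d → ι → ℝ) :
    polarForm d a Z = ∑ f : Fin d ↪ ι, a (Finset.univ.map f) * ∏ j, Z j (f j) := by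
  simp [polarForm, sum_apply, smul_apply]

lemma polarForm_comp_perm (Z : Fin d → ι → ℝ) (σ : Equiv.Perm (Fin d)) :
    polarForm d a (Z ∘ σ) = polarForm d a Z := by
  rw [polarForm_apply, polarForm_apply]
  refine Fintype.sum_equiv (σ.embeddingCongr (Equiv.refl ι)) _ _ fun f => ?_
  have hf : ∀ j, σ.embeddingCongr (Equiv.refl ι) f (σ j) = f j := fun j =>
    congrArg f (σ.symm_apply_apply j)
  congr 1
  · conv_rhs => rw [← Finset.map_univ_equiv σ, Finset.map_map]
    exact congrArg (a <| Finset.univ.map ·) (DFunLike.ext _ _ fun j => (hf j).symm)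
  · exact Fintype.prod_equiv σ _ _ fun j => by rw [hf, Function.comp_apply]

lemma card_embedding_map_univ_eq [DecidableEq ι] {S : Finset ι} (hS : S.card = d) :
    (Finset.univ.filter fun f : Fin d ↪ ι => Finset.univ.map f = S).card = d.factorial := by
  have hcard : Fintype.card (Fin d ↪ S) = d.factorial := by
    simp [Fintype.card_embedding_eq, hS, Nat.descFactorial_self]
  rw [← hcard, ← Finset.card_univ]
  symm
  refine Finset.card_bij (fun g _ => g.trans (Function.Embedding.subtype _)) (fun g _ => ?_)
    (fun g _ g' _ h => ?_) fun f hf => ?_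
  · rw [Finset.mem_filter_univ]
    refine Finset.eq_of_subset_of_card_le (fun i hi => ?_) (by simp [hS])
    obtain ⟨j, -, rfl⟩ := Finset.mem_map.1 hi
    exact (g j).2
  · ext j
    exact DFunLike.congr_fun h j
  · rw [Finset.mem_filter_univ] at hf
    exact ⟨f.codRestrict S fun j => hf ▸ Finset.mem_map_of_mem f (Finset.mem_univ j),
      Finset.mem_univ _, rfl⟩

lemma sum_embedding_map_univ (g : Finset ι → ℝ) :
    ∑ f : Fin d ↪ ι, g (Finset.univ.map f)
      = d.factorial * ∑ S ∈ Finset.powersetCard d Finset.univ, g S := by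
  classical
  have hmaps : ∀ f ∈ (Finset.univ : Finset (Fin d ↪ ι)),
      Finset.univ.map f ∈ Finset.powersetCard d Finset.univ := fun f _ =>
    Finset.mem_powersetCard.2 ⟨Finset.subset_univ _, by simp⟩
  rw [← Finset.sum_fiberwise_of_maps_to' hmaps, Finset.mul_sum]
  refine Finset.sum_congr rfl fun S hS => ?_
  rw [Finset.sum_const, card_embedding_map_univ_eq d (Finset.mem_powersetCard.1 hS).2,
    nsmul_eq_mul]

lemma polarForm_diag (x : ι → ℝ) :
    polarForm d a (fun _ => x) = d.factorial * multilinearPoly d a x := by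
  rw [polarForm_apply, multilinearPoly, ← sum_embedding_map_univ]
  exact Finset.sum_congr rfl fun f _ => by rw [Finset.prod_map]

lemma boxDiff_polarForm_comp (φ : Fin d → Fin d) (Q : Fin d → (ι → ℝ) × (ι → ℝ))
    [Decidable (Function.Bijective φ)] :
    boxDiff (fun Z => polarForm d a (Z ∘ φ)) Q
      = if Function.Bijective φ then polarForm d a fun j => (Q j).1 - (Q j).2 else 0 := by
  split_ifs with hφ
  · rw [← boxDiff_multilinearMap]
    exact congrArg (boxDiff · Q) (funext fun Z => polarForm_comp_perm d a Z (.ofBijective φ hφ))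
  · obtain ⟨j, hj⟩ : ∃ j, ∀ i, φ i ≠ j := by
      simpa [Function.Surjective] using mt Finite.surjective_iff_bijective.1 hφ
    refine boxDiff_eq_zero_of_forall_update j (fun Z x => ?_) Q
    exact congrArg _ (funext fun i => Function.update_of_ne (hj i) _ _)

lemma boxDiff_multilinearPoly_sum (Q : Fin d → (ι → ℝ) × (ι → ℝ)) :
    boxDiff (fun Z => multilinearPoly d a (∑ j, Z j)) Q
      = polarForm d a fun j => (Q j).1 - (Q j).2 := by
  classical
  have hfact : (d.factorial : ℝ) ≠ 0 := by exact_mod_cast d.factorial_ne_zero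
  have hexpand : ∀ Z : Fin d → ι → ℝ, d.factorial * multilinearPoly d a (∑ j, Z j)
      = ∑ φ : Fin d → Fin d, polarForm d a (Z ∘ φ) := fun Z => by
    rw [← polarForm_diag, MultilinearMap.map_sum (polarForm d a) fun _ j => Z j]
    rfl
  refine mul_left_cancel₀ hfact ?_
  have hcard : (Finset.univ.filter fun φ : Fin d → Fin d => φ.Bijective).card = d.factorial := by
    let e : {φ : Fin d → Fin d // φ.Bijective} ≃ Equiv.Perm (Fin d) :=
      ⟨fun φ => .ofBijective φ.1 φ.2, fun σ => ⟨σ, σ.bijective⟩, fun _ => rfl,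
        fun _ => Equiv.ext fun _ => rfl⟩
    rw [← Fintype.card_subtype, Fintype.card_congr e, Fintype.card_perm, Fintype.card_fin]
  simp_rw [← boxDiff_const_mul, hexpand, boxDiff_sum, boxDiff_polarForm_comp]
  rw [← Finset.sum_filter, Finset.sum_const, hcard, nsmul_eq_mul]

end Polarization

section SecondMoments

lemma lintegral_enorm_sum_mul_sq {α κ : Type*} [MeasurableSpace α] [Fintype κ] [DecidableEq κ]
    {μ : Measure α} {u : κ → α → ℝ} (hint : ∀ q r, Integrable (fun x => u q x * u r x) μ)
    (horth : ∀ q r, ∫ x, u q x * u r x ∂μ = if q = r then 1 else 0) (b : κ → ℝ) :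
    ∫⁻ x, ‖∑ q, b q * u q x‖ₑ ^ 2 ∂μ = ENNReal.ofReal (∑ q, b q ^ 2) := by
  have hexpand : ∀ x, (∑ q, b q * u q x) ^ 2
      = ∑ q, ∑ r, (b q * b r) * (u q x * u r x) := fun x => by
    simp_rw [sq, Finset.sum_mul_sum, mul_mul_mul_comm]
  have hterm : ∀ q, Integrable (fun x => ∑ r, (b q * b r) * (u q x * u r x)) μ := fun q =>
    integrable_finsetSum _ fun r _ => (hint q r).const_mul _
  have hsq : Integrable (fun x => (∑ q, b q * u q x) ^ 2) μ := by
    simp_rw [hexpand]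
    exact integrable_finsetSum _ fun q _ => hterm q
  simp_rw [← ofReal_norm, ← ENNReal.ofReal_pow (norm_nonneg _), Real.norm_eq_abs, sq_abs]
  rw [← ofReal_integral_eq_lintegral_ofReal hsq (ae_of_all _ fun x => sq_nonneg _)]
  simp_rw [hexpand]
  rw [integral_finsetSum _ fun q _ => hterm q]
  simp_rw [integral_finsetSum _ fun r _ => (hint _ r).const_mul _, integral_const_mul, horth, sq]
  simp

lemma gaussMoment_one : gaussMoment 1 = 1 := by
  have hint : Integrable (fun x : ℝ => x * x) (gaussianReal 0 1) := by
    simpa only [sq] using memLp_sq_gaussianReal.integrable one_le_two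
  have h := lintegral_enorm_sum_mul_sq (κ := Unit) (u := fun _ x => x) (fun _ _ => hint)
    (fun _ _ => by simpa [sq] using integral_sq_gaussianReal) fun _ => 1
  simpa [gaussMoment] using h

variable {ι : Type} [Fintype ι]

lemma prod_mul_prod_eq_prod_pow [DecidableEq ι] (S T : Finset ι) (x : ι → ℝ) :
    (∏ i ∈ S, x i) * ∏ i ∈ T, x i
      = ∏ i, x i ^ ((if i ∈ S then 1 else 0) + if i ∈ T then 1 else 0) := by
  simp_rw [pow_add, Finset.prod_mul_distrib, pow_ite, pow_one, pow_zero, Finset.prod_ite_mem,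
    Finset.univ_inter]

lemma integrable_pow_gaussianReal {p : ℕ} (hp : p ≤ 2) :
    Integrable (fun x : ℝ => x ^ p) (gaussianReal 0 1) := by
  interval_cases p
  · simp
  · exact ((memLp_id_gaussianReal (μ := 0) (v := 1) 1).integrable le_rfl).congr
      (.of_forall fun x => (pow_one x).symm)
  · exact memLp_sq_gaussianReal.integrable one_le_two

lemma integrable_prod_mul_prod_gaussPi (S T : Finset ι) :
    Integrable (fun x : ι → ℝ => (∏ i ∈ S, x i) * ∏ i ∈ T, x i) (gaussPi ι) := by
  classical
  simp_rw [prod_mul_prod_eq_prod_pow]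
  exact Integrable.fintype_prod fun i => integrable_pow_gaussianReal (by split_ifs <;> simp)

lemma integral_prod_mul_prod_gaussPi [DecidableEq ι] (S T : Finset ι) :
    ∫ x, (∏ i ∈ S, x i) * ∏ i ∈ T, x i ∂(gaussPi ι) = if S = T then 1 else 0 := by
  simp_rw [prod_mul_prod_eq_prod_pow, gaussPi]
  rw [integral_fintype_prod_eq_prod
    (f := fun i (y : ℝ) => y ^ ((if i ∈ S then 1 else 0) + if i ∈ T then 1 else 0))]
  split_ifs with hST
  · refine Finset.prod_eq_one fun i _ => ?_
    subst hST
    split_ifs <;> simp [integral_sq_gaussianReal]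
  · obtain ⟨i, hi⟩ : ∃ i, ¬(i ∈ S ↔ i ∈ T) := by simpa [Finset.ext_iff] using hST
    refine Finset.prod_eq_zero (Finset.mem_univ i) ?_
    have hexponent : ((if i ∈ S then 1 else 0) + if i ∈ T then 1 else 0) = 1 := by
      split_ifs <;> simp_all
    rw [hexponent]
    simp

variable (d : ℕ) (a : Finset ι → ℝ)

lemma lintegral_enorm_multilinearPoly_sq :
    ∫⁻ x, ‖multilinearPoly d a x‖ₑ ^ 2 ∂(gaussPi ι)
      = ENNReal.ofReal (∑ S ∈ Finset.powersetCard d Finset.univ, a S ^ 2) := by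
  classical
  have h := lintegral_enorm_sum_mul_sq (μ := gaussPi ι)
    (u := fun (S : Finset.powersetCard d (Finset.univ : Finset ι)) x => ∏ i ∈ S.1, x i)
    (fun S T => integrable_prod_mul_prod_gaussPi S.1 T.1)
    (fun S T => by simp only [integral_prod_mul_prod_gaussPi, Subtype.ext_iff]) fun S => a S
  simp only [multilinearPoly, ← Finset.sum_coe_sort (Finset.powersetCard d Finset.univ)]
  exact h

lemma lintegral_enorm_polarForm_sq :
    ∫⁻ Z, ‖polarForm d a Z‖ₑ ^ 2 ∂(gaussTuple (Fin d) ι)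
      = ENNReal.ofReal (d.factorial * ∑ S ∈ Finset.powersetCard d Finset.univ, a S ^ 2) := by
  classical
  rw [← sum_embedding_map_univ d fun S => a S ^ 2]
  simp_rw [polarForm_apply]
  refine lintegral_enorm_sum_mul_sq (μ := gaussTuple (Fin d) ι)
    (u := fun (f : Fin d ↪ ι) Z => ∏ j, Z j (f j))
    (fun f g => ?_) (fun f g => ?_) fun f => a (Finset.univ.map f)
  · simp_rw [← Finset.prod_mul_distrib]
    exact Integrable.fintype_prod (f := fun j (y : ι → ℝ) => y (f j) * y (g j)) fun j => by
      simpa using integrable_prod_mul_prod_gaussPi {f j} {g j}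
  · have hcoord : ∀ j, ∫ y, y (f j) * y (g j) ∂(gaussPi ι) = if f j = g j then 1 else 0 :=
      fun j => by simpa using integral_prod_mul_prod_gaussPi {f j} {g j}
    simp_rw [← Finset.prod_mul_distrib, gaussTuple]
    rw [integral_fintype_prod_eq_prod (f := fun j (y : ι → ℝ) => y (f j) * y (g j))]
    simp_rw [hcoord, Finset.prod_ite_zero, Finset.prod_const_one, DFunLike.ext_iff]
    simp

end SecondMoments

section Decoupling

variable {ι : Type} [Fintype ι] {d : ℕ}

lemma measurePreserving_normalized_sum (hd : d ≠ 0) :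
    MeasurePreserving (fun Z : Fin d → ι → ℝ => ∑ j, (√d)⁻¹ • Z j)
      (gaussTuple (Fin d) ι) (gaussPi ι) :=
  measurePreserving_sum_smul_gaussTuple (u := fun _ => (√d)⁻¹) (by simp [hd])

lemma measurePreserving_normalized_sub :
    MeasurePreserving (fun (Q : Fin d → (ι → ℝ) × (ι → ℝ)) j => (√2)⁻¹ • ((Q j).1 - (Q j).2))
      (Measure.pi fun _ => (gaussPi ι).prod (gaussPi ι)) (gaussTuple (Fin d) ι) :=
  measurePreserving_pi (f := fun _ (q : (ι → ℝ) × (ι → ℝ)) => (√2)⁻¹ • (q.1 - q.2)) _ _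
    fun _ => measurePreserving_smul_sub_gaussPi

/-- The factor relating the polar form of a multilinear polynomial `P` to the iterated difference
of `Z ↦ P (∑ j, Z j / √d)`, when the sum and the differences are normalized so as to preserve the
standard Gaussian law. -/
noncomputable def polarScale (d : ℕ) : ℝ := ((√d)⁻¹ * √2) ^ d

lemma polarScale_pos (hd : d ≠ 0) : 0 < polarScale d := by
  unfold polarScale
  positivity

variable (d) (a : Finset ι → ℝ)

lemma boxDiff_multilinearPoly_normalized_sum (Q : Fin d → (ι → ℝ) × (ι → ℝ)) :
    boxDiff (fun Z => multilinearPoly d a (∑ j, (√d)⁻¹ • Z j)) Q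
      = polarScale d * polarForm d a fun j => (√2)⁻¹ • ((Q j).1 - (Q j).2) := by
  simp_rw [← Finset.smul_sum, multilinearPoly_smul]
  rw [boxDiff_const_mul, boxDiff_multilinearPoly_sum, (polarForm d a).map_smul_univ, polarScale,
    Finset.prod_const, Finset.card_univ, Fintype.card_fin, smul_eq_mul, ← mul_assoc, ← mul_pow,
    mul_assoc, mul_inv_cancel₀ (by positivity), mul_one]

variable {d} in
lemma pow_mul_lintegral_enorm_polarForm_pow_le (hd : d ≠ 0) (M : ℕ) :
    ENNReal.ofReal (polarScale d) ^ M * ∫⁻ Z, ‖polarForm d a Z‖ₑ ^ M ∂(gaussTuple (Fin d) ι)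
      ≤ (2 ^ (M + 1)) ^ d * ∫⁻ x, ‖multilinearPoly d a x‖ₑ ^ M ∂(gaussPi ι) := by
  have hform : Measurable fun Z => polarForm d a Z :=
    (continuous_multilinearMap_pi _).measurable
  have hbox := lintegral_enorm_boxDiff_pow_le (gaussPi ι)
    (Φ := fun Z : Fin d → ι → ℝ => multilinearPoly d a (∑ j, (√d)⁻¹ • Z j))
    (Continuous.measurable (by fun_prop)) M
  rw [Fintype.card_fin] at hbox
  calc ENNReal.ofReal (polarScale d) ^ M * ∫⁻ Z, ‖polarForm d a Z‖ₑ ^ M ∂(gaussTuple (Fin d) ι)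
      = ∫⁻ Z, ‖polarScale d * polarForm d a Z‖ₑ ^ M ∂(gaussTuple (Fin d) ι) := by
        rw [← lintegral_const_mul _ (by fun_prop), ← Real.enorm_eq_ofReal (polarScale_pos hd).le]
        simp_rw [enorm_mul, mul_pow]
    _ = ∫⁻ Q, ‖boxDiff (fun Z => multilinearPoly d a (∑ j, (√d)⁻¹ • Z j)) Q‖ₑ ^ M
          ∂(Measure.pi fun _ => (gaussPi ι).prod (gaussPi ι)) := by
        simp_rw [boxDiff_multilinearPoly_normalized_sum]
        exact (measurePreserving_normalized_sub.lintegral_comp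
          (f := fun Z => ‖polarScale d * polarForm d a Z‖ₑ ^ M) (by fun_prop)).symm
    _ ≤ _ := hbox
    _ = _ := by
        congr 1
        exact (measurePreserving_normalized_sum hd).lintegral_comp
          (f := fun x => ‖multilinearPoly d a x‖ₑ ^ M) (by fun_prop)

lemma norm_integral_circleExp_multilinearPoly_pow_le (k : ℕ) (t : ℝ) :
    ‖∫ x, (Circle.exp (t * multilinearPoly (k + 1) a x) : ℂ) ∂(gaussPi ι)‖ ^ 2 ^ (k + 1)
      ≤ (∫ Z, (Circle.exp (t * polarScale (k + 1) * polarForm (k + 1) a Z) : ℂ)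
          ∂(gaussTuple (Fin (k + 1)) ι)).re := by
  have hform : Measurable fun Z => polarForm (k + 1) a Z :=
    (continuous_multilinearMap_pi _).measurable
  have hvdc := norm_integral_circleExp_pi_pow_le (gaussPi ι) k
    (Φ := fun Z => t * multilinearPoly (k + 1) a (∑ j, (√(k + 1 : ℕ))⁻¹ • Z j))
    (Continuous.measurable (by fun_prop))
  simp_rw [boxDiff_const_mul, boxDiff_multilinearPoly_normalized_sum, ← mul_assoc] at hvdc
  rw [← integral_circleExp_comp (measurePreserving_normalized_sum k.succ_ne_zero)
    (φ := fun x => t * multilinearPoly (k + 1) a x) (Continuous.measurable (by fun_prop)),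
    ← integral_circleExp_comp measurePreserving_normalized_sub
    (φ := fun Z => t * polarScale (k + 1) * polarForm (k + 1) a Z) (by fun_prop)]
  exact hvdc

end Decoupling

section Gradient

variable {ι : Type} [Fintype ι] [DecidableEq ι] (k : ℕ) (a : Finset ι → ℝ)

/-- The gradient of the polar form in its first argument, as a function of the other ones. -/
noncomputable def polarGradient :
    MultilinearMap ℝ (fun _ : Fin k => ι → ℝ) (EuclideanSpace ℝ ι) :=
  (WithLp.linearEquiv 2 ℝ (ι → ℝ)).symm.toLinearMap.compMultilinearMap
    (MultilinearMap.pi fun b => (polarForm (k + 1) a).curryLeft (Pi.single b 1))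

lemma norm_sq_polarGradient (Z : Fin k → ι → ℝ) :
    ‖polarGradient k a Z‖ ^ 2 = ∑ b, polarForm (k + 1) a (Fin.cons (Pi.single b 1) Z) ^ 2 := by
  rw [EuclideanSpace.norm_sq_eq]
  simp only [Real.norm_eq_abs, sq_abs]
  rfl

omit [DecidableEq ι] in
lemma polarForm_toLinearMap_cons_zero (Z : Fin k → ι → ℝ) (x : ι → ℝ) :
    (polarForm (k + 1) a).toLinearMap (Fin.cons 0 Z) 0 x = polarForm (k + 1) a (Fin.cons x Z) :=
  congrArg (polarForm (k + 1) a) (Fin.update_cons_zero _ _ _)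

lemma lintegral_enorm_polarGradient_pow_mul (m : ℕ) :
    (∫⁻ Z, ‖polarGradient k a Z‖ₑ ^ (2 * m) ∂(gaussTuple (Fin k) ι)) * gaussMoment m
      = ∫⁻ Z, ‖polarForm (k + 1) a Z‖ₑ ^ (2 * m) ∂(gaussTuple (Fin (k + 1)) ι) := by
  have hform : Measurable fun Z => ‖polarForm (k + 1) a Z‖ₑ ^ (2 * m) :=
    (continuous_multilinearMap_pi _).measurable.enorm.pow_const _
  have hgrad : Measurable fun Z => polarGradient k a Z :=
    (continuous_multilinearMap_pi _).measurable
  have hcons := measurePreserving_cons_gaussTuple (ι := ι) (k := k)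
  have hslice : Measurable fun p : (ι → ℝ) × (Fin k → ι → ℝ) =>
      ‖polarForm (k + 1) a (Fin.cons p.1 p.2)‖ₑ ^ (2 * m) := hform.comp hcons.measurable
  rw [← hcons.lintegral_comp hform, lintegral_prod_symm' _ hslice,
    ← lintegral_mul_const _ (by fun_prop)]
  refine lintegral_congr fun Z => ?_
  rw [pow_mul, ← ofReal_norm, ← ENNReal.ofReal_pow (norm_nonneg _), norm_sq_polarGradient]
  simp_rw [← polarForm_toLinearMap_cons_zero]
  exact (lintegral_enorm_pow_linearMap_gaussPi _ m).symm

lemma integral_circleExp_linearMap_gaussPi (L : (ι → ℝ) →ₗ[ℝ] ℝ) :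
    ∫ x, (Circle.exp (L x) : ℂ) ∂(gaussPi ι)
      = (expNegHalf (∑ b, L (Pi.single b 1) ^ 2)).toReal := by
  have h := charFunDual_gaussPi L.toContinuousLinearMap
  simp only [charFunDual_apply, LinearMap.coe_toContinuousLinearMap'] at h
  simp_rw [Circle.coe_exp]
  rw [h, expNegHalf, ENNReal.toReal_ofReal (Real.exp_pos _).le, Complex.ofReal_exp]
  push_cast
  rw [neg_div]

lemma integral_circleExp_polarForm (t : ℝ) :
    ∫ Z, (Circle.exp (t * polarForm (k + 1) a Z) : ℂ) ∂(gaussTuple (Fin (k + 1)) ι)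
      = (∫⁻ Z, expNegHalf (t ^ 2 * ‖polarGradient k a Z‖ ^ 2) ∂(gaussTuple (Fin k) ι)).toReal := by
  have hform : Measurable fun Z => polarForm (k + 1) a Z :=
    (continuous_multilinearMap_pi _).measurable
  have hgrad : Measurable fun Z => polarGradient k a Z :=
    (continuous_multilinearMap_pi _).measurable
  have hcons := measurePreserving_cons_gaussTuple (ι := ι) (k := k)
  have hinner : ∀ Z : Fin k → ι → ℝ,
      ∫ x, (Circle.exp (t * polarForm (k + 1) a (Fin.cons x Z)) : ℂ) ∂(gaussPi ι)
        = (expNegHalf (t ^ 2 * ‖polarGradient k a Z‖ ^ 2)).toReal := fun Z => by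
    rw [norm_sq_polarGradient, Finset.mul_sum]
    simp_rw [← mul_pow, ← polarForm_toLinearMap_cons_zero]
    exact integral_circleExp_linearMap_gaussPi
      (t • (polarForm (k + 1) a).toLinearMap (Fin.cons 0 Z) 0)
  have hslice : Measurable fun p : (ι → ℝ) × (Fin k → ι → ℝ) =>
      t * polarForm (k + 1) a (Fin.cons p.1 p.2) := (hform.comp hcons.measurable).const_mul t
  rw [← integral_circleExp_comp hcons (hform.const_mul t),
    integral_prod_symm _ (integrable_circleExp _ hslice)]
  simp_rw [hinner]
  have hfinite : ∀ᵐ Z ∂(gaussTuple (Fin k) ι),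
      expNegHalf (t ^ 2 * ‖polarGradient k a Z‖ ^ 2) < ∞ :=
    ae_of_all _ fun _ => ENNReal.ofReal_lt_top
  rw [integral_complex_ofReal, integral_toReal (by fun_prop) hfinite]

lemma momentBounds_polarGradient {k m : ℕ} {a : Finset ι → ℝ} {c L : ℝ} (hm : m ≠ 0)
    (hmoment : gaussMoment m ≠ 0)
    (hlower : ENNReal.ofReal c ≤ ∫⁻ x, ‖multilinearPoly (k + 1) a x‖ₑ ^ 2 ∂(gaussPi ι))
    (hupper : ∫⁻ x, ‖multilinearPoly (k + 1) a x‖ₑ ^ (2 * m) ∂(gaussPi ι)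
      ≤ ENNReal.ofReal L ^ m * gaussMoment m) :
    MomentBounds c (8 ^ (k + 1) * L / polarScale (k + 1) ^ 2) m (fun Z => polarGradient k a Z)
      (gaussTuple (Fin k) ι) := by
  set κ := polarScale (k + 1)
  have hκ : 0 < κ := polarScale_pos k.succ_ne_zero
  constructor
  · have hgrad := lintegral_enorm_polarGradient_pow_mul k a 1
    rw [gaussMoment_one, mul_one, mul_one, lintegral_enorm_polarForm_sq] at hgrad
    rw [hgrad]
    rw [lintegral_enorm_multilinearPoly_sq] at hlower
    refine hlower.trans (ENNReal.ofReal_le_ofReal (le_mul_of_one_le_left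
      (Finset.sum_nonneg fun _ _ => sq_nonneg _) ?_))
    exact_mod_cast Nat.one_le_iff_ne_zero.2 (k + 1).factorial_ne_zero
  · have hpow : ((2 : ℝ≥0∞) ^ (2 * m + 1)) ^ (k + 1) ≤ ENNReal.ofReal (8 ^ (k + 1)) ^ m := by
      rw [ENNReal.ofReal_pow (by norm_num), show ENNReal.ofReal 8 = 2 ^ 3 by
        norm_num [ENNReal.ofReal_ofNat], ← pow_mul, ← pow_mul, ← pow_mul]
      exact pow_le_pow_right₀ one_le_two (by nlinarith [Nat.one_le_iff_ne_zero.2 hm])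
    have hconst : ENNReal.ofReal κ ^ (2 * m) * ENNReal.ofReal (8 ^ (k + 1) * L / κ ^ 2) ^ m
        = ENNReal.ofReal (8 ^ (k + 1)) ^ m * ENNReal.ofReal L ^ m := by
      rw [pow_mul, ← ENNReal.ofReal_pow hκ.le, ← mul_pow, ← mul_pow,
        ← ENNReal.ofReal_mul (by positivity), ← ENNReal.ofReal_mul (by positivity)]
      congr 2
      field_simp
    rw [← ENNReal.mul_le_mul_iff_left hmoment (gaussMoment_lt_top m).ne,
      lintegral_enorm_polarGradient_pow_mul,
      ← ENNReal.mul_le_mul_iff_right (a := ENNReal.ofReal κ ^ (2 * m)) (by positivity)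
        (by finiteness), ← mul_assoc, hconst, mul_assoc]
    exact (pow_mul_lintegral_enorm_polarForm_pow_le a k.succ_ne_zero (2 * m)).trans
      (mul_le_mul' hpow hupper)

end Gradient

theorem exists_norm_integral_circleExp_multilinearPoly_pow_le {A : ℕ} (hA : A ≠ 0) (k : ℕ)
    {c L : ℝ} (hc : 0 < c) (hL : 0 < L) :
    ∃ C : ℝ≥0, ∀ᶠ m in atTop, ∀ {ι : Type} [Fintype ι] (a : Finset ι → ℝ),
      ENNReal.ofReal c ≤ ∫⁻ x, ‖multilinearPoly (k + 1) a x‖ₑ ^ 2 ∂(gaussPi ι) →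
      ∫⁻ x, ‖multilinearPoly (k + 1) a x‖ₑ ^ (2 * m) ∂(gaussPi ι)
        ≤ ENNReal.ofReal L ^ m * gaussMoment m →
      ∀ t > 0, ‖∫ x, (Circle.exp (t * multilinearPoly (k + 1) a x) : ℂ) ∂(gaussPi ι)‖ ^ 2 ^ (k + 1)
        ≤ C * (t ^ A)⁻¹ := by
  set κ := polarScale (k + 1)
  have hκ : 0 < κ := polarScale_pos k.succ_ne_zero
  obtain ⟨C, hC, hdecay⟩ := exists_lintegral_expNegHalf_multilinearMap_le hA k hc
    (L := 8 ^ (k + 1) * L / κ ^ 2) (by positivity)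
  refine ⟨C.toNNReal * (κ ^ A)⁻¹.toNNReal, ?_⟩
  filter_upwards [hdecay, eventually_ne_atTop 0, eventually_pow_le_gaussMoment 1]
    with m hdecay hm hmoment ι _ a hlower hupper t ht
  classical
  have hmoment_ne : gaussMoment m ≠ 0 := fun h => by simp [h] at hmoment
  calc ‖∫ x, (Circle.exp (t * multilinearPoly (k + 1) a x) : ℂ) ∂(gaussPi ι)‖ ^ 2 ^ (k + 1)
      ≤ (∫⁻ Z, expNegHalf ((t * κ) ^ 2 * ‖polarGradient k a Z‖ ^ 2)
          ∂(gaussTuple (Fin k) ι)).toReal := by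
        simpa only [integral_circleExp_polarForm, Complex.ofReal_re] using
          norm_integral_circleExp_multilinearPoly_pow_le a k t
    _ ≤ (C * ENNReal.ofReal (((t * κ) ^ A)⁻¹)).toReal :=
        ENNReal.toReal_mono (by finiteness) (hdecay (polarGradient k a)
          (momentBounds_polarGradient hm hmoment_ne hlower hupper) _ (by positivity))
    _ = _ := by
        rw [ENNReal.toReal_mul, ENNReal.toReal_ofReal (by positivity), mul_pow, mul_inv,
          NNReal.coe_mul, Real.coe_toNNReal _ (by positivity), ENNReal.coe_toNNReal_eq_toReal]
        ring

section Hypercontractivity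

lemma two_point_pow_le {s h w : ℝ} {N M : ℕ} (hs : 0 ≤ s) (hw : 0 ≤ w) (hh : h ^ 2 ≤ s * w)
    (hM : M ≤ N) :
    ((s + h) ^ M + (s - h) ^ M) / 2 ≤ (s + N * w) ^ M ∧
      h * (((s + h) ^ M - (s - h) ^ M) / 2) ≤ M * w * (s + N * w) ^ M := by
  induction M with
  | zero => simp
  | succ M ih =>
    obtain ⟨heven, hodd⟩ := ih (by lia)
    have hMN : (M : ℝ) ≤ N := by exact_mod_cast Nat.le_of_succ_le hM
    set u := (s + h) ^ M
    set v := (s - h) ^ M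
    set T := s + N * w with hT
    have hsT : s ≤ T := le_add_of_nonneg_right (by positivity)
    have : 0 ≤ T := hs.trans hsT
    rw [pow_succ, pow_succ (s - h), pow_succ T]
    constructor
    · calc (u * (s + h) + v * (s - h)) / 2 = s * ((u + v) / 2) + h * ((u - v) / 2) := by ring
        _ ≤ s * T ^ M + M * w * T ^ M := by gcongr
        _ ≤ s * T ^ M + N * w * T ^ M := by gcongr
        _ = T ^ M * T := by rw [hT]; ring
    · calc h * ((u * (s + h) - v * (s - h)) / 2)
          = s * (h * ((u - v) / 2)) + h ^ 2 * ((u + v) / 2) := by ring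
        _ ≤ s * (M * w * T ^ M) + h ^ 2 * T ^ M := by gcongr
        _ ≤ s * (M * w * T ^ M) + s * w * T ^ M := by gcongr
        _ = s * ((M + 1) * w * T ^ M) := by ring
        _ ≤ T * ((M + 1) * w * T ^ M) := by gcongr
        _ = ((M + 1 : ℕ) : ℝ) * w * (T ^ M * T) := by push_cast; ring

lemma add_pow_add_sub_pow_le (N : ℕ) (x y : ℝ) :
    (x + y) ^ (2 * N) + (x - y) ^ (2 * N) ≤ 2 * (x ^ 2 + (4 * N + 1) * y ^ 2) ^ N := by
  have hcross : (2 * x * y) ^ 2 ≤ (x ^ 2 + y ^ 2) * (4 * y ^ 2) := by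
    nlinarith [sq_nonneg (y ^ 2)]
  have h := (two_point_pow_le (by positivity) (by positivity) hcross (le_refl N)).1
  rw [pow_mul, pow_mul]
  ring_nf at h ⊢
  linarith

lemma enorm_add_pow_add_enorm_sub_pow_le (N : ℕ) (x y : ℝ) :
    ‖x + y‖ₑ ^ (2 * N) + ‖x - y‖ₑ ^ (2 * N)
      ≤ 2 * (‖x‖ₑ ^ 2 + ENNReal.ofReal (4 * N + 1) * ‖y‖ₑ ^ 2) ^ N := by
  have hpow : ∀ (r : ℝ) (M : ℕ), ‖r‖ₑ ^ (2 * M) = ENNReal.ofReal (r ^ (2 * M)) := fun r M => by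
    rw [← (even_two_mul M).pow_abs, ← Real.norm_eq_abs, ENNReal.ofReal_pow (norm_nonneg _),
      ofReal_norm]
  have hsq : ∀ r : ℝ, ‖r‖ₑ ^ 2 = ENNReal.ofReal (r ^ 2) := fun r => hpow r 1
  have hnonneg : ∀ r : ℝ, 0 ≤ r ^ (2 * N) := fun r => (even_two_mul N).pow_nonneg r
  rw [hpow, hpow, hsq, hsq, ← ENNReal.ofReal_add (hnonneg _) (hnonneg _),
    ← ENNReal.ofReal_mul (by positivity), ← ENNReal.ofReal_add (by positivity) (by positivity),
    ← ENNReal.ofReal_pow (by positivity), ← ENNReal.ofReal_ofNat 2,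
    ← ENNReal.ofReal_mul zero_le_two]
  exact ENNReal.ofReal_le_ofReal (add_pow_add_sub_pow_le N x y)

lemma sum_powersetCard_univ_succ {R : Type*} [AddCommMonoid R] (n d : ℕ)
    (F : Finset (Fin (n + 1)) → R) :
    ∑ S ∈ Finset.powersetCard (d + 1) Finset.univ, F S
      = ∑ S ∈ Finset.powersetCard (d + 1) Finset.univ, F (S.map (Fin.succEmb n))
        + ∑ S ∈ Finset.powersetCard d Finset.univ, F (insert 0 (S.map (Fin.succEmb n))) := by
  have hzero : ∀ S : Finset (Fin n), 0 ∉ S.map (Fin.succEmb n) := fun S => by simp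
  have huniv : (Finset.univ : Finset (Fin (n + 1)))
      = insert 0 (Finset.univ.map (Fin.succEmb n)) := by
    rw [Fin.univ_succ, Finset.cons_eq_insert]
    rfl
  rw [huniv, Finset.powersetCard_succ_insert (hzero _), Finset.sum_union, Finset.sum_image,
    Finset.powersetCard_map, Finset.powersetCard_map, Finset.sum_map, Finset.sum_map]
  · rfl
  · refine fun S hS T hT hST => ?_
    simp only [Finset.mem_coe, Finset.powersetCard_map, Finset.mem_map,
      RelEmbedding.coe_toEmbedding, Finset.mapEmbedding_apply] at hS hT
    obtain ⟨S', _, rfl⟩ := hS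
    obtain ⟨T', _, rfl⟩ := hT
    rw [← Finset.erase_insert (hzero S'), ← Finset.erase_insert (hzero T')]
    exact congrArg (Finset.erase · 0) hST
  · rw [Finset.disjoint_left]
    intro S hS hS'
    obtain ⟨T, _, rfl⟩ := Finset.mem_image.1 hS'
    exact hzero _ ((Finset.mem_powersetCard.1 hS).1 (Finset.mem_insert_self 0 T))

lemma multilinearPoly_cons (n d : ℕ) (a : Finset (Fin (n + 1)) → ℝ) (x : ℝ) (z : Fin n → ℝ) :
    multilinearPoly (d + 1) a (Fin.cons x z)
      = multilinearPoly (d + 1) (fun S => a (S.map (Fin.succEmb n))) z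
        + x * multilinearPoly d (fun S => a (insert 0 (S.map (Fin.succEmb n)))) z := by
  unfold multilinearPoly
  rw [sum_powersetCard_univ_succ, Finset.mul_sum]
  congr 1
  · refine Finset.sum_congr rfl fun S _ => ?_
    simp
  · refine Finset.sum_congr rfl fun S _ => ?_
    rw [Finset.prod_insert (by simp)]
    simp only [Fin.cons_zero, Finset.prod_map, Fin.coe_succEmb, Fin.cons_succ]
    ring

section Step

variable {Z : Type*} [MeasurableSpace Z] {ν : Measure Z} [SFinite ν] {f g : Z → ℝ}

/- Replacing `x` by `-x` preserves the Gaussian measure, so the integrand may be averaged over the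
two signs before applying the two-point inequality. -/
lemma lintegral_enorm_add_mul_gaussian_pow_le (N : ℕ) (hf : Measurable f) (hg : Measurable g) :
    ∫⁻ p, ‖f p.2 + p.1 * g p.2‖ₑ ^ (2 * N) ∂((gaussianReal 0 1).prod ν)
      ≤ ∫⁻ p, (‖f p.2‖ₑ ^ 2 + ENNReal.ofReal (4 * N + 1) * ‖p.1 * g p.2‖ₑ ^ 2) ^ N
          ∂((gaussianReal 0 1).prod ν) := by
  set μ := (gaussianReal 0 1).prod ν
  have hneg : MeasurePreserving (fun x : ℝ => -x) (gaussianReal 0 1) (gaussianReal 0 1) :=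
    ⟨measurable_neg, by rw [gaussianReal_map_neg, neg_zero]⟩
  have hflip : MeasurePreserving (Prod.map (fun x : ℝ => -x) id) μ μ :=
    hneg.prod (MeasurePreserving.id ν)
  have hF : Measurable fun p : ℝ × Z => ‖f p.2 + p.1 * g p.2‖ₑ ^ (2 * N) := by fun_prop
  refine (ENNReal.mul_le_mul_iff_right two_ne_zero ENNReal.ofNat_ne_top).1 ?_
  rw [two_mul]
  nth_rewrite 2 [← hflip.lintegral_comp hF]
  rw [← lintegral_add_left hF, ← lintegral_const_mul' _ _ ENNReal.ofNat_ne_top]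
  refine lintegral_mono fun p => ?_
  simpa only [Prod.map_fst, Prod.map_snd, id_eq, neg_mul, ← sub_eq_add_neg] using
    enorm_add_pow_add_enorm_sub_pow_le N (f p.2) (p.1 * g p.2)

lemma lintegral_gaussian_mul_sq_pow (N : ℕ) (c : ℝ) (hg : Measurable g) :
    ∫⁻ p, (ENNReal.ofReal c * ‖p.1 * g p.2‖ₑ ^ 2) ^ N ∂((gaussianReal 0 1).prod ν)
      = ENNReal.ofReal c ^ N * (gaussMoment N * ∫⁻ z, ‖g z‖ₑ ^ (2 * N) ∂ν) := by
  simp_rw [mul_pow, enorm_mul, mul_pow, ← pow_mul]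
  rw [lintegral_const_mul' _ _ (by finiteness),
    lintegral_prod_mul (f := fun x : ℝ => ‖x‖ₑ ^ (2 * N)) (g := fun z => ‖g z‖ₑ ^ (2 * N))
      (by fun_prop) (by fun_prop)]
  rfl

lemma rpow_lintegral_enorm_add_mul_gaussian_le {N : ℕ} (hN : N ≠ 0) (hf : Measurable f)
    (hg : Measurable g) :
    (∫⁻ p, ‖f p.2 + p.1 * g p.2‖ₑ ^ (2 * N) ∂((gaussianReal 0 1).prod ν)) ^ (1 / (N : ℝ))
      ≤ (∫⁻ z, ‖f z‖ₑ ^ (2 * N) ∂ν) ^ (1 / (N : ℝ))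
        + ENNReal.ofReal (4 * N + 1) * gaussMoment N ^ (1 / (N : ℝ))
          * (∫⁻ z, ‖g z‖ₑ ^ (2 * N) ∂ν) ^ (1 / (N : ℝ)) := by
  have hroot : (0 : ℝ) ≤ 1 / N := by positivity
  have hminkowski := ENNReal.lintegral_Lp_add_le (μ := (gaussianReal 0 1).prod ν) (p := N)
    (f := fun p => ‖f p.2‖ₑ ^ 2)
    (g := fun p => ENNReal.ofReal (4 * N + 1) * ‖p.1 * g p.2‖ₑ ^ 2)
    (by fun_prop) (by fun_prop) (by exact_mod_cast Nat.one_le_iff_ne_zero.2 hN)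
  simp only [Pi.add_apply, ENNReal.rpow_natCast] at hminkowski
  refine (ENNReal.rpow_le_rpow (lintegral_enorm_add_mul_gaussian_pow_le N hf hg) hroot).trans
    (hminkowski.trans (add_le_add (le_of_eq ?_) (le_of_eq ?_)))
  · rw [lintegral_prod _ (by fun_prop)]
    simp only [← pow_mul, lintegral_const, measure_univ, mul_one]
  · rw [lintegral_gaussian_mul_sq_pow N _ hg, ENNReal.mul_rpow_of_nonneg _ _ hroot,
      ENNReal.mul_rpow_of_nonneg _ _ hroot, one_div, ENNReal.pow_rpow_inv_natCast hN, mul_assoc]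

end Step

lemma rpow_lintegral_enorm_multilinearPoly_zero {ι : Type} [Fintype ι] {N : ℕ} (hN : N ≠ 0)
    (a : Finset ι → ℝ) :
    (∫⁻ x, ‖multilinearPoly 0 a x‖ₑ ^ (2 * N) ∂(gaussPi ι)) ^ (1 / (N : ℝ))
      = ENNReal.ofReal (a ∅ ^ 2) := by
  simp only [multilinearPoly, Finset.powersetCard_zero, Finset.sum_singleton, Finset.prod_empty,
    mul_one, lintegral_const, measure_univ]
  rw [pow_mul, one_div, ENNReal.pow_rpow_inv_natCast hN, ← sq_abs, ← Real.norm_eq_abs,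
    ENNReal.ofReal_pow (norm_nonneg _), ofReal_norm]

lemma rpow_lintegral_enorm_multilinearPoly_le {N : ℕ} (hN : N ≠ 0) {K : ℝ} (hK : 0 ≤ K)
    (hNK : ENNReal.ofReal (4 * N + 1) * gaussMoment N ^ (1 / (N : ℝ)) ≤ ENNReal.ofReal K)
    {n : ℕ} (d : ℕ) (a : Finset (Fin n) → ℝ) :
    (∫⁻ x, ‖multilinearPoly d a x‖ₑ ^ (2 * N) ∂(gaussPi (Fin n))) ^ (1 / (N : ℝ))
      ≤ ENNReal.ofReal (K ^ d * ∑ S ∈ Finset.powersetCard d Finset.univ, a S ^ 2) := by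
  induction n generalizing d with
  | zero =>
    obtain rfl | hd := eq_or_ne d 0
    · rw [rpow_lintegral_enorm_multilinearPoly_zero hN]
      simp
    · have hempty : Finset.powersetCard d (Finset.univ : Finset (Fin 0)) = ∅ :=
        Finset.powersetCard_eq_empty.2 (by simpa using Nat.pos_of_ne_zero hd)
      simp_rw [multilinearPoly, hempty]
      simp [hN, Nat.pos_of_ne_zero hN]
  | succ n ih =>
    obtain _ | d := d
    · rw [rpow_lintegral_enorm_multilinearPoly_zero hN]
      simp
    · have hsum : ∀ b : Finset (Fin n) → ℝ, ∀ e,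
          0 ≤ K ^ (d + 1) * ∑ S ∈ Finset.powersetCard e Finset.univ, b S ^ 2 := fun b e => by
        positivity
      have hcons : MeasurePreserving (fun p : ℝ × (Fin n → ℝ) => (Fin.cons p.1 p.2 : _ → ℝ))
          ((gaussianReal 0 1).prod (gaussPi (Fin n))) (gaussPi (Fin (n + 1))) :=
        measurePreserving_finCons (gaussianReal 0 1) n
      have hpoly : Measurable fun x => ‖multilinearPoly (d + 1) a x‖ₑ ^ (2 * N) := by fun_prop
      rw [← hcons.lintegral_comp hpoly]
      simp_rw [multilinearPoly_cons]
      refine (rpow_lintegral_enorm_add_mul_gaussian_le hN (by fun_prop) (by fun_prop)).trans ?_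
      rw [sum_powersetCard_univ_succ, mul_add, ENNReal.ofReal_add (hsum _ _) (hsum _ _), pow_succ',
        mul_assoc K _ (∑ S ∈ Finset.powersetCard d _, _), ENNReal.ofReal_mul (p := K) hK,
        ← pow_succ']
      exact add_le_add (ih _ _) (mul_le_mul' hNK (ih _ _))

lemma exists_lintegral_enorm_multilinearPoly_pow_le {N : ℕ} (hN : N ≠ 0) (d : ℕ) :
    ∃ K : ℝ≥0, ∀ {n : ℕ} (a : Finset (Fin n) → ℝ),
      ∫⁻ x, ‖multilinearPoly d a x‖ₑ ^ (2 * N) ∂(gaussPi (Fin n))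
        ≤ K * (∫⁻ x, ‖multilinearPoly d a x‖ₑ ^ 2 ∂(gaussPi (Fin n))) ^ N := by
  set T := ENNReal.ofReal (4 * N + 1) * gaussMoment N ^ (1 / (N : ℝ))
  have hT : T ≠ ∞ := ENNReal.mul_ne_top ENNReal.ofReal_ne_top
    (ENNReal.rpow_ne_top_of_nonneg (by positivity) (gaussMoment_lt_top N).ne)
  refine ⟨(T.toNNReal ^ d) ^ N, fun {n} a => ?_⟩
  have h := rpow_lintegral_enorm_multilinearPoly_le hN ENNReal.toReal_nonneg
    (ENNReal.ofReal_toReal hT).ge d a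
  rw [one_div, ENNReal.rpow_inv_le_iff (by positivity), ENNReal.rpow_natCast,
    ENNReal.ofReal_mul (by positivity), ENNReal.ofReal_pow ENNReal.toReal_nonneg,
    ENNReal.ofReal_toReal hT, ← lintegral_enorm_multilinearPoly_sq, mul_pow] at h
  simpa [ENNReal.coe_toNNReal hT] using h

lemma lintegral_enorm_multilinearPoly_pow_ne_top {N : ℕ} (hN : N ≠ 0) (d : ℕ) {n : ℕ}
    (a : Finset (Fin n) → ℝ) :
    ∫⁻ x, ‖multilinearPoly d a x‖ₑ ^ (2 * N) ∂(gaussPi (Fin n)) ≠ ∞ := by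
  obtain ⟨K, hK⟩ := exists_lintegral_enorm_multilinearPoly_pow_le hN d
  refine ((hK a).trans_lt ?_).ne
  rw [lintegral_enorm_multilinearPoly_sq]
  finiteness

lemma exists_lintegral_enorm_multilinearPoly_pow_le_sq {m : ℕ} (hm : m ≠ 0) (d : ℕ) :
    ∃ H : ℝ≥0, ∀ {n : ℕ} (a : Finset (Fin n) → ℝ),
      ∫⁻ x, ‖multilinearPoly d a x‖ₑ ^ (4 * m) ∂(gaussPi (Fin n))
        ≤ H * (∫⁻ x, ‖multilinearPoly d a x‖ₑ ^ (2 * m) ∂(gaussPi (Fin n))) ^ 2 := by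
  obtain ⟨H, hH⟩ := exists_lintegral_enorm_multilinearPoly_pow_le (N := 2 * m) (by lia) d
  refine ⟨H, fun {n} a => ?_⟩
  have hjensen := pow_lintegral_le_lintegral_pow (ν := gaussPi (Fin n))
    (f := fun x => ‖multilinearPoly d a x‖ₑ ^ 2) (by fun_prop) hm
  simp_rw [← pow_mul] at hjensen
  calc ∫⁻ x, ‖multilinearPoly d a x‖ₑ ^ (4 * m) ∂(gaussPi (Fin n))
      ≤ H * (∫⁻ x, ‖multilinearPoly d a x‖ₑ ^ 2 ∂(gaussPi (Fin n))) ^ (2 * m) := by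
        rw [show 4 * m = 2 * (2 * m) by ring]
        exact hH a
    _ ≤ H * (∫⁻ x, ‖multilinearPoly d a x‖ₑ ^ (2 * m) ∂(gaussPi (Fin n))) ^ 2 := by
        rw [mul_comm 2 m, pow_mul, mul_comm m 2]
        gcongr

end Hypercontractivity

section LevyProkhorov

section General

variable {X : Type*} [PseudoMetricSpace X] [MeasurableSpace X] {μ ν : Measure X} {c : ℝ≥0∞}

lemma measure_le_measure_add_of_levyProkhorovEDist_lt (h : levyProkhorovEDist μ ν < c)
    (hc : c ≤ 1) {A B : Set X} (hA : MeasurableSet A) (hAB : Metric.thickening 1 A ⊆ B) :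
    μ A ≤ ν B + c :=
  (left_measure_le_of_levyProkhorovEDist_lt h hA).trans <|
    add_le_add_left (measure_mono
      ((Metric.thickening_mono (ENNReal.toReal_mono ENNReal.one_ne_top hc) A).trans hAB)) c

lemma measure_preimage_Ioi_le_of_levyProkhorovEDist_lt (h : levyProkhorovEDist μ ν < c)
    (hc : c ≤ 1) {f g : X → ℝ} (hf : Measurable f) (hfg : ∀ x y, dist x y < 1 → f y ≤ g x) (t : ℝ) :
    μ {x | t < f x} ≤ ν {x | t < g x} + c := by
  refine measure_le_measure_add_of_levyProkhorovEDist_lt h hc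
    (measurableSet_lt measurable_const hf) fun x hx => ?_
  obtain ⟨y, hy, hxy⟩ := Metric.mem_thickening_iff.1 hx
  exact lt_of_lt_of_le hy (hfg x y hxy)

lemma lintegral_ofReal_le_of_levyProkhorovEDist_lt (h : levyProkhorovEDist μ ν < c) (hc : c ≤ 1)
    {f g : X → ℝ} {M : ℝ} (hf : Measurable f) (hg : Measurable g) (hf0 : 0 ≤ f) (hg0 : 0 ≤ g)
    (hfM : ∀ x, f x ≤ M) (hfg : ∀ x y, dist x y < 1 → f y ≤ g x) :
    ∫⁻ x, ENNReal.ofReal (f x) ∂μ ≤ ∫⁻ x, ENNReal.ofReal (g x) ∂ν + c * ENNReal.ofReal M := by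
  rw [lintegral_eq_lintegral_meas_lt μ (ae_of_all _ hf0) hf.aemeasurable,
    lintegral_eq_lintegral_meas_lt ν (ae_of_all _ hg0) hg.aemeasurable]
  have hlevel : ∀ t : ℝ,
      μ {x | t < f x} ≤ ν {x | t < g x} + (Set.Iio M).indicator (fun _ => c) t := fun t => by
    obtain ht | ht := lt_or_ge t M
    · rw [Set.indicator_of_mem (Set.mem_Iio.2 ht)]
      exact measure_preimage_Ioi_le_of_levyProkhorovEDist_lt h hc hf hfg t
    · have hempty : {x | t < f x} = ∅ :=
        Set.eq_empty_of_forall_notMem fun x hx => (hx.trans_le (hfM x)).not_ge ht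
      simp [hempty]
  calc ∫⁻ t in Set.Ioi 0, μ {x | t < f x}
      ≤ ∫⁻ t in Set.Ioi 0, (ν {x | t < g x} + (Set.Iio M).indicator (fun _ => c) t) :=
        lintegral_mono hlevel
    _ = (∫⁻ t in Set.Ioi 0, ν {x | t < g x}) + c * ENNReal.ofReal M := by
        rw [lintegral_add_right _ (measurable_const.indicator measurableSet_Iio),
          lintegral_indicator measurableSet_Iio, Measure.restrict_restrict measurableSet_Iio,
          setLIntegral_const, Set.inter_comm, Set.Ioi_inter_Iio, Real.volume_Ioo, sub_zero]

end General

lemma sq_setLIntegral_le {Ω : Type*} [MeasurableSpace Ω] {μ : Measure Ω} {f : Ω → ℝ≥0∞}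
    (hf : Measurable f) (B : Set Ω) :
    (∫⁻ x in B, f x ∂μ) ^ 2 ≤ (∫⁻ x, f x ^ 2 ∂μ) * μ B := by
  have hholder := ENNReal.lintegral_mul_le_Lp_mul_Lq (μ.restrict B) Real.HolderConjugate.two_two
    hf.aemeasurable (aemeasurable_const (b := (1 : ℝ≥0∞)))
  simp only [Pi.mul_apply, mul_one, lintegral_const, Measure.restrict_apply_univ,
    ENNReal.rpow_ofNat, one_pow, one_mul] at hholder
  calc (∫⁻ x in B, f x ∂μ) ^ 2
      ≤ ((∫⁻ x in B, f x ^ 2 ∂μ) ^ (1 / 2 : ℝ) * μ B ^ (1 / 2 : ℝ)) ^ 2 := by gcongr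
    _ = (∫⁻ x in B, f x ^ 2 ∂μ) * μ B := by
        rw [mul_pow, ← ENNReal.rpow_mul_natCast, ← ENNReal.rpow_mul_natCast]
        norm_num
    _ ≤ (∫⁻ x, f x ^ 2 ∂μ) * μ B := by
        gcongr
        exact Measure.restrict_le_self

lemma lintegral_le_two_mul_setLIntegral_compl {Ω : Type*} [MeasurableSpace Ω] {μ : Measure Ω}
    {f : Ω → ℝ≥0∞} (hf : Measurable f) (hfinite : ∫⁻ x, f x ∂μ ≠ ∞) {H : ℝ≥0∞}
    (hH : ∫⁻ x, f x ^ 2 ∂μ ≤ H * (∫⁻ x, f x ∂μ) ^ 2) {B : Set Ω} (hB : MeasurableSet B)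
    (hμB : 4 * H * μ B ≤ 1) :
    ∫⁻ x, f x ∂μ ≤ 2 * ∫⁻ x in Bᶜ, f x ∂μ := by
  have hhalf : 2 * ∫⁻ x in B, f x ∂μ ≤ ∫⁻ x, f x ∂μ := by
    refine (ENNReal.pow_le_pow_left_iff two_ne_zero).1 ?_
    calc (2 * ∫⁻ x in B, f x ∂μ) ^ 2 = 4 * (∫⁻ x in B, f x ∂μ) ^ 2 := by rw [mul_pow]; norm_num
      _ ≤ 4 * (H * (∫⁻ x, f x ∂μ) ^ 2 * μ B) := by
          gcongr
          exact (sq_setLIntegral_le hf B).trans (mul_le_mul_left hH _)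
      _ = 4 * H * μ B * (∫⁻ x, f x ∂μ) ^ 2 := by ring
      _ ≤ (∫⁻ x, f x ∂μ) ^ 2 := mul_le_of_le_one_left' hμB
  refine (ENNReal.add_le_add_iff_left hfinite).1 ?_
  calc ∫⁻ x, f x ∂μ + ∫⁻ x, f x ∂μ
      = 2 * (∫⁻ x in B, f x ∂μ) + 2 * ∫⁻ x in Bᶜ, f x ∂μ := by
        rw [← two_mul, ← mul_add, lintegral_add_compl f hB]
    _ ≤ ∫⁻ x, f x ∂μ + 2 * ∫⁻ x in Bᶜ, f x ∂μ := by gcongr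

lemma gaussianReal_le_abs_le {R : ℝ} (hR : 0 < R) :
    gaussianReal 0 1 {x | R ≤ |x|} ≤ ENNReal.ofReal (1 / R ^ 2) := by
  have h := meas_ge_le_variance_div_sq (memLp_id_gaussianReal (μ := 0) (v := 1) 2) hR
  simpa using h

lemma lintegral_abs_add_one_pow_le {m : ℕ} (hm : 1 ≤ gaussMoment m) :
    ∫⁻ x, ENNReal.ofReal ((|x| + 1) ^ (2 * m)) ∂(gaussianReal 0 1)
      ≤ 2 * 4 ^ m * gaussMoment m := by
  have hconvex : ∀ x : ℝ,
      ENNReal.ofReal ((|x| + 1) ^ (2 * m)) ≤ 4 ^ m * (‖x‖ₑ ^ (2 * m) + 1) := fun x => by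
    have h : (|x| + 1) ^ (2 * m) ≤ 4 ^ m * (|x| ^ (2 * m) + 1) :=
      calc (|x| + 1) ^ (2 * m)
          ≤ 2 ^ (2 * m - 1) * (|x| ^ (2 * m) + 1 ^ (2 * m)) :=
            add_pow_le (abs_nonneg x) zero_le_one _
        _ ≤ 2 ^ (2 * m) * (|x| ^ (2 * m) + 1 ^ (2 * m)) := by
            gcongr
            exacts [one_le_two, Nat.sub_le _ _]
        _ = 4 ^ m * (|x| ^ (2 * m) + 1) := by rw [one_pow, pow_mul]; norm_num
    refine (ENNReal.ofReal_le_ofReal h).trans_eq ?_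
    rw [ENNReal.ofReal_mul (by positivity), ENNReal.ofReal_add (by positivity) zero_le_one,
      ENNReal.ofReal_pow zero_le_four, ENNReal.ofReal_pow (abs_nonneg x), ENNReal.ofReal_ofNat,
      ENNReal.ofReal_one, ← Real.norm_eq_abs, ofReal_norm]
  calc ∫⁻ x, ENNReal.ofReal ((|x| + 1) ^ (2 * m)) ∂(gaussianReal 0 1)
      ≤ ∫⁻ x, 4 ^ m * (‖x‖ₑ ^ (2 * m) + 1) ∂(gaussianReal 0 1) := lintegral_mono hconvex
    _ = 4 ^ m * (gaussMoment m + 1) := by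
        rw [lintegral_const_mul _ (by fun_prop), lintegral_add_right _ measurable_const,
          lintegral_one, measure_univ, gaussMoment]
    _ ≤ 4 ^ m * (gaussMoment m + gaussMoment m) := by gcongr
    _ = 2 * 4 ^ m * gaussMoment m := by ring

lemma lintegral_min_abs_pow_le {ν : Measure ℝ} {m : ℕ} {c : ℝ≥0∞} {K : ℝ} (hK : 0 ≤ K)
    (hm : 1 ≤ gaussMoment m) (hc : c ≤ 1) (hcK : ENNReal.ofReal (K ^ (2 * m)) * c ≤ 1)
    (hdist : levyProkhorovEDist ν (gaussianReal 0 1) < c) :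
    ∫⁻ x, ENNReal.ofReal (min |x| K ^ (2 * m)) ∂ν
      ≤ 2 * 4 ^ m * gaussMoment m + gaussMoment m := by
  rw [mul_comm] at hcK
  refine (lintegral_ofReal_le_of_levyProkhorovEDist_lt hdist hc (M := K ^ (2 * m))
    (g := fun x => (|x| + 1) ^ (2 * m)) (by fun_prop) (by fun_prop) (fun x => by positivity)
    (fun x => by positivity) (fun x => ?_) fun x y hxy => ?_).trans
    (add_le_add (lintegral_abs_add_one_pow_le hm) (hcK.trans hm))
  · gcongr
    exact min_le_right _ _
  · gcongr
    rw [Real.dist_eq, abs_sub_comm] at hxy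
    exact (min_le_left _ _).trans (by linarith [abs_sub_abs_le_abs_sub y x])

lemma thickening_le_abs_subset (R : ℝ) :
    Metric.thickening 1 {x : ℝ | R + 1 ≤ |x|} ⊆ {x | R ≤ |x|} := fun x hx => by
  obtain ⟨y, hy, hxy⟩ := Metric.mem_thickening_iff.1 hx
  rw [Real.dist_eq, abs_sub_comm] at hxy
  rw [Set.mem_ofPred_eq] at hy ⊢
  linarith [abs_sub_abs_le_abs_sub y x]

lemma eventually_const_mul_le_one {K : ℝ≥0∞} (hK : K ≠ ∞) :
    ∀ᶠ c in 𝓝 (0 : ℝ≥0∞), K * c ≤ 1 := by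
  have h := ENNReal.Tendsto.const_mul (f := 𝓝 0) tendsto_id (Or.inr hK)
  rw [mul_zero] at h
  exact h.eventually_le_const zero_lt_one

lemma exists_mul_gaussianReal_le_abs_le_one {K : ℝ≥0∞} (hK : K ≠ ∞) :
    ∃ R > 0, K * gaussianReal 0 1 {x | R ≤ |x|} ≤ 1 := by
  have htendsto : Tendsto (fun R : ℝ => ENNReal.ofReal (1 / R ^ 2)) atTop (𝓝 0) :=
    ENNReal.ofReal_zero ▸ ENNReal.tendsto_ofReal
      (tendsto_const_nhds.div_atTop (tendsto_pow_atTop two_ne_zero))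
  obtain ⟨R, hKR, hR⟩ := ((htendsto.eventually (eventually_const_mul_le_one hK)).and
    (eventually_gt_atTop 0)).exists
  exact ⟨R, hR, (mul_le_mul_right (gaussianReal_le_abs_le hR) K).trans hKR⟩

lemma setLIntegral_enorm_pow_le_lintegral_min (ν : Measure ℝ) (K : ℝ) (m : ℕ) :
    ∫⁻ x in {x | K ≤ |x|}ᶜ, ‖x‖ₑ ^ (2 * m) ∂ν
      ≤ ∫⁻ x, ENNReal.ofReal (min |x| K ^ (2 * m)) ∂ν := by
  refine (setLIntegral_mono' (measurableSet_le measurable_const measurable_abs).compl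
    fun x hx => ?_).trans (setLIntegral_le_lintegral _ _)
  have hx' : |x| < K := not_le.1 fun h => hx h
  rw [min_eq_left hx'.le, ENNReal.ofReal_pow (abs_nonneg x), ← Real.norm_eq_abs,
    ofReal_norm]

lemma four_mul_four_pow_add_two_le {m : ℕ} (hm : m ≠ 0) : 4 * 4 ^ m + 2 ≤ 24 ^ m := by
  have h6 : 6 ≤ 6 ^ m := Nat.le_self_pow hm 6
  have h4 : 4 ≤ 4 ^ m := Nat.le_self_pow hm 4
  rw [show 24 = 4 * 6 from rfl, mul_pow]
  nlinarith

/- A measure close to the Gaussian has few points outside `[-K, K]`, so the moment comparison `hH`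
forces half of its `2m`-th moment to live inside, where it is comparable to the Gaussian one. -/
lemma eventually_lintegral_enorm_pow_le_gaussMoment {m : ℕ} (hm : m ≠ 0)
    (hmoment : 1 ≤ gaussMoment m) (H : ℝ≥0) :
    ∀ᶠ c in 𝓝 (0 : ℝ≥0∞), ∀ ν : Measure ℝ, levyProkhorovEDist ν (gaussianReal 0 1) < c →
      ∫⁻ x, ‖x‖ₑ ^ (2 * m) ∂ν ≠ ∞ →
      ∫⁻ x, ‖x‖ₑ ^ (4 * m) ∂ν ≤ H * (∫⁻ x, ‖x‖ₑ ^ (2 * m) ∂ν) ^ 2 →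
      ∫⁻ x, ‖x‖ₑ ^ (2 * m) ∂ν ≤ 24 ^ m * gaussMoment m := by
  have hH8 : (8 * H : ℝ≥0∞) ≠ ∞ := by finiteness
  obtain ⟨R, hR, htail⟩ := exists_mul_gaussianReal_le_abs_le_one hH8
  filter_upwards [eventually_le_nhds one_pos.bot_lt, eventually_const_mul_le_one hH8,
    eventually_const_mul_le_one (ENNReal.ofReal_ne_top (r := (R + 1) ^ (2 * m)))]
    with c hc hcH hcR ν hdist hfinite hH
  have hB : MeasurableSet {x : ℝ | R + 1 ≤ |x|} := measurableSet_le measurable_const measurable_abs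
  have hνB : 4 * H * ν {x | R + 1 ≤ |x|} ≤ 1 := by
    refine (ENNReal.mul_le_mul_iff_right two_ne_zero ENNReal.ofNat_ne_top).1 ?_
    calc 2 * (4 * H * ν {x | R + 1 ≤ |x|})
        ≤ 2 * (4 * H * (gaussianReal 0 1 {x | R ≤ |x|} + c)) := by
          gcongr
          exact measure_le_measure_add_of_levyProkhorovEDist_lt hdist hc hB
            (thickening_le_abs_subset R)
      _ = 8 * H * gaussianReal 0 1 {x | R ≤ |x|} + 8 * H * c := by ring
      _ ≤ 1 + 1 := add_le_add htail hcH
      _ = 2 * 1 := by norm_num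
  simp_rw [show 4 * m = 2 * m * 2 by ring, pow_mul _ (2 * m)] at hH
  calc ∫⁻ x, ‖x‖ₑ ^ (2 * m) ∂ν
      ≤ 2 * ∫⁻ x in {x | R + 1 ≤ |x|}ᶜ, ‖x‖ₑ ^ (2 * m) ∂ν :=
        lintegral_le_two_mul_setLIntegral_compl (by fun_prop) hfinite hH hB hνB
    _ ≤ 2 * (2 * 4 ^ m * gaussMoment m + gaussMoment m) := by
        grw [setLIntegral_enorm_pow_le_lintegral_min,
          lintegral_min_abs_pow_le (by positivity) hmoment hc hcR hdist]
    _ = (4 * 4 ^ m + 2) * gaussMoment m := by ring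
    _ ≤ 24 ^ m * gaussMoment m := by
        gcongr
        exact_mod_cast four_mul_four_pow_add_two_le hm

lemma gaussianReal_two_le_abs_pos : 0 < gaussianReal 0 1 {x : ℝ | 2 ≤ |x|} := by
  refine pos_iff_ne_zero.2 fun h => ?_
  have hvolume := gaussianReal_absolutelyContinuous' 0 one_ne_zero h
  have hIci : Set.Ici 2 ⊆ {x : ℝ | 2 ≤ |x|} := fun x hx => hx.trans (le_abs_self x)
  simpa using measure_mono_null hIci hvolume

lemma exists_eventually_le_lintegral_enorm_sq :
    ∃ b > 0, ∀ᶠ c in 𝓝 (0 : ℝ≥0∞), ∀ ν : Measure ℝ,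
      levyProkhorovEDist ν (gaussianReal 0 1) < c → ENNReal.ofReal b ≤ ∫⁻ x, ‖x‖ₑ ^ 2 ∂ν := by
  set p := gaussianReal 0 1 {x : ℝ | 2 ≤ |x|}
  have hp0 : p / 2 ≠ 0 := (ENNReal.half_pos gaussianReal_two_le_abs_pos.ne').ne'
  have hptop : p / 2 ≠ ∞ := ENNReal.div_ne_top (measure_ne_top _ _) two_ne_zero
  refine ⟨(p / 2).toReal, ENNReal.toReal_pos hp0 hptop, ?_⟩
  filter_upwards [eventually_le_nhds one_pos.bot_lt, eventually_le_nhds hp0.bot_lt]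
    with c hc hcp ν hdist
  rw [levyProkhorovEDist_comm] at hdist
  have hthick := thickening_le_abs_subset 1
  norm_num at hthick
  have hmarkov : ν {x : ℝ | 1 ≤ |x|} ≤ ∫⁻ x, ‖x‖ₑ ^ 2 ∂ν := by
    have h := mul_meas_ge_le_lintegral (μ := ν) (f := fun x : ℝ => ‖x‖ₑ ^ 2) (by fun_prop) 1
    rw [one_mul] at h
    refine (measure_mono fun x hx => ?_).trans h
    refine Set.mem_ofPred_eq ▸ one_le_pow₀ ?_
    rw [← ofReal_norm, Real.norm_eq_abs]
    exact ENNReal.one_le_ofReal.2 hx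
  rw [ENNReal.ofReal_toReal hptop]
  refine (ENNReal.add_le_add_iff_right hptop).1 ?_
  calc p / 2 + p / 2 = p := ENNReal.add_halves p
    _ ≤ ν {x | 1 ≤ |x|} + c := measure_le_measure_add_of_levyProkhorovEDist_lt hdist hc
        (measurableSet_le measurable_const measurable_abs) hthick
    _ ≤ ∫⁻ x, ‖x‖ₑ ^ 2 ∂ν + p / 2 := add_le_add hmarkov hcp

lemma exists_forall_of_eventually_levyProkhorovEDist_lt {X : Type*} [MeasurableSpace X]
    [PseudoEMetricSpace X] {μ : Measure X} [IsFiniteMeasure μ] {p : Measure X → Prop}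
    (hp : ∀ᶠ c in 𝓝 (0 : ℝ≥0∞), ∀ ν, levyProkhorovEDist ν μ < c → p ν) :
    ∃ δ > 0, ∀ ν [IsFiniteMeasure ν], levyProkhorovDist ν μ ≤ δ → p ν := by
  obtain ⟨r, hr, hpr⟩ := ENNReal.nhds_zero_basis.eventually_iff.1 hp
  obtain ⟨c, hc0, hcr⟩ := exists_between hr
  have hctop : c ≠ ∞ := hcr.ne_top
  have hc : 0 < c.toReal := ENNReal.toReal_pos hc0.ne' hctop
  refine ⟨c.toReal / 2, half_pos hc, fun ν _ hν => hpr hcr ν ?_⟩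
  rw [← ENNReal.toReal_lt_toReal (levyProkhorovEDist_ne_top ν μ) hctop]
  exact hν.trans_lt (half_lt_self hc)

lemma exists_moment_bounds_of_levyProkhorovDist_le :
    ∃ b > 0, ∀ᶠ m in atTop, ∀ d : ℕ, ∃ δ > 0, ∀ {n : ℕ} (a : Finset (Fin n) → ℝ),
      levyProkhorovDist ((gaussPi (Fin n)).map (multilinearPoly d a)) (gaussianReal 0 1) ≤ δ →
      ENNReal.ofReal b ≤ ∫⁻ x, ‖multilinearPoly d a x‖ₑ ^ 2 ∂(gaussPi (Fin n)) ∧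
      ∫⁻ x, ‖multilinearPoly d a x‖ₑ ^ (2 * m) ∂(gaussPi (Fin n))
        ≤ ENNReal.ofReal 24 ^ m * gaussMoment m := by
  obtain ⟨b, hb, hlower⟩ := exists_eventually_le_lintegral_enorm_sq
  refine ⟨b, hb, ?_⟩
  filter_upwards [eventually_ne_atTop 0, eventually_pow_le_gaussMoment 1] with m hm hmoment d
  rw [ENNReal.coe_one, one_pow] at hmoment
  obtain ⟨H, hH⟩ := exists_lintegral_enorm_multilinearPoly_pow_le_sq hm d
  obtain ⟨δ, hδ, hlaw⟩ := exists_forall_of_eventually_levyProkhorovEDist_lt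
    (hlower.and (eventually_lintegral_enorm_pow_le_gaussMoment hm hmoment H) |>.mono
      fun c hc ν hν => And.intro (hc.1 ν hν) (hc.2 ν hν))
  refine ⟨δ, hδ, fun {n} a hdist => ?_⟩
  have hpoly : Measurable (multilinearPoly d a) := by fun_prop
  have hmap : ∀ k : ℕ, ∫⁻ x, ‖x‖ₑ ^ k ∂((gaussPi (Fin n)).map (multilinearPoly d a))
      = ∫⁻ x, ‖multilinearPoly d a x‖ₑ ^ k ∂(gaussPi (Fin n)) := fun k =>
    lintegral_map (f := fun x : ℝ => ‖x‖ₑ ^ k) (by fun_prop) hpoly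
  have h := hlaw _ hdist
  simp only [hmap] at h
  rw [ENNReal.ofReal_ofNat]
  exact ⟨h.1, h.2 (lintegral_enorm_multilinearPoly_pow_ne_top hm d a) (hH a)⟩

end LevyProkhorov

section SmallBall

variable {X : Type*} [MeasurableSpace X] (μ : Measure X) {F : X → ℝ}

lemma norm_integral_circleExp_neg (φ : X → ℝ) :
    ‖∫ x, (Circle.exp (-φ x) : ℂ) ∂μ‖ = ‖∫ x, (Circle.exp (φ x) : ℂ) ∂μ‖ := by
  simp_rw [Circle.exp_neg, Circle.coe_inv_eq_conj, integral_conj, RCLike.norm_conj]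

lemma integral_circleExp_gaussianReal (r : ℝ) :
    ∫ g, (Circle.exp (r * g) : ℂ) ∂(gaussianReal 0 1) = (Real.exp (-(r ^ 2 / 2)) : ℝ) := by
  have h := charFun_gaussianReal (μ := 0) (v := 1) r
  simp only [charFun_apply_real] at h
  simp only [Circle.coe_exp]
  push_cast
  simpa [neg_div] using h

variable [IsProbabilityMeasure μ]

lemma integral_exp_neg_sq_half_le (hF : Measurable F) {C : ℝ}
    (hφ : ∀ t : ℝ, ‖∫ x, (Circle.exp (t * F x) : ℂ) ∂μ‖ ≤ C * (1 + t ^ 2)⁻¹)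
    {ε : ℝ} (hε : 0 < ε) :
    ∫ x, Real.exp (-((F x / ε) ^ 2 / 2)) ∂μ ≤ C * Real.pi * ε := by
  have hC : 0 ≤ C := by simpa using (norm_nonneg _).trans (hφ 0)
  have hbound : Integrable (fun g : ℝ => C * (1 + (g / ε) ^ 2)⁻¹) :=
    (integrable_inv_one_add_sq.comp_div hε.ne').const_mul C
  have hfubini : ((∫ x, Real.exp (-((F x / ε) ^ 2 / 2)) ∂μ : ℝ) : ℂ)
      = ∫ g, ∫ x, (Circle.exp (g / ε * F x) : ℂ) ∂μ ∂(gaussianReal 0 1) := by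
    simp_rw [← integral_complex_ofReal, ← integral_circleExp_gaussianReal]
    rw [integral_integral_swap (integrable_circleExp (μ.prod (gaussianReal 0 1))
      (φ := fun p : X × ℝ => F p.1 / ε * p.2) (by fun_prop))]
    simp_rw [div_mul_comm]
  calc ∫ x, Real.exp (-((F x / ε) ^ 2 / 2)) ∂μ
      ≤ ‖∫ g, ∫ x, (Circle.exp (g / ε * F x) : ℂ) ∂μ ∂(gaussianReal 0 1)‖ := by
        rw [← hfubini, Complex.norm_real]
        exact le_abs_self _
    _ ≤ ∫ g, ‖∫ x, (Circle.exp (g / ε * F x) : ℂ) ∂μ‖ ∂(gaussianReal 0 1) :=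
        norm_integral_le_integral_norm _
    _ ≤ ∫ g, C * (1 + (g / ε) ^ 2)⁻¹ ∂(gaussianReal 0 1) :=
        integral_mono_of_nonneg (.of_forall fun g => norm_nonneg _)
          (hbound.mono_measure gaussianReal_le_volume) (.of_forall fun g => hφ (g / ε))
    _ ≤ ∫ g, C * (1 + (g / ε) ^ 2)⁻¹ :=
        integral_mono_measure gaussianReal_le_volume (.of_forall fun g => by positivity) hbound
    _ = C * Real.pi * ε := by
        rw [integral_const_mul, Measure.integral_comp_div (fun x : ℝ => (1 + x ^ 2)⁻¹) ε,
          integral_univ_inv_one_add_sq, abs_of_pos hε, smul_eq_mul]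
        ring

theorem measure_abs_le_le_of_norm_integral_circleExp_le (hF : Measurable F) {C : ℝ}
    (hφ : ∀ t : ℝ, ‖∫ x, (Circle.exp (t * F x) : ℂ) ∂μ‖ ≤ C * (1 + t ^ 2)⁻¹)
    {ε : ℝ} (hε : 0 < ε) :
    μ {x | |F x| ≤ ε} ≤ ENNReal.ofReal (Real.exp (1 / 2) * C * Real.pi * ε) := by
  have hle_one : ∀ x, Real.exp (-((F x / ε) ^ 2 / 2)) ≤ 1 := fun x =>
    Real.exp_le_one_iff.2 (neg_nonpos.2 (by positivity))
  have hint : Integrable (fun x => Real.exp (-((F x / ε) ^ 2 / 2))) μ :=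
    .of_bound (by fun_prop) 1 <| .of_forall fun x => by
      simpa only [Real.norm_eq_abs, Real.abs_exp] using hle_one x
  have hsub : {x | |F x| ≤ ε} ⊆ {x | Real.exp (-(1 / 2)) ≤ Real.exp (-((F x / ε) ^ 2 / 2))} := by
    intro x (hx : |F x| ≤ ε)
    have : (F x / ε) ^ 2 ≤ 1 := by
      rw [← sq_abs, abs_div, abs_of_pos hε]
      exact pow_le_one₀ (by positivity) ((div_le_one hε).2 hx)
    exact Real.exp_le_exp.2 (by linarith)
  have hmarkov := mul_meas_ge_le_integral_of_nonneg
    (.of_forall fun x => (Real.exp_pos (-((F x / ε) ^ 2 / 2))).le) hint (Real.exp (-(1 / 2)))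
  rw [← ofReal_measureReal]
  refine ENNReal.ofReal_le_ofReal ?_
  calc μ.real {x | |F x| ≤ ε}
      = Real.exp (1 / 2) * (Real.exp (-(1 / 2)) * μ.real {x | |F x| ≤ ε}) := by
        rw [← mul_assoc, ← Real.exp_add, add_neg_cancel, Real.exp_zero, one_mul]
    _ ≤ Real.exp (1 / 2) * (C * Real.pi * ε) := by
        refine mul_le_mul_of_nonneg_left ?_ (Real.exp_pos _).le
        grw [measureReal_mono hsub (measure_ne_top μ _)]
        exact hmarkov.trans (integral_exp_neg_sq_half_le μ hF hφ hε)
    _ = Real.exp (1 / 2) * C * Real.pi * ε := by ring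

lemma norm_integral_circleExp_le_of_pow_le {N : ℕ} (hN : N ≠ 0) {C : ℝ}
    (h : ∀ t > 0, ‖∫ x, (Circle.exp (t * F x) : ℂ) ∂μ‖ ^ N ≤ C * (t ^ (2 * N))⁻¹) (t : ℝ) :
    ‖∫ x, (Circle.exp (t * F x) : ℂ) ∂μ‖ ≤ 2 * max C 1 * (1 + t ^ 2)⁻¹ := by
  have hC : 1 ≤ max C 1 := le_max_right _ _
  have hone := norm_integral_circleExp_le_one μ fun x => t * F x
  wlog ht : 0 ≤ t generalizing t
  · have hneg := norm_integral_circleExp_neg μ fun x => t * F x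
    simp_rw [← neg_mul] at hneg
    simpa only [hneg, neg_sq] using this (-t) (hneg.trans_le hone) (by linarith)
  rw [← div_eq_mul_inv, le_div_iff₀ (by positivity)]
  rcases ht.eq_or_lt with rfl | ht
  · simpa using hone.trans (hC.trans (by linarith))
  · have hroot : ‖∫ x, (Circle.exp (t * F x) : ℂ) ∂μ‖ ≤ max C 1 * (t ^ 2)⁻¹ := by
      refine le_of_pow_le_pow_left₀ hN (by positivity) ((h t ht).trans ?_)
      rw [mul_pow, inv_pow, ← pow_mul]
      gcongr
      exact (le_max_left _ _).trans (le_self_pow₀ hC hN)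
    rw [← div_eq_mul_inv, le_div_iff₀ (by positivity)] at hroot
    linarith

end SmallBall

lemma lt_levyProkhorovDist_dirac_gaussianReal (a : ℝ) :
    1 / 20 < levyProkhorovDist (.dirac a) (gaussianReal 0 1) := by
  by_contra! h
  have hc : levyProkhorovEDist (.dirac a) (gaussianReal 0 1) < ENNReal.ofReal (1 / 10) := by
    rw [ENNReal.lt_ofReal_iff_toReal_lt (levyProkhorovEDist_ne_top _ _)]
    exact h.trans_lt (by norm_num)
  have hsingleton := left_measure_le_of_levyProkhorovEDist_lt hc (measurableSet_singleton a)
  have hball : gaussianReal 0 1 (Metric.ball a (1 / 10)) ≤ ENNReal.ofReal (2 * (1 / 10)) :=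
    (gaussianReal_le_volume _).trans_eq (Real.volume_ball _ _)
  rw [ENNReal.toReal_ofReal (by norm_num), Metric.thickening_singleton,
    Measure.dirac_apply_of_mem (Set.mem_singleton a)] at hsingleton
  grw [hball] at hsingleton
  rw [← ENNReal.ofReal_add (by norm_num) (by norm_num), ENNReal.one_le_ofReal] at hsingleton
  norm_num at hsingleton

lemma map_multilinearPoly_zero {ι : Type} [Fintype ι] (a : Finset ι → ℝ) :
    (gaussPi ι).map (multilinearPoly 0 a) = .dirac (a ∅) := by
  have hconst : multilinearPoly 0 a = fun _ : ι → ℝ => a ∅ := by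
    ext x
    simp [multilinearPoly]
  rw [hconst, Measure.map_const, measure_univ, one_smul]

/-- Improved Carbery–Wright estimate near Gaussianity: a degree-`d` multilinear
homogeneous Gaussian polynomial whose law is close to `N(0,1)` satisfies a small-ball estimate
with exponent `1` (instead of `1/d`), with constants independent of the number of variables. -/
theorem carbery_wright_improvement (d : ℕ) :
    ∃ δ > (0:ℝ), ∃ c > (0:ℝ), ∀ (n : ℕ) (a : Finset (Fin n) → ℝ),
      levyProkhorovDist
          (Measure.map
            (fun x : Fin n → ℝ =>
              ∑ S ∈ Finset.powersetCard d (Finset.univ : Finset (Fin n)), a S * ∏ i ∈ S, x i)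
            (gaussPi (Fin n)))
          (gaussianReal 0 1) ≤ δ →
      ∀ ε > (0:ℝ),
        gaussPi (Fin n)
            {x | |∑ S ∈ Finset.powersetCard d (Finset.univ : Finset (Fin n)),
                    a S * ∏ i ∈ S, x i| ≤ ε}
          ≤ ENNReal.ofReal (c * ε) := by
  rcases d with _ | k
  · refine ⟨1 / 20, by norm_num, 1, one_pos, fun n a h => ?_⟩
    change levyProkhorovDist ((gaussPi (Fin n)).map (multilinearPoly 0 a)) _ ≤ _ at h
    rw [map_multilinearPoly_zero] at h
    exact absurd h (lt_levyProkhorovDist_dirac_gaussianReal _).not_ge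
  · have hN : 2 ^ (k + 1) ≠ 0 := by positivity
    obtain ⟨b, hb, hmoments⟩ := exists_moment_bounds_of_levyProkhorovDist_le
    obtain ⟨C, hdecay⟩ := exists_norm_integral_circleExp_multilinearPoly_pow_le
      (mul_ne_zero two_ne_zero hN) k hb (L := 24) (by norm_num)
    obtain ⟨m, hm, hdecay⟩ := (hmoments.and hdecay).exists
    obtain ⟨δ, hδ, hclose⟩ := hm (k + 1)
    refine ⟨δ, hδ, Real.exp (1 / 2) * (2 * max C 1) * Real.pi, by positivity,
      fun n a h ε hε => ?_⟩
    obtain ⟨hlower, hupper⟩ := hclose a h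
    exact measure_abs_le_le_of_norm_integral_circleExp_le (gaussPi (Fin n))
      (continuous_multilinearPoly (k + 1) a).measurable
      (norm_integral_circleExp_le_of_pow_le _ hN (hdecay a hlower hupper)) hε
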